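/- arXiv:2603.12486 — 6 statements merged into one kernel-verified Lean document; each statement's English description precedes it below -/
import Mathlib

section
/- Let n ≥ 2 and let X be an invertible n×n complex matrix with x_{1n} ≠ 0 and x_{n1} ≠ 0. Then the Schur complement X_R is invertible, and the matrix U = X_L X_R^{−1} satisfies det U = x_{n1}/x_{1n}. -/
/-!
For any position `(p, q)` with `x_{pq} ≠ 0`, clearing column `q` with row `p` and expanding along
column `q` gives `det X = (-1)^(p+q) x_{pq} det S`, where `S` is the Schur complement of `x_{pq}`
(`det_eq_mul_det_schur`). The matrices `X_L` and `X_R` are the Schur complements of the two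
anti-diagonal corners, whose signs agree, so `x_{1n} det X_L = x_{n1} det X_R`, and both sides are
nonzero because `det X` is.
-/

open Matrix

noncomputable section

/-- The Schur complement `X_L = X_{[2,n]}^{[1,n-1]} - x_{1n}⁻¹ X_{[2,n]}^{[n,n]} X_{[1,1]}^{[1,n-1]}`
(here `X` is an `(n+1) × (n+1)` matrix, indices are 0-based). -/
def XL {n : ℕ} (X : Matrix (Fin (n+1)) (Fin (n+1)) ℂ) : Matrix (Fin n) (Fin n) ℂ :=
  Matrix.of fun i j =>
    X i.succ j.castSucc - (X 0 (Fin.last n))⁻¹ * X i.succ (Fin.last n) * X 0 j.castSucc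

/-- The Schur complement `X_R = X_{[1,n-1]}^{[2,n]} - x_{n1}⁻¹ X_{[1,n-1]}^{[1,1]} X_{[n,n]}^{[2,n]}`. -/
def XR {n : ℕ} (X : Matrix (Fin (n+1)) (Fin (n+1)) ℂ) : Matrix (Fin n) (Fin n) ℂ :=
  Matrix.of fun i j =>
    X i.castSucc j.succ - (X (Fin.last n) 0)⁻¹ * X i.castSucc 0 * X (Fin.last n) j.succ

/-- The Schur determinant formula for a nonzero entry in arbitrary position `(p, q)`. -/
theorem det_eq_mul_det_schur {n : ℕ} (X : Matrix (Fin (n+1)) (Fin (n+1)) ℂ)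
    (p q : Fin (n+1)) (h : X p q ≠ 0) :
    X.det = (-1) ^ (p + q : ℕ) * X p q * (Matrix.of fun i j : Fin n =>
      X (p.succAbove i) (q.succAbove j)
        - (X p q)⁻¹ * X (p.succAbove i) q * X p (q.succAbove j)).det := by
  -- `c i` is the multiple of row `p` that clears the entry `(i, q)`; row `p` itself is kept.
  let c : Fin (n+1) → ℂ := fun i => if i = p then 0 else -((X p q)⁻¹ * X i q)
  let Y : Matrix (Fin (n+1)) (Fin (n+1)) ℂ := Matrix.of fun i j => X i j + c i * X p j
  have hY : Y.det = X.det :=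
    det_eq_of_forall_row_eq_smul_add_const c p (by simp [c]) fun _ _ => rfl
  rw [← hY, det_succ_column Y q, Finset.sum_eq_single p]
  · congr 1
    · simp [Y, c]
    · congr 1
      ext i j
      simp [Y, c, Fin.succAbove_ne, sub_eq_add_neg]
  · intro i _ hi
    have : Y i q = 0 := by
      simp only [Y, c, Matrix.of_apply, if_neg hi]
      field_simp
      ring
    simp [this]
  · simp

/-- For an invertible `n × n` (here `(n+1) × (n+1)` with `n ≥ 1`, i.e. size `≥ 2`)
complex matrix `X` with `x_{1n} ≠ 0` and `x_{n1} ≠ 0`, the Schur complement `X_R` is invertible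
and `U = X_L X_R⁻¹` satisfies `det U = x_{n1} / x_{1n}`. -/
theorem det_of_psi_prime (n : ℕ) (hn : 1 ≤ n) (X : Matrix (Fin (n+1)) (Fin (n+1)) ℂ)
    (hX : IsUnit X.det) (h1n : X 0 (Fin.last n) ≠ 0) (hn1 : X (Fin.last n) 0 ≠ 0) :
    IsUnit (XR X).det ∧ (XL X * (XR X)⁻¹).det = X (Fin.last n) 0 / X 0 (Fin.last n) := by
  have hL : X.det = (-1) ^ n * X 0 (Fin.last n) * (XL X).det := by
    simpa [XL] using det_eq_mul_det_schur X 0 (Fin.last n) h1n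
  have hR : X.det = (-1) ^ n * X (Fin.last n) 0 * (XR X).det := by
    simpa [XR] using det_eq_mul_det_schur X (Fin.last n) 0 hn1
  have hR0 : (XR X).det ≠ 0 := by
    intro h0
    rw [h0, mul_zero] at hR
    exact hX.ne_zero hR
  refine ⟨isUnit_iff_ne_zero.mpr hR0, ?_⟩
  have hs : ((-1 : ℂ) ^ n) ≠ 0 := pow_ne_zero _ (by norm_num)
  have key : X 0 (Fin.last n) * (XL X).det = X (Fin.last n) 0 * (XR X).det := by
    apply mul_left_cancel₀ hs
    rw [← mul_assoc, ← mul_assoc, ← hL, ← hR]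
  rw [det_mul, det_nonsing_inv, Ring.inverse_eq_inv', ← div_eq_mul_inv,
    div_eq_div_iff hR0 h1n, mul_comm, key]

end
end

section
/- Let n ≥ 2 and let X be an invertible n×n complex matrix with x_{1n} ≠ 0 and x_{n1} ≠ 0, and let U = X_L X_R^{−1}. Then for every λ ∈ ℂ, det(λ·A(X) + B(X)) = x_{1n} · det X · det(λ·U + I_{n−1}). -/
/-!
Write `M = λ A(X) + B(X)`. Its first row is `(x_{1n}, 0, λ x_{11}, …, λ x_{1,n-1})`. Eliminating
the first column with pivot `x_{1n}` leaves a matrix (`schurLam`) that differs from `X` only in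
that `λ X_L` is added to the block above the last row and to the right of the first column.
Eliminating its first column with the pivot `x_{n1}` in the last row therefore leaves
`λ X_L + X_R`, while the same elimination applied to `X` leaves `X_R`, with the same sign and
pivot. Thus `X_R` is invertible, and factoring `λ X_L + X_R = (λ U + 1) X_R` gives the formula.
Both eliminations are instances of `det_eq_pivot_mul_schur`.
-/

open Matrix

noncomputable section

/-- Entry of a matrix addressed with natural-number indices (0 out of range). -/
def ent {N M : ℕ} (A : Matrix (Fin N) (Fin M) ℂ) (i j : ℕ) : ℂ :=
  if h : i < N ∧ j < M then A ⟨i, h.1⟩ ⟨j, h.2⟩ else 0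

/-- The matrix `A(X)`: for an `(n+1) × (n+1)` matrix `X` this is the `(n+2) × (n+2)` matrix whose
submatrix in rows `[1,n+1]`, columns `[3,n+2]` (1-based) is formed by the first `n` columns of `X`,
all other entries being zero. -/
def matA {n : ℕ} (X : Matrix (Fin (n+1)) (Fin (n+1)) ℂ) : Matrix (Fin (n+2)) (Fin (n+2)) ℂ :=
  Matrix.of fun i j => if (i:ℕ) < n+1 ∧ 2 ≤ (j:ℕ) then ent X (i:ℕ) ((j:ℕ)-2) else 0

/-- The matrix `B(X)`: first column in rows `[1,n+1]` is the last column of `X`, the trailing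
`(n+1) × (n+1)` submatrix is `X`, all other entries are zero. -/
def matB {n : ℕ} (X : Matrix (Fin (n+1)) (Fin (n+1)) ℂ) : Matrix (Fin (n+2)) (Fin (n+2)) ℂ :=
  Matrix.of fun i j =>
    if (j:ℕ) = 0 then (if (i:ℕ) < n+1 then ent X (i:ℕ) n else 0)
    else if 1 ≤ (i:ℕ) then ent X ((i:ℕ)-1) ((j:ℕ)-1) else 0

/-- Determinant by elimination of the first column with pivot in row `r`: the sign comes from
moving row `r` to the top, the remaining minor is the Schur complement of the pivot. -/
lemma det_eq_pivot_mul_schur {n : ℕ} (M : Matrix (Fin (n+1)) (Fin (n+1)) ℂ) (r : Fin (n+1))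
    (hr : M r 0 ≠ 0) :
    M.det = (-1) ^ (r:ℕ) * M r 0 * (Matrix.of fun i j : Fin n =>
      M (r.succAbove i) j.succ - (M r 0)⁻¹ * M (r.succAbove i) 0 * M r j.succ).det := by
  -- `M` is recovered from the row-reduced matrix `N` by adding multiples of its row `r`.
  let c : Fin (n+1) → ℂ := fun i => if i = r then 0 else (M r 0)⁻¹ * M i 0
  let N : Matrix (Fin (n+1)) (Fin (n+1)) ℂ := Matrix.of fun i j => M i j - c i * M r j
  have hc : c r = 0 := by simp [c]
  have hMN : M.det = N.det := by
    refine Matrix.det_eq_of_forall_row_eq_smul_add_const c r hc ?_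
    intro i j
    simp [N, hc]
  rw [hMN, Matrix.det_succ_column_zero, Finset.sum_eq_single r]
  · have h0 : N r 0 = M r 0 := by simp [N, hc]
    rw [h0]
    congr 2
    ext i j
    simp [N, c, Fin.succAbove_ne]
  · intro i _ hi
    have h0 : N i 0 = 0 := by
      simp only [N, c, Matrix.of_apply, if_neg hi]
      field_simp
      ring
    simp [h0]
  · simp

lemma det_eq_mul_det_XR {n : ℕ} (Y : Matrix (Fin (n+1)) (Fin (n+1)) ℂ)
    (hY : Y (Fin.last n) 0 ≠ 0) :
    Y.det = (-1) ^ n * Y (Fin.last n) 0 * (XR Y).det := by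
  simpa [XR] using det_eq_pivot_mul_schur Y (Fin.last n) hY

/-- The Schur complement of the top left entry `x_{1n}` in `λ A(X) + B(X)`. -/
def schurLam {n : ℕ} (X : Matrix (Fin (n+1)) (Fin (n+1)) ℂ) (lam : ℂ) :
    Matrix (Fin (n+1)) (Fin (n+1)) ℂ :=
  Matrix.of fun i j =>
    (lam • matA X + matB X) i.succ j.succ - ((lam • matA X + matB X) 0 0)⁻¹ *
      (lam • matA X + matB X) i.succ 0 * (lam • matA X + matB X) 0 j.succ

lemma pencil_zero_zero {n : ℕ} (X : Matrix (Fin (n+1)) (Fin (n+1)) ℂ) (lam : ℂ) :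
    (lam • matA X + matB X) 0 0 = X 0 (Fin.last n) := by
  simp [matA, matB, ent, Fin.last]

lemma schurLam_zero {n : ℕ} (X : Matrix (Fin (n+1)) (Fin (n+1)) ℂ) (lam : ℂ) (i : Fin (n+1)) :
    schurLam X lam i 0 = X i 0 := by
  simp [schurLam, matA, matB, ent]
  omega

lemma schurLam_last_succ {n : ℕ} (X : Matrix (Fin (n+1)) (Fin (n+1)) ℂ) (lam : ℂ) (j : Fin n) :
    schurLam X lam (Fin.last n) j.succ = X (Fin.last n) j.succ := by
  simp [schurLam, matA, matB, ent, Fin.last, Fin.succ]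

lemma schurLam_castSucc_succ {n : ℕ} (X : Matrix (Fin (n+1)) (Fin (n+1)) ℂ) (lam : ℂ)
    (i j : Fin n) :
    schurLam X lam i.castSucc j.succ = lam * XL X i j + X i.castSucc j.succ := by
  simp [schurLam, matA, matB, ent, XL, Fin.last, Fin.succ]
  simp only [Fin.castSucc, Fin.castAdd, Fin.castLE]
  ring

lemma XR_schurLam {n : ℕ} (X : Matrix (Fin (n+1)) (Fin (n+1)) ℂ) (lam : ℂ) :
    XR (schurLam X lam) = lam • XL X + XR X := by
  ext i j
  simp only [XR, Matrix.of_apply, schurLam_zero, schurLam_last_succ, schurLam_castSucc_succ,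
    Matrix.add_apply, Matrix.smul_apply, smul_eq_mul]
  ring

/-- `det (λ A(X) + B(X)) = x_{1n} ⬝ det X ⬝ det (λ U + 1)` where `U = X_L X_R⁻¹`. -/
theorem det_lamA_add_B (n : ℕ) (hn : 1 ≤ n) (X : Matrix (Fin (n+1)) (Fin (n+1)) ℂ)
    (hX : IsUnit X.det) (h1n : X 0 (Fin.last n) ≠ 0) (hn1 : X (Fin.last n) 0 ≠ 0)
    (lam : ℂ) :
    (lam • matA X + matB X).det
      = X 0 (Fin.last n) * X.det * (lam • (XL X * (XR X)⁻¹) + 1).det := by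
  have hdX := det_eq_mul_det_XR X hn1
  have hR : IsUnit (XR X).det := by
    rw [isUnit_iff_ne_zero] at hX ⊢
    intro h
    simp [hdX, h] at hX
  have h00 := pencil_zero_zero X lam
  have hM : (lam • matA X + matB X).det = X 0 (Fin.last n) * (schurLam X lam).det := by
    have h := det_eq_pivot_mul_schur (lam • matA X + matB X) 0 (by rwa [h00])
    simp only [Fin.val_zero, pow_zero, one_mul, Fin.succAbove_zero] at h
    rw [h, schurLam, h00]
  have hS : (schurLam X lam).det
      = (-1) ^ n * X (Fin.last n) 0 * (lam • XL X + XR X).det := by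
    rw [det_eq_mul_det_XR _ (by rwa [schurLam_zero]), schurLam_zero, XR_schurLam]
  have hU : lam • XL X + XR X = (lam • (XL X * (XR X)⁻¹) + 1) * XR X := by
    rw [Matrix.add_mul, Matrix.smul_mul, Matrix.nonsing_inv_mul_cancel_right _ _ hR,
      Matrix.one_mul]
  rw [hM, hS, hU, Matrix.det_mul, hdX]
  ring

end
end

section
/- Let n ≥ 3 and let X be an invertible n×n complex matrix with x_{1n} ≠ 0 and x_{n1} ≠ 0, and let U = Ψ'(X). Then for all k, l ∈ [1,n−2] with k+l ≤ n−1, φ_{kl}(U) = s̃_{kl} · det Φ_{kl}(X) / (x_{1n} · det X)^{n−k−l}, where s̃_{kl} = (−1)^{(n−2)/2 + k(k−1)/2 + l(l−1)/2} if n is even and s̃_{kl} = (−1)^{(n−1)/2 + k(k−1)/2 + l(l−1)/2} if n is odd. -/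
/-!
Write `n = m + 1`, `U = X_L X_R⁻¹` and `M = n - k - l` for the number of block columns of
`Φ_{kl}(X)`. The determinant of `Φ_{kl}(X)` is computed by multiplying it on the right by an
explicit block triangular matrix `T` (`tcol`) and expanding the product along unit rows.

A vector `w` of `ℂ^{n-1}` has a lift to `ℂ^{n+1}` (`liftv`): its middle part is `X_R⁻¹ w`, and its
first and last coordinates are chosen so that the last row of `[X 0]` and the first row of `[0 X]`
annihilate it. Eliminating these coordinates turns `X` into its Schur complements, so the other
rows of `[X 0]` and `[0 X]` send the lift of `w` to `w` and to `U w` (`rowY_liftv`, `rowZ_liftv`).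
The columns of block `b` of `T` are, in the diagonal block, a multiple of the first unit vector,
the lifts of `e_1, …, e_{n-1}`, and a multiple of the last unit vector; below the diagonal, the
column of `e_1` continues in block `b'` with the lift of `(-U)^{b'-b} e_1`. Consecutive blocks of
that column then cancel on the rows which they share.

In the product, every row block consists of unit rows: those coming from the last and the first
row of `X` (`red_pivotY`, `red_pivotZ`), and an identity block (`red_id`). Deleting them block by
block (`natDet_step`, `natDet_iterate`) leaves a minor, on the rows `k + 1, …, n - 1`, with columns
`± U^p e_1` and `U e_j` (`red_final`), which a permutation of columns (`natDet_reorder`) and the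
removal of the identity columns of `Φ_{kl}(U)` (`det_PhiU`) identify with `± det Φ_{kl}(U)`; this
is `natDet_red_eq`.

On the other hand `det T = (x_{n1} x_{1n} det X_R)^{-M}` (`det_colOp`), and
`det X = (-1)^{n-1} x_{n1} det X_R` (`det_eq_XR`), which accounts for the denominator
`(x_{1n} det X)^M`. The signs are compared modulo 2 in `sign_identity`.
-/

open Matrix

noncomputable section

/-- The matrix `Φ_{kl}(V)` for an `M × M` matrix `V` (ambient size of the original matrix being
`M + 1`): its columns are the first `k` columns of the identity, the first `l` columns of `V`,
then the first column of `V^p` for `p = 2, …, M+1-k-l`. -/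
def PhiU {M : ℕ} (k l : ℕ) (V : Matrix (Fin M) (Fin M) ℂ) : Matrix (Fin M) (Fin M) ℂ :=
  Matrix.of fun i c =>
    if (c:ℕ) < k then (if (i:ℕ) = (c:ℕ) then 1 else 0)
    else if (c:ℕ) < k + l then ent V (i:ℕ) ((c:ℕ) - k)
    else ent (V ^ ((c:ℕ) - k - l + 2)) (i:ℕ) 0

/-- The sign `s_{kl}` entering `φ_{kl}(V) = s_{kl} det Φ_{kl}(V)` for an `M × M` matrix `V`
(in the paper's notation, `M = n - 1`). -/
def sSign (M k l : ℕ) : ℂ :=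
  if M % 2 = 0 then (-1)^(k*(l+1))
  else (-1)^((M-1)/2 + k*(k-1)/2 + l*(l-1)/2)

/-- The sign `s̃_{kl}` of the statement, for an ambient matrix of size `m+1` (paper's `n = m+1`):
`(-1)^{(n-2)/2 + k(k-1)/2 + l(l-1)/2}` for `n` even, `(-1)^{(n-1)/2 + k(k-1)/2 + l(l-1)/2}`
for `n` odd. -/
def sTilde (m k l : ℕ) : ℂ :=
  if (m+1) % 2 = 0 then (-1)^((m-1)/2 + k*(k-1)/2 + l*(l-1)/2)
  else (-1)^(m/2 + k*(k-1)/2 + l*(l-1)/2)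

/-- Entry `(r, c)` (0-based natural indices) of the big block matrix `Φ_{kl}(X)` for an
`(m+1) × (m+1)` matrix `X` (paper's `n = m+1`).  The matrix consists of `n-k-l = m+1-k-l`
block columns of width `n+1 = m+2`; the block column with index `b` (0-based) has `b⬝n` initial
zero rows, then the "second tier" `[X_{I ∪ n}  0]` and the "third tier" `[0  X_{1 ∪ γ(J)}]`,
with `I, J` as in the statement, then zero rows. -/
def phiEntry {m : ℕ} (k l : ℕ) (X : Matrix (Fin (m+1)) (Fin (m+1)) ℂ) (r c : ℕ) : ℂ :=
  -- number of block columns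
  let Nb := m+1-k-l
  -- block column index and column within the block
  let b := c / (m+2)
  let cc := c % (m+2)
  -- starting row of the nonzero part of block column b
  let s2 := b*(m+1)
  -- height of the second tier
  let T2 := if b+1 = Nb then m+1-l else m
  -- paper (1-based) starting index of `J` in the third tier
  let a := if b+1 = Nb then k+1 else if b+2 = Nb then l+1 else 2
  if s2 ≤ r ∧ r < s2 + T2 then
    -- second tier: rows of X indexed (1-based) by [2,n] (resp. [l+1,n] in the last block),
    -- occupying columns 1..n of the block, with column n+1 zero
    (if cc ≤ m then ent X (if b+1 = Nb then l + (r - s2) else 1 + (r - s2)) cc else 0)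
  else if s2 + T2 ≤ r ∧ r < s2 + T2 + (m+2-a) then
    -- third tier: zero in column 1 of the block, then rows of X indexed (1-based) by
    -- {1} ∪ [a+1, n] occupying columns 2..n+1 of the block
    (if 1 ≤ cc then
      (if r = s2 + T2 then ent X 0 (cc-1)
       else ent X (a + (r - (s2+T2)) - 1) (cc-1))
     else 0)
  else 0

/-- The matrix `Φ_{kl}(X)`, a square matrix of order `(n-k-l)(n+1)` with `n = m+1`. -/
def bigPhi {m : ℕ} (k l : ℕ) (X : Matrix (Fin (m+1)) (Fin (m+1)) ℂ) :
    Matrix (Fin ((m+1-k-l)*(m+2))) (Fin ((m+1-k-l)*(m+2))) ℂ :=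
  Matrix.of fun r c => phiEntry k l X (r:ℕ) (c:ℕ)

/-! ### Determinants with entries indexed by natural numbers -/

/-- The determinant of the `n × n` matrix with entries `f i j`, for `f` indexed by natural
numbers. Working with `ℕ`-indices keeps the shifts caused by deleting rows and columns explicit. -/
def natDet (n : ℕ) (f : ℕ → ℕ → ℂ) : ℂ :=
  (Matrix.of fun i j : Fin n => f i j).det

lemma natDet_congr {n : ℕ} {f g : ℕ → ℕ → ℂ} (h : ∀ i < n, ∀ j < n, f i j = g i j) :
    natDet n f = natDet n g := by
  unfold natDet
  congr 1
  ext i j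
  exact h i i.2 j j.2

lemma val_succAbove {n : ℕ} (p : Fin (n + 1)) (i : Fin n) :
    ((p.succAbove i : Fin (n + 1)) : ℕ) = if (i : ℕ) < p then (i : ℕ) else i + 1 := by
  unfold Fin.succAbove
  simp only [Fin.lt_def, Fin.val_castSucc]
  split_ifs <;> simp

lemma natDet_delete_one (n r c : ℕ) (f : ℕ → ℕ → ℂ) (hr : r ≤ n) (hc : c ≤ n)
    (h : ∀ j < n + 1, f r j = if j = c then 1 else 0) :
    natDet (n + 1) f = (-1) ^ (r + c) *
      natDet n (fun i j => f (if i < r then i else i + 1) (if j < c then j else j + 1)) := by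
  unfold natDet
  rw [Matrix.det_succ_row _ (⟨r, by omega⟩ : Fin (n + 1)),
    Finset.sum_eq_single (⟨c, by omega⟩ : Fin (n + 1))]
  · simp only [Matrix.of_apply, h c (by omega), if_true, mul_one]
    congr 2
    ext i j
    simp [val_succAbove]
  · intro j _ hj
    have : (j : ℕ) ≠ c := fun e => hj (Fin.ext e)
    simp [h j j.2, this]
  · simp

/-- Deleting `q` consecutive rows whose only nonzero entries form an identity block. -/
lemma natDet_delete (n r c q : ℕ) (f : ℕ → ℕ → ℂ) (hr : r ≤ n) (hc : c ≤ n)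
    (h : ∀ i < q, ∀ j < n + q, f (r + i) j = if j = c + i then 1 else 0) :
    natDet (n + q) f = (-1) ^ (q * (r + c)) *
      natDet n (fun i j => f (if i < r then i else i + q) (if j < c then j else j + q)) := by
  induction q generalizing f with
  | zero => simp
  | succ q ih =>
    rw [← add_assoc, natDet_delete_one (n + q) (r + q) (c + q) f (by omega) (by omega)
      (h q (by omega)), ih]
    · have hs : (-1 : ℂ) ^ (r + q + (c + q)) * (-1) ^ (q * (r + c))
          = (-1) ^ ((q + 1) * (r + c)) := by
        rw [← pow_add, show r + q + (c + q) + q * (r + c) = (q + 1) * (r + c) + 2 * q by ring,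
          pow_add, pow_mul (-1 : ℂ) 2 q]
        simp
      rw [← mul_assoc, hs]
      congr 1
      apply natDet_congr
      intro i _ j _
      congr 1 <;> split_ifs <;> omega
    · intro i hi j hj
      rw [if_pos (by omega), h i (by omega) _ (by split_ifs <;> omega)]
      split_ifs <;> first | rfl | omega

/-- Moving the first column to position `p`. -/
lemma natDet_move (n p : ℕ) (f : ℕ → ℕ → ℂ) (hp : p < n) :
    natDet n f = (-1) ^ p *
      natDet n (fun i j => f i (if j < p then j + 1 else if j = p then 0 else j)) := by
  obtain ⟨n, rfl⟩ : ∃ n', n = n' + 1 := ⟨n - 1, by omega⟩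
  have h := Matrix.det_permute' (Fin.cycleRange (⟨p, hp⟩ : Fin (n + 1)))
    (Matrix.of fun i j : Fin (n + 1) => f i j)
  unfold natDet
  have e : (Matrix.of fun i j : Fin (n + 1) =>
      f i (if (j : ℕ) < p then (j : ℕ) + 1 else if (j : ℕ) = p then 0 else j))
      = (Matrix.of fun i j : Fin (n + 1) => f i j).submatrix id
        (Fin.cycleRange (⟨p, hp⟩ : Fin (n + 1))) := by
    ext i j
    simp only [Matrix.of_apply, Matrix.submatrix_apply, id]
    congr 1
    rcases lt_trichotomy (j : ℕ) p with hj | hj | hj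
    · rw [Fin.coe_cycleRange_of_lt (by simpa [Fin.lt_def] using hj), if_pos hj]
    · rw [Fin.cycleRange_of_eq (Fin.ext hj), if_neg (by omega), if_pos hj]; rfl
    · rw [Fin.cycleRange_of_gt (by simpa [Fin.lt_def] using hj), if_neg (by omega),
        if_neg (by omega)]
  rw [e, h, Fin.sign_cycleRange, ← mul_assoc]
  push_cast
  rw [← mul_pow]
  simp

/-- Columns `a (q-1), …, a 0, τ 0, …, τ (l-1), a q, …` can be reordered to `τ 0, …, τ (l-1),
a 0, a 1, …` by moving the first column behind the columns `τ`, `q` times. -/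
lemma natDet_reorder (n l q : ℕ) (a τ : ℕ → ℕ → ℂ) (hq : q + l ≤ n) :
    natDet n (fun i c => if c < q then a (q - 1 - c) i
        else if c < q + l then τ (c - q) i else a (c - l) i)
      = (-1) ^ (∑ j ∈ Finset.range q, (j + l)) *
        natDet n (fun i c => if c < l then τ c i else a (c - l) i) := by
  induction q with
  | zero => simp
  | succ q ih =>
    rw [natDet_move n (q + l) _ (by omega), Finset.sum_range_succ, add_comm (Finset.sum _ _),
      pow_add (-1 : ℂ) (q + l) (Finset.sum _ _), mul_assoc, ← ih (by omega)]
    congr 1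
    apply natDet_congr
    intro i _ c _
    rcases lt_trichotomy c (q + l) with hc | hc | hc
    · by_cases h : c < q
      · simp only [hc, h, if_true, show c + 1 < q + 1 by omega]
        congr 1; omega
      · simp only [hc, h, if_true, if_false, show ¬ c + 1 < q + 1 by omega,
          show c + 1 < q + 1 + l by omega]
        congr 1; omega
    · subst hc
      simp only [lt_irrefl, if_true, if_false, show 0 < q + 1 by omega,
          show ¬ q + l < q by omega]
      congr 1; omega
    · simp only [show ¬ c < q + l by omega, show ¬ c = q + l by omega, if_false,
        show ¬ c < q + 1 by omega, show ¬ c < q by omega, show ¬ c < q + 1 + l by omega]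

/-! ### Lifting vectors through `X_R` -/

/-- The pairing of row `i` of `X` with the first `m + 1` coordinates of `v`. -/
def rowY {m : ℕ} (X : Matrix (Fin (m+1)) (Fin (m+1)) ℂ) (v : Fin (m+2) → ℂ) (i : ℕ) : ℂ :=
  ∑ j : Fin (m+1), ent X i j * v j.castSucc

/-- The pairing of row `i` of `X` with the last `m + 1` coordinates of `v`. -/
def rowZ {m : ℕ} (X : Matrix (Fin (m+1)) (Fin (m+1)) ℂ) (v : Fin (m+2) → ℂ) (i : ℕ) : ℂ :=
  ∑ j : Fin (m+1), ent X i j * v j.succ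

/-- The vector of `ℂ^{m+2}` with middle part `X_R⁻¹ w` whose first and last coordinates are chosen
so that the last row of `X` pairs to zero with the first `m + 1` coordinates, and the first row
of `X` with the last `m + 1` coordinates. -/
def liftv {m : ℕ} (X : Matrix (Fin (m+1)) (Fin (m+1)) ℂ) (w : Fin m → ℂ) : Fin (m+2) → ℂ :=
  Fin.cons (-(X (Fin.last m) 0)⁻¹ * ∑ j : Fin m, X (Fin.last m) j.succ * ((XR X)⁻¹ *ᵥ w) j)
    (Fin.snoc (α := fun _ => ℂ) ((XR X)⁻¹ *ᵥ w)
      (-(X 0 (Fin.last m))⁻¹ * ∑ j : Fin m, X 0 j.castSucc * ((XR X)⁻¹ *ᵥ w) j))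

/-- The standard basis vector with 1-based index `c` (zero when `c` is out of range). -/
def bas (m c : ℕ) : Fin m → ℂ := fun i => if (i : ℕ) + 1 = c then 1 else 0

/-- The component in block `b'` of the column `(b, c)`, `1 ≤ c ≤ m`, of the column operation,
in the coordinates of `liftv`. For `c = 1` it is `(-U)^{b'-b} e₁`, which makes consecutive
blocks cancel on the shared rows. -/
def wcol {m : ℕ} (U : Matrix (Fin m) (Fin m) ℂ) (b c b' : ℕ) : Fin m → ℂ :=
  if c = 1 then (if b ≤ b' then (-1 : ℂ) ^ (b' - b) • (U ^ (b' - b) *ᵥ bas m 1) else 0)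
  else if b' = b then bas m c else 0

/-- The component in block `b'` of column `c` of block `b` of the column operation applied to
`Φ_{kl}(X)`. -/
def tcol {m : ℕ} (X : Matrix (Fin (m+1)) (Fin (m+1)) ℂ) (b c b' : ℕ) : Fin (m+2) → ℂ :=
  if c = 0 then (if b' = b then Pi.single 0 (X (Fin.last m) 0)⁻¹ else 0)
  else if c = m + 1 then (if b' = b then Pi.single (Fin.last (m+1)) (X 0 (Fin.last m))⁻¹ else 0)
  else liftv X (wcol (XL X * (XR X)⁻¹) b c b')

section Lift

variable {m : ℕ} (X : Matrix (Fin (m+1)) (Fin (m+1)) ℂ)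

lemma ent_val {N M : ℕ} (A : Matrix (Fin N) (Fin M) ℂ) (i : Fin N) (j : Fin M) :
    ent A i j = A i j := by
  simp [ent]

lemma rowY_val (v : Fin (m+2) → ℂ) (i : Fin (m+1)) :
    rowY X v i = ∑ j : Fin (m+1), X i j * v j.castSucc := by
  simp [rowY, ent_val]

lemma rowZ_val (v : Fin (m+2) → ℂ) (i : Fin (m+1)) :
    rowZ X v i = ∑ j : Fin (m+1), X i j * v j.succ := by
  simp [rowZ, ent_val]

@[simp] lemma rowY_zero (i : ℕ) : rowY X 0 i = 0 := by simp [rowY]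

@[simp] lemma rowZ_zero (i : ℕ) : rowZ X 0 i = 0 := by simp [rowZ]

lemma liftv_first (w : Fin m → ℂ) : liftv X w 0 =
    -(X (Fin.last m) 0)⁻¹ * ∑ j : Fin m, X (Fin.last m) j.succ * ((XR X)⁻¹ *ᵥ w) j := rfl

lemma liftv_mid (w : Fin m → ℂ) (j : Fin m) :
    liftv X w j.castSucc.succ = ((XR X)⁻¹ *ᵥ w) j := by
  simp [liftv]

lemma liftv_mid' (w : Fin m → ℂ) (j : Fin m) :
    liftv X w j.succ.castSucc = ((XR X)⁻¹ *ᵥ w) j := by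
  rw [← liftv_mid, Fin.succ_castSucc]

lemma liftv_last (w : Fin m → ℂ) : liftv X w (Fin.last m).succ =
    -(X 0 (Fin.last m))⁻¹ * ∑ j : Fin m, X 0 j.castSucc * ((XR X)⁻¹ *ᵥ w) j := by
  simp [liftv]

@[simp] lemma liftv_zero : liftv X 0 = 0 := by
  ext i
  refine Fin.cases ?_ (fun i => ?_) i
  · simp [liftv_first]
  · refine Fin.lastCases ?_ (fun i => ?_) i
    · rw [liftv_last]; simp
    · rw [liftv_mid]; simp

lemma rowY_liftv_last (hn1 : X (Fin.last m) 0 ≠ 0) (w : Fin m → ℂ) :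
    rowY X (liftv X w) m = 0 := by
  have := rowY_val X (liftv X w) (Fin.last m)
  rw [Fin.val_last] at this
  rw [this, Fin.sum_univ_succ]
  simp only [liftv_mid', Fin.castSucc_zero, liftv_first]
  field_simp
  ring

lemma rowZ_liftv_first (h1n : X 0 (Fin.last m) ≠ 0) (w : Fin m → ℂ) :
    rowZ X (liftv X w) 0 = 0 := by
  have := rowZ_val X (liftv X w) 0
  rw [Fin.val_zero] at this
  rw [this, Fin.sum_univ_castSucc]
  simp only [liftv_mid, liftv_last]
  field_simp
  ring

/-- On the rows `1, …, n-1`, the lift of `w` is sent by `[X 0]` to `X_R X_R⁻¹ w = w`. -/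
lemma rowY_liftv (hR : IsUnit (XR X).det) (w : Fin m → ℂ) (i : Fin m) :
    rowY X (liftv X w) i = w i := by
  have h1 : XR X *ᵥ ((XR X)⁻¹ *ᵥ w) = w := by
    rw [Matrix.mulVec_mulVec, Matrix.mul_nonsing_inv _ hR, Matrix.one_mulVec]
  have h2 := congrFun h1 i
  have := rowY_val X (liftv X w) i.castSucc
  rw [Fin.val_castSucc] at this
  rw [this, Fin.sum_univ_succ, ← h2]
  simp only [liftv_mid', Fin.castSucc_zero, liftv_first]
  generalize (XR X)⁻¹ *ᵥ w = w'
  simp only [Matrix.mulVec, dotProduct, XR, Matrix.of_apply, sub_mul, Finset.sum_sub_distrib,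
    Finset.mul_sum]
  rw [sub_eq_neg_add, ← Finset.sum_neg_distrib]
  congr 1
  exact Finset.sum_congr rfl fun j _ => by ring

/-- On the rows `2, …, n`, the lift of `w` is sent by `[0 X]` to `X_L X_R⁻¹ w = U w`. -/
lemma rowZ_liftv (w : Fin m → ℂ) (i : Fin m) :
    rowZ X (liftv X w) (i + 1) = ((XL X * (XR X)⁻¹) *ᵥ w) i := by
  have := rowZ_val X (liftv X w) i.succ
  rw [Fin.val_succ] at this
  rw [this, Fin.sum_univ_castSucc, ← Matrix.mulVec_mulVec]
  simp only [liftv_mid, liftv_last]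
  generalize (XR X)⁻¹ *ᵥ w = w'
  simp only [Matrix.mulVec, dotProduct, XL, Matrix.of_apply, sub_mul, Finset.sum_sub_distrib,
    Finset.mul_sum]
  rw [sub_eq_add_neg, ← Finset.sum_neg_distrib]
  congr 1
  exact Finset.sum_congr rfl fun j _ => by ring

lemma rowY_single_first (hn1 : X (Fin.last m) 0 ≠ 0) :
    rowY X (Pi.single 0 (X (Fin.last m) 0)⁻¹) m = 1 := by
  have := rowY_val X (Pi.single 0 (X (Fin.last m) 0)⁻¹) (Fin.last m)
  rw [Fin.val_last] at this
  rw [this, Fin.sum_univ_succ]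
  simp [hn1]

lemma rowZ_single_last (h1n : X 0 (Fin.last m) ≠ 0) :
    rowZ X (Pi.single (Fin.last (m+1)) (X 0 (Fin.last m))⁻¹) 0 = 1 := by
  have := rowZ_val X (Pi.single (Fin.last (m+1)) (X 0 (Fin.last m))⁻¹) 0
  rw [Fin.val_zero] at this
  rw [this, Fin.sum_univ_castSucc]
  simp only [Pi.single_apply, Fin.ext_iff, Fin.val_succ, Fin.val_castSucc, Fin.val_last,
    if_true, mul_inv_cancel₀ h1n, add_eq_right]
  exact Finset.sum_eq_zero fun i _ => by
    rw [if_neg (by have := i.2; omega), mul_zero]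

lemma rowZ_single_first (a : ℂ) (i : ℕ) : rowZ X (Pi.single 0 a) i = 0 := by
  simp [rowZ]

lemma rowY_single_last (a : ℂ) (i : ℕ) : rowY X (Pi.single (Fin.last (m+1)) a) i = 0 := by
  refine Finset.sum_eq_zero fun j _ => ?_
  have := j.2
  rw [Pi.single_eq_of_ne (by simp [Fin.ext_iff]; omega), mul_zero]

/-- Schur complement formula with respect to the corner `x_{n1}`; the sign comes from moving the
last row to the top. -/
lemma det_eq_XR (hn1 : X (Fin.last m) 0 ≠ 0) :
    X.det = (-1) ^ m * X (Fin.last m) 0 * (XR X).det := by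
  set A : Matrix (Fin (m+1)) (Fin (m+1)) ℂ := Matrix.of fun i j =>
    X i j - (if i = Fin.last m then 0 else (X (Fin.last m) 0)⁻¹ * X i 0) * X (Fin.last m) j with hA
  have h : X.det = A.det := by
    refine Matrix.det_eq_of_forall_row_eq_smul_add_const
      (fun i => if i = Fin.last m then 0 else (X (Fin.last m) 0)⁻¹ * X i 0) (Fin.last m)
      (by simp) ?_
    intro i j
    simp [hA]
  rw [h, Matrix.det_succ_column_zero, Finset.sum_eq_single (Fin.last m)]
  · congr 1
    · simp [hA]
    · congr 1
      ext i j
      simp [hA, XR]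
  · intro i _ hi
    have : A i 0 = 0 := by
      simp [hA, hi]
      field_simp
      simp
    simp [this]
  · simp

lemma wcol_self (U : Matrix (Fin m) (Fin m) ℂ) (b c : ℕ) : wcol U b c b = bas m c := by
  unfold wcol
  split_ifs with h <;> simp_all

lemma tcol_of_lt {b c b' : ℕ} (h : b' < b) : tcol X b c b' = 0 := by
  have h1 : b' ≠ b := by omega
  have h2 : ¬ b ≤ b' := by omega
  simp [tcol, wcol, h1, h2]

lemma det_tcol_diag (b : ℕ) :
    (Matrix.of fun i j : Fin (m+2) => tcol X b j b i).det
      = (X (Fin.last m) 0)⁻¹ * (X 0 (Fin.last m))⁻¹ * (XR X)⁻¹.det := by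
  rw [Matrix.det_succ_column_zero, Finset.sum_eq_single 0]
  · rw [Matrix.det_succ_column _ (Fin.last m), Finset.sum_eq_single (Fin.last m)]
    · have : (((Matrix.of fun i j : Fin (m+2) => tcol X b j b i).submatrix (Fin.succAbove 0)
          Fin.succ).submatrix (Fin.last m).succAbove (Fin.last m).succAbove) = (XR X)⁻¹ := by
        ext i j
        have hj : ¬ (j : ℕ) = m := by have := j.2; omega
        simp [tcol, hj, wcol_self]
        rw [Fin.succ_castSucc, liftv_mid']
        simp [Matrix.mulVec, dotProduct, bas, ← Fin.ext_iff]
      rw [this]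
      simp [tcol, ← mul_assoc]
    · intro i _ hi
      have : i.succ ≠ Fin.last (m+1) := by
        rw [← Fin.succ_last]; exact fun h => hi (Fin.succ_injective _ h)
      simp [tcol, this]
    · simp
  · intro i _ hi
    simp [tcol, hi]
  · simp

end Lift

/-! ### The column operation and the block structure of `Φ_{kl}(X)` -/

/-- The 0-based index of the first row of `X` in the second tier of block column `b`. -/
def lam (N l b : ℕ) : ℕ := if b + 1 = N then l else 1

/-- Row `r` of block column `b` of `Φ_{kl}(X)`, paired with a vector `v` of `ℂ^{m+2}`. -/
def tier {m : ℕ} (N k l : ℕ) (X : Matrix (Fin (m+1)) (Fin (m+1)) ℂ) (r b : ℕ)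
    (v : Fin (m+2) → ℂ) : ℂ :=
  if b * (m+1) ≤ r ∧ r < b * (m+1) + (m + 1 - lam N l b) then
    rowY X v (lam N l b + (r - b * (m+1)))
  else if b * (m+1) + (m + 1 - lam N l b) ≤ r ∧
      r < b * (m+1) + (m + 1 - lam N l b)
        + (m + 1 - (if b + 1 = N then k else lam N l (b+1))) then
    (if r = b * (m+1) + (m + 1 - lam N l b) then rowZ X v 0
     else rowZ X v ((if b + 1 = N then k else lam N l (b+1))
      + (r - (b * (m+1) + (m + 1 - lam N l b)))))
  else 0

/-- Entry `(r, C)` of the product of `Φ_{kl}(X)` with the column operation `tcol`. -/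
def redEntry {m : ℕ} (N k l : ℕ) (X : Matrix (Fin (m+1)) (Fin (m+1)) ℂ) (r C : ℕ) : ℂ :=
  ∑ b' : Fin N, tier N k l X r b' (tcol X (C / (m+2)) (C % (m+2)) b')

section Reduce

variable {m : ℕ} (X : Matrix (Fin (m+1)) (Fin (m+1)) ℂ)

lemma sum_phiEntry {N k l : ℕ} (hN : N = m + 1 - k - l) (r b : ℕ) (v : Fin (m+2) → ℂ) :
    ∑ c : Fin (m+2), phiEntry k l X r (c + (m+2) * b) * v c = tier N k l X r b v := by
  have hd : ∀ c : Fin (m+2), ((c : ℕ) + (m+2) * b) / (m+2) = b := fun c => by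
    rw [Nat.add_mul_div_left _ _ (by omega), Nat.div_eq_of_lt c.2, zero_add]
  have hmd : ∀ c : Fin (m+2), ((c : ℕ) + (m+2) * b) % (m+2) = c := fun c => by
    rw [Nat.add_mul_mod_self_left, Nat.mod_eq_of_lt c.2]
  have hT : (if b + 1 = N then m + 1 - l else m) = m + 1 - lam N l b := by
    unfold lam; split_ifs <;> omega
  have hlam : (if b + 1 = N then l else 1) = lam N l b := rfl
  have ha : (if b + 1 = N then k + 1 else if b + 2 = N then l + 1 else 2)
      = (if b + 1 = N then k else lam N l (b+1)) + 1 := by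
    unfold lam; split_ifs <;> omega
  have hY : ∀ x, (if b + 1 = N then l + x else 1 + x) = lam N l b + x := fun x => by
    unfold lam; split_ifs <;> rfl
  simp only [phiEntry, hd, hmd, ← hN, hT, ha, hY]
  unfold tier
  generalize (if b + 1 = N then k else lam N l (b+1)) = a
  generalize lam N l b = q
  have e1 : m + 2 - (a + 1) = m + 1 - a := by omega
  rw [e1]
  split_ifs with h1 h2 h3
  · rw [Fin.sum_univ_castSucc]
    simp only [Fin.val_castSucc, Fin.val_last]
    rw [if_neg (by omega), zero_mul, add_zero]
    exact Finset.sum_congr rfl fun j _ => by rw [if_pos (by omega)]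
  · rw [Fin.sum_univ_succ]
    simp [rowZ]
  · rw [Fin.sum_univ_succ]
    have e2 : a + 1 + (r - (b * (m+1) + (m + 1 - q))) - 1
        = a + (r - (b * (m+1) + (m + 1 - q))) := by omega
    rw [e2]
    simp [rowZ]
  · simp

/-- The column operation is block triangular (`tcol_of_lt`) with diagonal blocks of equal
determinant (`det_tcol_diag`). -/
lemma det_colOp (N : ℕ) :
    (Matrix.of fun p q : Fin N × Fin (m+2) => tcol X q.1 q.2 p.1 p.2).det
      = ((X (Fin.last m) 0)⁻¹ * (X 0 (Fin.last m))⁻¹ * (XR X)⁻¹.det) ^ N := by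
  have hT : (Matrix.of fun p q : Fin N × Fin (m+2) =>
      tcol X q.1 q.2 p.1 p.2).BlockTriangular (fun p => OrderDual.toDual p.1) := by
    intro p q hpq
    have : (p.1 : ℕ) < q.1 := by simpa using hpq
    simp [tcol_of_lt X this]
  rw [hT.det_fintype]
  rw [Finset.prod_congr rfl (g := fun _ =>
    (X (Fin.last m) 0)⁻¹ * (X 0 (Fin.last m))⁻¹ * (XR X)⁻¹.det), Finset.prod_const]
  · simp
  · intro b _
    rw [← det_tcol_diag X (OrderDual.ofDual b : Fin N)]
    let e : Fin (m+2) ≃ {p : Fin N × Fin (m+2) // OrderDual.toDual p.1 = b} :=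
      { toFun := fun c => ⟨(OrderDual.ofDual b, c), rfl⟩
        invFun := fun p => p.1.2
        left_inv := fun c => rfl
        right_inv := fun p => by
          obtain ⟨⟨p1, p2⟩, hp⟩ := p
          subst hp
          rfl }
    rw [← Matrix.det_submatrix_equiv_self e]
    rfl

lemma natDet_redEntry {k l N : ℕ} (hN : N = m + 1 - k - l) :
    natDet (N * (m+2)) (redEntry N k l X) = (bigPhi k l X).det *
      ((X (Fin.last m) 0)⁻¹ * (X 0 (Fin.last m))⁻¹ * (XR X)⁻¹.det) ^ N := by
  rw [← det_colOp, ← Matrix.det_submatrix_equiv_self (finProdFinEquiv (m := N) (n := m+2)).symm]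
  subst hN
  rw [← Matrix.det_mul]
  unfold natDet
  congr 1
  ext r C
  rw [Matrix.mul_apply, ← Equiv.sum_comp finProdFinEquiv, Fintype.sum_prod_type]
  simp only [Matrix.of_apply, redEntry, bigPhi, Matrix.submatrix_apply, Equiv.symm_apply_apply]
  refine Finset.sum_congr rfl fun b' _ => ?_
  rw [← sum_phiEntry X rfl]
  rfl

lemma lam_bounds {N k l m : ℕ} (hN : N + k + l = m + 1) (hk : 1 ≤ k) (hl : 1 ≤ l) {g : ℕ}
    (hg : g < N) : 1 ≤ lam N l g ∧ lam N l g ≤ m := by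
  unfold lam
  split_ifs <;> omega

/-- The relative position of the row blocks and the block columns of `Φ_{kl}(X)`: rows
`g(m+1) + o` in the range of row block `g` meet only block columns `g - 1` and `g`. -/
lemma tier_row {N k l : ℕ} (hN : N + k + l = m + 1) (hk : 1 ≤ k) (hl : 1 ≤ l)
    {g b o : ℕ} (hg : g < N) (hb : b < N) (ho : o ≤ m + 1 - lam N l g) (v : Fin (m+2) → ℂ) :
    tier N k l X (g * (m+1) + o) b v =
      if b = g then (if o ≤ m - lam N l g then rowY X v (lam N l g + o) else rowZ X v 0)
      else if b + 1 = g ∧ o < m - lam N l g then rowZ X v (lam N l g + 1 + o) else 0 := by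
  have hlg := lam_bounds hN hk hl hg
  have hlb := lam_bounds hN hk hl hb
  rcases lt_trichotomy b g with h | h | h
  · obtain ⟨d, rfl⟩ : ∃ d, g = b + 1 + d := ⟨g - b - 1, by omega⟩
    have hlb1 : lam N l b = 1 := if_neg (by omega)
    have e : (b + 1 + d) * (m+1) = b * (m+1) + (m+1) + d * (m+1) := by ring
    unfold tier
    rw [hlb1, e, if_neg (show ¬ b = b + 1 + d by omega), if_neg (show ¬ b + 1 = N by omega)]
    generalize b * (m+1) = P
    rcases Nat.eq_zero_or_pos d with rfl | hd
    · simp only [zero_mul, add_zero] at *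
      by_cases ho' : o < m - lam N l (b+1)
      · rw [if_neg (by omega), if_pos (by omega), if_neg (by omega), if_pos (by simpa using ho')]
        congr 1
        omega
      · rw [if_neg (by omega), if_neg (by omega), if_neg (by omega)]
    · have hdm : m + 1 ≤ d * (m+1) := Nat.le_mul_of_pos_left _ hd
      have := lam_bounds hN hk hl (show b + 1 < N by omega)
      rw [if_neg (by omega), if_neg (by omega), if_neg (by omega)]
  · subst h
    unfold tier
    generalize b * (m+1) = P
    rw [if_pos rfl]
    by_cases ho' : o ≤ m - lam N l b
    · rw [if_pos (by omega), if_pos ho']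
      congr 1
      omega
    · rw [if_neg (by omega), if_pos, if_pos (by omega), if_neg ho']
      refine ⟨by omega, ?_⟩
      split_ifs with h1
      · omega
      · have := lam_bounds hN hk hl (show b + 1 < N by omega)
        omega
  · obtain ⟨d, rfl⟩ : ∃ d, b = g + 1 + d := ⟨b - g - 1, by omega⟩
    have e : (g + 1 + d) * (m+1) = g * (m+1) + (m+1) + d * (m+1) := by ring
    unfold tier
    rw [e]
    generalize g * (m+1) = P at *
    generalize d * (m+1) = Q at *
    rw [if_neg (by omega), if_neg (by omega), if_neg (by omega), if_neg (by omega)]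

/-- The rows of `Φ_{kl}(X)` below the row blocks meet only the last block column. -/
lemma tier_final {N k l : ℕ} (hN : N + 1 + k + l = m + 1) (hk : 1 ≤ k) (hl : 1 ≤ l)
    {b j : ℕ} (hb : b < N + 1) (hj : j < m - k) (v : Fin (m+2) → ℂ) :
    tier (N + 1) k l X (N * (m+1) + (m - l + 2 + j)) b v =
      if b = N then rowZ X v (k + 1 + j) else 0 := by
  rcases Nat.lt_or_ge b N with h | h
  · obtain ⟨d, rfl⟩ : ∃ d, N = b + 1 + d := ⟨N - b - 1, by omega⟩
    have hlb1 : lam (b + 1 + d + 1) l b = 1 := if_neg (by omega)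
    have e : (b + 1 + d) * (m+1) = b * (m+1) + (m+1) + d * (m+1) := by ring
    unfold tier
    rw [hlb1, e, if_neg (show ¬ b + 1 = b + 1 + d + 1 by omega)]
    generalize b * (m+1) = P
    rcases Nat.eq_zero_or_pos d with rfl | hd
    · have : lam (b + 1 + 0 + 1) l (b + 1) = l := if_pos (by omega)
      rw [if_neg (by omega), if_neg (by omega), if_neg (by omega)]
    · have hdm : m + 1 ≤ d * (m+1) := Nat.le_mul_of_pos_left _ hd
      have : lam (b + 1 + d + 1) l (b + 1) = 1 := if_neg (by omega)
      rw [if_neg (by omega), if_neg (by omega), if_neg (by omega)]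
  · obtain rfl : b = N := by omega
    have : lam (b + 1) l b = l := if_pos rfl
    unfold tier
    rw [this, if_pos rfl, if_pos rfl]
    generalize b * (m+1) = P
    rw [if_neg (by omega), if_pos (by omega), if_neg (by omega)]
    congr 1
    omega

end Reduce

/-! ### Rows of the reduced matrix -/

section Rows

variable {m : ℕ} (X : Matrix (Fin (m+1)) (Fin (m+1)) ℂ)

lemma divMod_unique {C g c : ℕ} (hc : c < m + 2) :
    C = g * (m+2) + c ↔ C / (m+2) = g ∧ C % (m+2) = c := by
  rw [Nat.div_mod_unique (by omega)]
  constructor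
  · rintro rfl
    exact ⟨by ring, hc⟩
  · rintro ⟨h, -⟩
    rw [← h]; ring

lemma sum_fin_ite_eq {N g : ℕ} (hg : g < N) (F : ℕ → ℂ) :
    ∑ b : Fin N, (if (b : ℕ) = g then F b else 0) = F g := by
  rw [Finset.sum_eq_single (⟨g, hg⟩ : Fin N)]
  · simp
  · intro b _ hb
    exact if_neg fun h => hb (Fin.ext h)
  · simp

/-- The row of row block `g` containing the last row of `X` becomes a unit row, with pivot in the
first column of block `g`. -/
lemma red_pivotY (hn1 : X (Fin.last m) 0 ≠ 0) {N k l : ℕ} (hN : N + k + l = m + 1)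
    (hk : 1 ≤ k) (hl : 1 ≤ l) {g : ℕ} (hg : g < N) (C : ℕ) :
    redEntry N k l X (g * (m+1) + (m - lam N l g)) C = if C = g * (m+2) then 1 else 0 := by
  have hlg := lam_bounds hN hk hl hg
  unfold redEntry
  rw [Finset.sum_congr rfl fun b' _ => tier_row X hN hk hl hg b'.2 (by omega) _]
  simp only [lt_irrefl, and_false, if_false, le_refl, if_true]
  rw [sum_fin_ite_eq hg (fun b' => rowY X (tcol X (C / (m+2)) (C % (m+2)) b') _)]
  rw [show lam N l g + (m - lam N l g) = m by omega]
  have := divMod_unique (m := m) (C := C) (g := g) (c := 0) (by omega)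
  rw [add_zero] at this
  simp only [this]
  clear this
  generalize C / (m+2) = b
  generalize C % (m+2) = c
  unfold tcol
  by_cases h0 : c = 0
  · by_cases hb : g = b
    · rw [if_pos h0, if_pos hb, if_pos ⟨hb.symm, h0⟩, rowY_single_first X hn1]
    · rw [if_pos h0, if_neg hb, if_neg (by omega), rowY_zero]
  · rw [if_neg h0, if_neg (show ¬ (b = g ∧ c = 0) by omega)]
    split_ifs
    · exact rowY_single_last X _ _
    · exact rowY_zero X _
    · exact rowY_liftv_last X hn1 _

/-- The row of row block `g` containing the first row of `X` becomes a unit row, with pivot in the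
last column of block `g`. -/
lemma red_pivotZ (h1n : X 0 (Fin.last m) ≠ 0) {N k l : ℕ} (hN : N + k + l = m + 1)
    (hk : 1 ≤ k) (hl : 1 ≤ l) {g : ℕ} (hg : g < N) (C : ℕ) :
    redEntry N k l X (g * (m+1) + (m + 1 - lam N l g)) C
      = if C = g * (m+2) + (m+1) then 1 else 0 := by
  have hlg := lam_bounds hN hk hl hg
  unfold redEntry
  rw [Finset.sum_congr rfl fun b' _ => tier_row X hN hk hl hg b'.2 (by omega) _]
  simp only [show ¬ (m + 1 - lam N l g < m - lam N l g) by omega, and_false, if_false,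
    show ¬ (m + 1 - lam N l g ≤ m - lam N l g) by omega]
  rw [sum_fin_ite_eq hg (fun b' => rowZ X (tcol X (C / (m+2)) (C % (m+2)) b') _)]
  simp only [divMod_unique (m := m) (C := C) (g := g) (c := m+1) (by omega)]
  generalize C / (m+2) = b
  generalize C % (m+2) = c
  unfold tcol
  by_cases h0 : c = m + 1
  · rw [if_neg (show ¬ c = 0 by omega), if_pos h0]
    by_cases hb : g = b
    · rw [if_pos hb, if_pos ⟨hb.symm, h0⟩, rowZ_single_last X h1n]
    · rw [if_neg hb, if_neg (by omega), rowZ_zero]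
  · rw [if_neg (show ¬ (b = g ∧ c = m + 1) by omega), if_neg h0]
    split_ifs
    · exact rowZ_single_first X _ _
    · exact rowZ_zero X _
    · exact rowZ_liftv_first X h1n _

/-- The other rows of row block `g` are unit rows on the columns still present when this block is
eliminated. For a column `(b, 1)` with `b < g` the entry vanishes because
`U (-U)^{g-1-b} e₁ + (-U)^{g-b} e₁ = 0`. -/
lemma red_id (hR : IsUnit (XR X).det) {N k l : ℕ} (hN : N + k + l = m + 1)
    (hk : 1 ≤ k) (hl : 1 ≤ l) {g o : ℕ} (hg : g < N) (ho : o < m - lam N l g) (C : ℕ)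
    (h1 : C / (m+2) < g → C % (m+2) = 1)
    (h2 : C / (m+2) = g → 1 ≤ C % (m+2) ∧ C % (m+2) ≤ m) :
    redEntry N k l X (g * (m+1) + o) C
      = if C = g * (m+2) + (lam N l g + 1 + o) then 1 else 0 := by
  have hlg := lam_bounds hN hk hl hg
  unfold redEntry
  rw [Finset.sum_congr rfl fun b' _ => tier_row X hN hk hl hg b'.2 (by omega) _]
  simp only [ho, and_true, if_true, ho.le]
  simp only [divMod_unique (m := m) (C := C) (g := g) (c := lam N l g + 1 + o) (by omega)]
  generalize hb : C / (m+2) = b at *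
  generalize hc : C % (m+2) = c at *
  rcases lt_trichotomy b g with h | h | h
  · obtain ⟨g, rfl⟩ : ∃ g', g = g' + 1 := ⟨g - 1, by omega⟩
    have hc1 := h1 h
    subst hc1
    have hm1 : ¬ 1 = m + 1 := by omega
    have e : ∀ b' : ℕ, (if b' = g + 1 then rowY X (tcol X b 1 b') (lam N l (g+1) + o)
        else if b' + 1 = g + 1 then rowZ X (tcol X b 1 b') (lam N l (g+1) + 1 + o) else 0)
      = (if b' = g + 1 then rowY X (tcol X b 1 b') (lam N l (g+1) + o) else 0)
        + (if b' = g then rowZ X (tcol X b 1 b') (lam N l (g+1) + 1 + o) else 0) := by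
      intro b'
      split_ifs <;> first | omega | simp
    simp only [e, Finset.sum_add_distrib]
    rw [sum_fin_ite_eq hg (fun b' => rowY X (tcol X b 1 b') _),
      sum_fin_ite_eq (by omega) (fun b' => rowZ X (tcol X b 1 b') _),
      if_neg (by omega)]
    have hi : lam N l (g+1) + o < m := by omega
    simp only [tcol, one_ne_zero, if_false, hm1]
    have eY := rowY_liftv X hR (wcol (XL X * (XR X)⁻¹) b 1 (g+1)) ⟨_, hi⟩
    have eZ := rowZ_liftv X (wcol (XL X * (XR X)⁻¹) b 1 g) ⟨_, hi⟩
    simp only at eY eZ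
    rw [eY, show lam N l (g+1) + 1 + o = lam N l (g+1) + o + 1 by omega, eZ]
    unfold wcol
    rw [if_pos rfl, if_pos rfl, if_pos (by omega), if_pos (by omega),
      show g + 1 - b = (g - b) + 1 by omega, pow_succ' (XL X * (XR X)⁻¹), Matrix.mulVec_smul,
      Matrix.mulVec_mulVec, pow_succ]
    simp
  · subst h
    obtain ⟨hc1, hc2⟩ := h2 rfl
    have e : ∀ b' : ℕ, (if b' = b then rowY X (tcol X b c b') (lam N l b + o)
        else if b' + 1 = b then rowZ X (tcol X b c b') (lam N l b + 1 + o) else 0)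
      = (if b' = b then rowY X (tcol X b c b') (lam N l b + o) else 0) := by
      intro b'
      split_ifs
      · rfl
      · rw [tcol_of_lt X (by omega), rowZ_zero]
      · rfl
    simp only [e]
    rw [sum_fin_ite_eq hg (fun b' => rowY X (tcol X b c b') _)]
    have hi : lam N l b + o < m := by omega
    have eY := rowY_liftv X hR (wcol (XL X * (XR X)⁻¹) b c b) ⟨_, hi⟩
    simp only at eY
    rw [tcol, if_neg (by omega), if_neg (by omega), eY, wcol_self]
    simp only [bas, true_and]
    split_ifs <;> first | rfl | omega
  · rw [if_neg (by omega)]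
    refine Finset.sum_eq_zero fun b' _ => ?_
    split_ifs
    · rw [tcol_of_lt X (by omega), rowY_zero]
    · rw [tcol_of_lt X (by omega), rowZ_zero]
    · rfl

/-- The final rows apply `U` to the component of the column in the last block. -/
lemma red_final {N k l : ℕ} (hN : N + 1 + k + l = m + 1)
    (hk : 1 ≤ k) (hl : 1 ≤ l) {j b c : ℕ} (hj : k + j < m) (hc1 : 1 ≤ c) (hc2 : c ≤ m) :
    redEntry (N+1) k l X (N * (m+1) + (m - l + 2 + j)) (b * (m+2) + c)
      = ((XL X * (XR X)⁻¹) *ᵥ wcol (XL X * (XR X)⁻¹) b c N) ⟨k + j, hj⟩ := by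
  have hdm := (divMod_unique (m := m) (C := b * (m+2) + c) (g := b) (c := c) (by omega)).1 rfl
  unfold redEntry
  rw [hdm.1, hdm.2,
    Finset.sum_congr rfl fun b' _ => tier_final X hN hk hl b'.2 (by omega) _,
    sum_fin_ite_eq (by omega) (fun b' => rowZ X (tcol X b c b') _), ← rowZ_liftv,
    tcol, if_neg (by omega), if_neg (by omega)]
  congr 1
  simp only
  omega

end Rows

/-! ### Elimination of the unit rows -/

section Eliminate

variable {m : ℕ} (X : Matrix (Fin (m+1)) (Fin (m+1)) ℂ)

/-- The columns that remain after the row blocks `0, …, b - 1` have been eliminated: one column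
(that of `e₁`) for each of the first `b` blocks, then all columns of the later blocks. -/
def colMap (m b j : ℕ) : ℕ := if j < b then j * (m+2) + 1 else b * (m+2) + (j - b)

lemma colMap_eq_iff {b j c : ℕ} : colMap m b j = b * (m+2) + c ↔ j = b + c := by
  unfold colMap
  split_ifs with h
  · have h3 : (j + 1) * (m+2) ≤ b * (m+2) := Nat.mul_le_mul_right _ (by omega)
    rw [add_mul] at h3
    generalize j * (m+2) = P at *
    generalize b * (m+2) = Q at *
    omega
  · generalize b * (m+2) = Q at *
    omega

/-- Elimination of row block `b` (`red_pivotY`, `red_pivotZ`, `red_id`): two pivot rows and an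
identity block are deleted, together with their columns. -/
lemma natDet_step (hR : IsUnit (XR X).det) (h1n : X 0 (Fin.last m) ≠ 0)
    (hn1 : X (Fin.last m) 0 ≠ 0) {N k l : ℕ} (hN : N + k + l = m + 1)
    (hk : 1 ≤ k) (hl : 1 ≤ l) {b s : ℕ} (hb : b < N) (hs : b + lam N l b ≤ s) :
    natDet (s + (m - lam N l b) + 1 + 1)
        (fun i j => redEntry N k l X (b * (m+1) + i) (colMap m b j))
      = (-1) ^ (m + (m - lam N l b) * (b + lam N l b)) *
        natDet s (fun i j => redEntry N k l X (b * (m+1) + (i + (m - lam N l b) + 2))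
          (colMap m b (if j < b then j else if j < b + lam N l b then j + 1
            else j + (m - lam N l b) + 2))) := by
  have hlb := lam_bounds hN hk hl hb
  generalize hL : lam N l b = L at *
  rw [natDet_delete_one _ (m + 1 - L) (b + (m + 1)) _ (by omega) (by omega)]
  swap
  · intro j _
    rw [← hL, red_pivotZ X h1n hN hk hl hb]
    simp only [colMap_eq_iff]
  rw [natDet_delete_one _ (m - L) b _ (by omega) (by omega)]
  swap
  · intro j _
    rw [if_pos (by omega), ← hL, red_pivotY X hn1 hN hk hl hb]
    have := fun j => colMap_eq_iff (m := m) (b := b) (j := j) (c := 0)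
    simp only [add_zero] at this
    simp only [this]
    split_ifs <;> first | rfl | omega
  rw [natDet_delete s 0 (b + L) (m - L) _ (by omega) (by omega)]
  swap
  · intro i hi j _
    rw [if_pos (show 0 + i < m - L by omega), if_pos (by omega), zero_add]
    rw [red_id X hR hN hk hl hb (by omega)]
    · rw [hL]
      simp only [colMap_eq_iff]
      split_ifs <;> first | rfl | omega
    · generalize hJ : (if (if j < b then j else j + 1) < b + (m + 1) then
        (if j < b then j else j + 1) else (if j < b then j else j + 1) + 1) = J
      unfold colMap
      intro h
      split_ifs at h ⊢ with h'
      · exact ((divMod_unique (m := m) (by omega)).1 rfl).2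
      · exfalso
        have := (Nat.le_div_iff_mul_le (show 0 < m + 2 by omega)).2
          (show b * (m+2) ≤ b * (m+2) + (J - b) by omega)
        omega
    · intro h
      generalize hJ : (if (if j < b then j else j + 1) < b + (m + 1) then
        (if j < b then j else j + 1) else (if j < b then j else j + 1) + 1) = J at h ⊢
      have hC := (divMod_unique (m := m) (C := colMap m b J) (g := b)
        (c := colMap m b J % (m+2)) (Nat.mod_lt _ (by omega))).2 ⟨h, rfl⟩
      rw [colMap_eq_iff] at hC
      have := Nat.mod_lt (colMap m b J) (show 0 < m + 2 by omega)
      split_ifs at hJ <;> omega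
  rw [← mul_assoc, ← mul_assoc, ← pow_add, ← pow_add]
  congr 1
  · rw [show m + 1 - L + (b + (m + 1)) + (m - L + b) + (m - L) * (0 + (b + L))
      = m + (m - L) * (b + L) + 2 * (m - L + b + 1) by
        zify [show L ≤ m by omega, show L ≤ m + 1 by omega]; ring, pow_add _ _ (2 * _), pow_mul]
    simp
  · apply natDet_congr
    intro i _ j _
    congr 1
    · split_ifs <;> omega
    · congr 1
      split_ifs <;> omega

/-- The first `b` row blocks can be eliminated one after another, with the accumulated sign. -/
lemma natDet_iterate (hR : IsUnit (XR X).det) (h1n : X 0 (Fin.last m) ≠ 0)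
    (hn1 : X (Fin.last m) 0 ≠ 0) {N k l : ℕ} (hN : N + 1 + k + l = m + 1)
    (hk : 1 ≤ k) (hl : 1 ≤ l) (b : ℕ) (hb : b ≤ N) :
    natDet ((N + 1) * (m+2)) (redEntry (N+1) k l X)
      = (-1) ^ (∑ i ∈ Finset.range b, (m + (m - 1) * (i + 1))) *
        natDet ((N + 1) * (m+2) - b * (m+1))
          (fun i j => redEntry (N+1) k l X (b * (m+1) + i) (colMap m b j)) := by
  induction b with
  | zero => simp [colMap]
  | succ b ih =>
    have hlb : lam (N+1) l b = 1 := if_neg (by omega)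
    have hsz : (N + 1) * (m+2) = b * (m+2) + (N - b) * (m+2) + (m+2) := by
      obtain ⟨d, rfl⟩ : ∃ d, N = b + d := ⟨N - b, by omega⟩
      rw [show b + d - b = d by omega]; ring
    have hsz2 : m + 2 ≤ (N - b) * (m+2) := Nat.le_mul_of_pos_left _ (by omega)
    have hsz3 : b * (m+2) = b * (m+1) + b := by ring
    have hsz4 : (b + 1) * (m+1) = b * (m+1) + (m+1) := by ring
    have hstep := natDet_step X hR h1n hn1 hN hk hl (b := b)
      (s := (N + 1) * (m+2) - (b + 1) * (m+1)) (by omega) (by rw [hlb]; omega)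
    rw [hlb, show (N + 1) * (m+2) - (b + 1) * (m+1) + (m - 1) + 1 + 1
      = (N + 1) * (m+2) - b * (m+1) by omega] at hstep
    rw [ih (by omega), hstep, Finset.sum_range_succ, pow_add _ (Finset.sum _ _), mul_assoc]
    congr 2
    apply natDet_congr
    intro i _ j _
    congr 1
    · rw [hsz4]; omega
    · have : (b + 1) * (m+2) = b * (m+2) + (m+2) := by ring
      unfold colMap
      rcases lt_trichotomy j b with h | h | h
      · rw [if_pos h, if_pos h, if_pos (by omega)]
      · subst h
        rw [if_neg (show ¬ j < j by omega), if_pos (show j < j + 1 by omega),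
          if_neg (show ¬ j + 1 < j by omega), if_pos (show j < j + 1 by omega)]
        omega
      · rw [if_neg (show ¬ j < b by omega), if_neg (show ¬ j < b + 1 by omega),
          if_neg (show ¬ j + (m - 1) + 2 < b by omega), if_neg (show ¬ j < b + 1 by omega), this]
        omega

lemma mulVec_bas {M : ℕ} (A : Matrix (Fin M) (Fin M) ℂ) (i : Fin M) (c : ℕ) :
    (A *ᵥ bas M (c + 1)) i = ent A i c := by
  by_cases hc : c < M
  · obtain ⟨c, rfl⟩ : ∃ c' : Fin M, c = c' := ⟨⟨c, hc⟩, rfl⟩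
    rw [ent_val]
    simp [Matrix.mulVec, dotProduct, bas, ← Fin.ext_iff]
  · rw [ent, dif_neg (by omega), Matrix.mulVec, dotProduct]
    refine Finset.sum_eq_zero fun j _ => ?_
    rw [bas, if_neg (by have := j.2; omega), mul_zero]

/-- `det Φ_{kl}(V)` is the minor left after removing the first `k` identity columns. -/
lemma det_PhiU {k l : ℕ} (hk : k ≤ m) (V : Matrix (Fin m) (Fin m) ℂ) :
    (PhiU k l V).det = natDet (m - k) (fun i c =>
      if c < l then ent V (k + i) c else ent (V ^ (c - l + 2)) (k + i) 0) := by
  have hT : (PhiU k l V).det = natDet (m - k + k) (fun c i =>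
      if c < k then (if i = c then 1 else 0)
      else if c < k + l then ent V i (c - k) else ent (V ^ (c - k - l + 2)) i 0) := by
    rw [show m - k + k = m by omega, ← Matrix.det_transpose]
    rfl
  rw [hT, natDet_delete (m - k) 0 0 k _ (by omega) (by omega)]
  · rw [natDet, ← Matrix.det_transpose, natDet]
    simp only [add_zero, mul_zero, pow_zero, one_mul]
    congr 1
    ext i c
    simp only [Matrix.transpose_apply, Matrix.of_apply, not_lt_zero, if_false]
    rw [if_neg (by omega)]
    have e : (c : ℕ) + k - k = c := by omega
    rw [e, add_comm (i : ℕ) k]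
    by_cases h : (c : ℕ) < l
    · rw [if_pos h, if_pos (by omega)]
    · rw [if_neg h, if_neg (by omega)]
  · intro i hi j _
    simp [hi]

/-- The value of the reduced determinant, up to the sign accumulated in the eliminations. -/
lemma natDet_red_eq (hR : IsUnit (XR X).det) (h1n : X 0 (Fin.last m) ≠ 0)
    (hn1 : X (Fin.last m) 0 ≠ 0) {N k l : ℕ} (hN : N + k + l = m)
    (hk : 1 ≤ k) (hl : 1 ≤ l) :
    natDet ((N + 1) * (m+2)) (redEntry (N+1) k l X)
      = (-1) ^ ((∑ i ∈ Finset.range N, (m + (m - 1) * (i + 1)))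
          + (m + (m - l) * (N + l)) + (∑ j ∈ Finset.range N, (j + l))
          + ∑ p ∈ Finset.range N, (p + 1)) *
        (PhiU k l (XL X * (XR X)⁻¹)).det := by
  have hN1 : N + 1 + k + l = m + 1 := by omega
  have hlam : lam (N+1) l N = l := if_pos rfl
  have hstep := natDet_step X hR h1n hn1 hN1 hk hl (b := N) (s := m - k) (by omega)
    (by rw [hlam]; omega)
  have hsz : (N + 1) * (m+2) - N * (m+1) = m - k + (m - l) + 1 + 1 := by
    rw [show (N + 1) * (m+2) = N * (m+1) + (m + 2 + N) by ring]
    omega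
  rw [hlam] at hstep
  rw [natDet_iterate X hR h1n hn1 hN1 hk hl N le_rfl, hsz, hstep, det_PhiU (by omega)]
  generalize hU : XL X * (XR X)⁻¹ = U
  have hcols : natDet (m - k) (fun i j => redEntry (N+1) k l X (N * (m+1) + (i + (m - l) + 2))
      (colMap m N (if j < N then j else if j < N + l then j + 1 else j + (m - l) + 2)))
      = natDet (m - k) (fun i c =>
          if c < N then (-1) ^ (N - 1 - c + 1) * ent (U ^ (N - 1 - c + 2)) (k + i) 0
          else if c < N + l then ent U (k + i) (c - N)
          else (-1) ^ (c - l + 1) * ent (U ^ (c - l + 2)) (k + i) 0) := by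
    apply natDet_congr
    intro i hi j hj
    have hki : k + i < m := by omega
    rw [show i + (m - l) + 2 = m - l + 2 + i by omega]
    by_cases h : j < N
    · rw [if_pos h, if_pos h, colMap, if_pos h,
        red_final X hN1 hk hl hki (by omega) (by omega), hU, wcol, if_pos rfl, if_pos h.le,
        Matrix.mulVec_smul, Matrix.mulVec_mulVec, ← pow_succ', Pi.smul_apply, smul_eq_mul,
        show N - j = N - 1 - j + 1 by omega]
      congr 1
      exact mulVec_bas _ ⟨k + i, hki⟩ 0
    · rw [if_neg h, if_neg h, if_pos (by omega), if_pos (by omega), colMap, if_neg (by omega),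
        red_final X hN1 hk hl hki (by omega) (by omega), hU, wcol_self,
        show j + 1 - N = j - N + 1 by omega]
      exact mulVec_bas _ ⟨k + i, hki⟩ (j - N)
  have hreorder := natDet_reorder (m - k) l N
    (fun p i => (-1) ^ (p + 1) * ent (U ^ (p + 2)) (k + i) 0) (fun c i => ent U (k + i) c)
    (by omega)
  have hsign : natDet (m - k) (fun i c => if c < l then ent U (k + i) c
        else (-1) ^ (c - l + 1) * ent (U ^ (c - l + 2)) (k + i) 0)
      = (-1) ^ (∑ p ∈ Finset.range N, (p + 1)) * natDet (m - k) (fun i c =>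
        if c < l then ent U (k + i) c else ent (U ^ (c - l + 2)) (k + i) 0) := by
    have hprod : ∏ c : Fin (m - k), (if (c : ℕ) < l then (1 : ℂ) else (-1) ^ ((c : ℕ) - l + 1))
        = (-1) ^ (∑ p ∈ Finset.range N, (p + 1)) := by
      rw [Fin.prod_univ_eq_prod_range (fun c => if c < l then (1 : ℂ) else (-1) ^ (c - l + 1)),
        show m - k = l + N by omega, Finset.prod_range_add, Finset.prod_eq_one, one_mul,
        ← Finset.prod_pow_eq_pow_sum]
      · refine Finset.prod_congr rfl fun p _ => ?_
        simp
      · intro c hc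
        exact if_pos (Finset.mem_range.1 hc)
    unfold natDet
    rw [← hprod, ← Matrix.det_mul_row]
    congr 1
    ext i c
    simp only [Matrix.of_apply]
    split_ifs <;> simp
  rw [hcols, hreorder, hsign]
  ring

end Eliminate

/-! ### Comparison of signs -/

lemma neg_one_pow_eq_of_zmod {a b : ℕ} (h : (a : ZMod 2) = b) : (-1 : ℂ) ^ a = (-1) ^ b := by
  rw [ZMod.natCast_eq_natCast_iff] at h
  rw [neg_one_pow_eq_pow_mod_two, h, ← neg_one_pow_eq_pow_mod_two]

lemma two_mul_tri (k : ℕ) : 2 * (k * (k-1) / 2) + k = k * k := by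
  rw [Nat.mul_div_cancel' (Nat.even_mul_pred_self k).two_dvd]
  cases k with
  | zero => rfl
  | succ k => simp only [Nat.add_sub_cancel]; ring

/-- The accumulated sign agrees with `s_{kl} s̃_{kl}`. For `m` odd the exponent is even; for `m`
even this is the identity `C(m,2) = C(k,2) + C(l,2) + C(N,2) + kl + kN + lN` modulo 2. -/
lemma sign_identity {m N k l : ℕ} (hN : N + k + l = m) (hk : 1 ≤ k) :
    sSign m k l = sTilde m k l * (-1) ^ (m * (N + 1) +
      ((∑ i ∈ Finset.range N, (m + (m - 1) * (i + 1)))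
          + (m + (m - l) * (N + l)) + (∑ j ∈ Finset.range N, (j + l))
          + ∑ p ∈ Finset.range N, (p + 1))) := by
  simp only [Finset.sum_add_distrib, ← Finset.mul_sum, Finset.sum_const, Finset.card_range,
    smul_eq_mul, Finset.sum_range_id]
  have hT := two_mul_tri N
  have hK := two_mul_tri k
  have hL := two_mul_tri l
  have two0 : (2 : ZMod 2) = 0 := rfl
  have hml : m - l = N + k := by omega
  rw [hml]
  generalize N * (N-1) / 2 = T at *
  unfold sSign sTilde
  rcases Nat.even_or_odd' m with ⟨h, hm | hm⟩
  · rw [if_pos (by omega), if_neg (by omega), ← pow_add]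
    generalize k * (k-1) / 2 = tk at *
    generalize l * (l-1) / 2 = tl at *
    apply neg_one_pow_eq_of_zmod
    have hm1 : m - 1 + 1 = m := by omega
    have hh : m / 2 = h := by omega
    generalize m - 1 = m' at *
    rw [hh]
    have key : 2 * h * h = h + (tk + tl + T + k * l + k * N + l * N) := by
      subst hm
      nlinarith
    have key2 : (2 : ZMod 2) * h * h = h + (tk + tl + T + k * l + k * N + l * N) := by
      exact_mod_cast congrArg (Nat.cast : ℕ → ZMod 2) key
    have hmz : (m : ZMod 2) = 0 := by rw [hm]; push_cast; rw [two0, zero_mul]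
    have hmz' : (m' : ZMod 2) + 1 = m := by exact_mod_cast congrArg (Nat.cast : ℕ → ZMod 2) hm1
    have hNz : (N : ZMod 2) + k + l = m := by exact_mod_cast congrArg (Nat.cast : ℕ → ZMod 2) hN
    push_cast
    generalize (N : ZMod 2) = N at *
    generalize (k : ZMod 2) = k at *
    generalize (l : ZMod 2) = l at *
    generalize (m : ZMod 2) = m at *
    generalize (m' : ZMod 2) = m' at *
    generalize (h : ZMod 2) = h at *
    generalize (tk : ZMod 2) = tk at *
    generalize (tl : ZMod 2) = tl at *
    generalize (T : ZMod 2) = T at *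
    subst hmz
    clear hT hK hL hm hN hh key hk hml hm1 two0
    have e : ∀ h k l N T t : ZMod 2, N + k + l = 0 → 2 * h * h = h + (t + T + k * l + k * N + l * N) →
        k * (l + 1) = h + t + (T + N + (N + k) * (N + l) + (T + N * l) + (T + N)) := by decide
    have hm2 : m' = 1 := by revert hmz'; revert m'; decide
    subst hm2
    have := e h k l N T (tk + tl) hNz key2
    rw [this]
    ring
  · rw [if_neg (by omega), if_pos (by omega)]
    have hm1 : m - 1 = 2 * h := by omega
    have hNz : (N : ZMod 2) + k + l = m := by exact_mod_cast congrArg (Nat.cast : ℕ → ZMod 2) hN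
    have hmz : (m : ZMod 2) = 1 := by rw [hm]; push_cast; rw [two0, zero_mul, zero_add]
    rw [hm1, neg_one_pow_eq_of_zmod (a := m * (N + 1) + _) (b := 0), pow_zero, mul_one]
    push_cast
    generalize (N : ZMod 2) = N at *
    generalize (k : ZMod 2) = k at *
    generalize (l : ZMod 2) = l at *
    generalize (m : ZMod 2) = m at *
    generalize (h : ZMod 2) = h at *
    generalize (T : ZMod 2) = T at *
    subst hmz
    clear hT hK hL hm hN hk hml hm1 two0
    revert N k l h T
    decide

/-! ### The pullback formula -/

/-- with `n = m+1 ≥ 3`, for `k, l ∈ [1, n-2]`, `k+l ≤ n-1`, the function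
`φ_{kl}(Ψ'(X)) = s_{kl} det Φ_{kl}(Ψ'(X))` equals
`s̃_{kl} ⬝ det Φ_{kl}(X) / (x_{1n} det X)^{n-k-l}`. -/
theorem phi_pullback (m : ℕ) (hm : 2 ≤ m) (k l : ℕ)
    (hk1 : 1 ≤ k) (hk2 : k ≤ m - 1) (hl1 : 1 ≤ l) (hl2 : l ≤ m - 1) (hkl : k + l ≤ m)
    (X : Matrix (Fin (m+1)) (Fin (m+1)) ℂ) (hX : IsUnit X.det)
    (h1n : X 0 (Fin.last m) ≠ 0) (hn1 : X (Fin.last m) 0 ≠ 0) :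
    sSign m k l * (PhiU k l (XL X * (XR X)⁻¹)).det
      = sTilde m k l * (bigPhi k l X).det / (X 0 (Fin.last m) * X.det) ^ (m+1-k-l) := by
  have hdet := det_eq_XR X hn1
  have hR0 : (XR X).det ≠ 0 := by
    intro h
    rw [h, mul_zero] at hdet
    exact hX.ne_zero hdet
  have hR : IsUnit (XR X).det := isUnit_iff_ne_zero.2 hR0
  obtain ⟨N, hN⟩ : ∃ N, N + k + l = m := ⟨m - k - l, by omega⟩
  have hN1 : N + 1 = m + 1 - k - l := by omega
  have h1 := natDet_red_eq X hR h1n hn1 hN hk1 hl1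
  have h2 := natDet_redEntry X hN1
  rw [h1, Matrix.det_nonsing_inv, Ring.inverse_eq_inv'] at h2
  rw [sign_identity hN hk1, pow_add, mul_assoc, mul_assoc, h2, mul_div_assoc]
  generalize (bigPhi k l X).det = B
  rw [← hN1]
  congr 1
  rw [pow_mul, hdet, div_eq_mul_inv, mul_left_comm, ← mul_pow, ← inv_pow]
  congr 2
  have hs : ((-1 : ℂ) ^ m) * (-1) ^ m = 1 := by rw [← mul_pow]; simp
  field_simp
  linear_combination hs

end
end

section
/- Let n ≥ 3 and let X be an invertible n×n complex matrix with x_{1n} ≠ 0 and x_{n1} ≠ 0, and let U = Ψ'(X). Then for all i, j with 2 ≤ j ≤ i ≤ n−1, g_{ij}(U) = (−1)^{(n+j+1)(i+j)} · g_{ij}(X) / (x_{1n}^{j−1} · det X). -/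
/-!
Write `N = n - 1 = m + 1`, `U = X_L X_R⁻¹`, and let `γ` be the shift of row vectors
`e_a ↦ e_{a-1}`, `e_0 ↦ 0`, so that `γ*` on index sets is the effect of `γ` on basis vectors.
Put `V = U γ`.  Both sides of the identity are determinants of explicit lists of rows; `detK K L`
is the determinant with the rows `L`.

*The side of `U`.*  Each summation over an index set in `g_{ij}(U)` is an instance of the
Cauchy–Binet formula (`minor_step`): the disjointness and positivity conditions remove only terms
that vanish, because a row is repeated or because `e_0 γ = 0`.  Iterating (`chain_sum`) and
completing the last minor by unit rows (one of them, or `i - 1` if `j = 2`), one gets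
`g_{ij}(U)` as the `N × N` determinant with the rows `e_a V^{j-1}` (`a ≥ i-1`), `e_a V^{j-2}`
(`a ≥ m+j-i`) and `e_m V^k` (`k = j-3, …, 0`): this is `gU_eq_detK`.

*The side of `X`.*  Let `T` shift a sequence one place to the right and let `x_a` be the rows of
`X`, `0 ≤ a ≤ m + 1`.  The equation `U X_R = X_L` says that `T x_{a+1}` equals
`∑_b V_{ab} x_{b+1}` up to a combination of `T x_0`, `x_0` and `x_{m+1}` (`phi_relation`).  The
rows of `G_{ij}(X)` are `T^{j-1} x_{a+1}`, `T^{j-2} x_{a+1}`, `T^k x_{m+1}`, for the same `a` and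
`k` as above, and `T^k x_0` for `k < j`.  Hence a unitriangular row operation replaces
`T^k x_{a+1}` by the combination of `x_1, …, x_{m+1}` with coefficients `e_a V^k`
(`detK_rowReduce`).  Cauchy–Binet now splits off the determinant `g_{ij}(U)` (`detK_phi`), and the
remaining factor, with the rows `x_1, …, x_{m+1}, x_0, T x_0, …, T^{j-1} x_0`, is block triangular
with determinant `± det X · x_{1n}^{j-1}` (`detK_base`).  The sign in the theorem is that of the
row permutations involved.
-/

open Matrix

noncomputable section

/-- The matrix `G_{ij}(X) = G({1,n},…,{1,n},{1}∪[n+j-i,n],{1}∪[i+1,n])` (with `j-2` copies of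
`{1,n}`), of size `n+j-1`, for an `(m+1) × (m+1)` matrix `X` (paper's `n = m+1`, indices `i, j`
are paper 1-based values).  Block row `l` (0-based) has `l` leading zero columns, then the rows
of `X` indexed by the corresponding index set occupying `n` consecutive columns, then trailing
zero columns. -/
def matG {m : ℕ} (i j : ℕ) (X : Matrix (Fin (m+1)) (Fin (m+1)) ℂ) :
    Matrix (Fin (m+j)) (Fin (m+j)) ℂ :=
  Matrix.of fun r c =>
    if (r:ℕ) < 2*(j-2) then
      -- one of the j-2 blocks with rows {1, n} of X
      (if (r:ℕ)/2 ≤ (c:ℕ) ∧ (c:ℕ) ≤ (r:ℕ)/2 + m then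
        ent X (if (r:ℕ) % 2 = 0 then 0 else m) ((c:ℕ) - (r:ℕ)/2) else 0)
    else if (r:ℕ) < 2*(j-2) + (i-j+2) then
      -- the block with rows {1} ∪ [n+j-i, n] of X
      (if j-2 ≤ (c:ℕ) ∧ (c:ℕ) ≤ j-2+m then
        ent X (if (r:ℕ) = 2*(j-2) then 0 else m+j-i-1 + ((r:ℕ) - 2*(j-2))) ((c:ℕ) - (j-2))
       else 0)
    else
      -- the block with rows {1} ∪ [i+1, n] of X
      (if j-1 ≤ (c:ℕ) ∧ (c:ℕ) ≤ j-1+m then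
        ent X (if (r:ℕ) = 2*(j-2)+(i-j+2) then 0 else i-1 + ((r:ℕ) - (2*(j-2)+(i-j+2))))
          ((c:ℕ) - (j-1))
       else 0)

/-- Determinant of the submatrix of `U` with row set `R` and column set `C` (both taken in
increasing order); `0` if the cardinalities do not match. -/
def minor {N : ℕ} (U : Matrix (Fin N) (Fin N) ℂ) (R C : Finset (Fin N)) : ℂ :=
  if h : C.card = R.card then
    Matrix.det (Matrix.of fun a b : Fin R.card =>
      U ((R.orderIsoOfFin rfl) a).1 ((C.orderIsoOfFin h) b).1)
  else 0

/-- `{x : a ≤ x}` as a finset of 0-based indices. -/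
def segGe (N a : ℕ) : Finset (Fin N) := Finset.univ.filter fun x => a ≤ (x:ℕ)

/-- `{x : a ≤ x ≤ b}` as a finset of 0-based indices. -/
def seg (N a b : ℕ) : Finset (Fin N) := Finset.univ.filter fun x => a ≤ (x:ℕ) ∧ (x:ℕ) ≤ b

/-- The map `γ*`: subtract one from every element. -/
def shiftDown {N : ℕ} (S : Finset (Fin N)) : Finset (Fin N) :=
  S.image fun x : Fin N => ⟨(x:ℕ) - 1, lt_of_le_of_lt (Nat.sub_le _ _) x.isLt⟩

/-- Extend a tuple of index sets by the full set `[2, n]` (0-based: all indices `≥ 1`). -/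
def extT {N p : ℕ} (T : Fin p → Finset (Fin N)) (t : ℕ) : Finset (Fin N) :=
  if h : t < p then T ⟨t, h⟩ else segGe N 1

/-- The function `g_{ij}(U)` for an `(M+1) × (M+1)` matrix `U` (paper's `n - 1 = M+1`, so paper's
`n = M+2`; `i, j` are paper values with `2 ≤ j ≤ i ≤ n-1`).  All indices are translated from the
paper's 1-based convention to 0-based `Fin` values. -/
def gU {M : ℕ} (i j : ℕ) (U : Matrix (Fin (M+1)) (Fin (M+1)) ℂ) : ℂ :=
  if hj : 3 ≤ j then
    ∑ T ∈ Finset.univ.filter (fun T : Fin (j-2) → Finset (Fin (M+1)) =>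
        (∀ t, ∀ x ∈ T t, 1 ≤ (x:ℕ)) ∧
        (∀ t : Fin (j-2), (T t).card = if (t:ℕ) = 0 then M+2-i else M+2-j+(t:ℕ)) ∧
        Disjoint (shiftDown (T ⟨0, by omega⟩)) (segGe (M+1) (M+j-i))),
      minor U (segGe (M+1) (i-1)) (T ⟨0, by omega⟩)
        * minor U (shiftDown (T ⟨0, by omega⟩) ∪ segGe (M+1) (M+j-i)) (extT T 1)
        * ∏ t ∈ Finset.Ico 1 (j-2),
            minor U (shiftDown (extT T t) ∪ {Fin.last M}) (extT T (t+1))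
  else
    minor U (segGe (M+1) (i-1)) (seg (M+1) 1 (M+2-i))

/-! ### The Cauchy–Binet formula for lists of rows -/

/-- **Cauchy–Binet for alternating maps.** -/
theorem alternating_cauchyBinet {k N : ℕ} (Φ : AlternatingMap ℂ (ℕ → ℂ) ℂ (Fin k))
    (A : Fin k → Fin N → ℂ) (w : Fin N → (ℕ → ℂ)) :
    Φ (fun i => ∑ b, A i b • w b)
      = ∑ S : {S : Finset (Fin N) // S.card = k},
          Matrix.det (Matrix.of fun a b : Fin k => A a (S.1.orderEmbOfFin S.2 b))
            * Φ (fun a => w (S.1.orderEmbOfFin S.2 a)) := by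
  have hL : Φ (fun i => ∑ b, A i b • w b)
      = ∑ f : Fin k → Fin N, (∏ i, A i (f i)) * Φ (fun i => w (f i)) := by
    have h := Φ.toMultilinearMap.map_sum (fun i b => A i b • w b)
    refine h.trans (Finset.sum_congr rfl fun f _ => ?_)
    have h2 := Φ.toMultilinearMap.map_smul_univ (fun i => A i (f i)) (fun i => w (f i))
    simpa using h2
  have hR : ∀ S : {S : Finset (Fin N) // S.card = k},
      Matrix.det (Matrix.of fun a b : Fin k => A a (S.1.orderEmbOfFin S.2 b))
            * Φ (fun a => w (S.1.orderEmbOfFin S.2 a))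
      = ∑ σ : Equiv.Perm (Fin k), (∏ i, A i (S.1.orderEmbOfFin S.2 (σ i)))
          * Φ (fun i => w (S.1.orderEmbOfFin S.2 (σ i))) := by
    intro S
    rw [← Matrix.det_transpose, Matrix.det_apply, Finset.sum_mul]
    refine Finset.sum_congr rfl fun σ _ => ?_
    have h := Φ.map_perm (fun a => w (S.1.orderEmbOfFin S.2 a)) σ
    have h' : Φ (fun i => w (S.1.orderEmbOfFin S.2 (σ i)))
      = Equiv.Perm.sign σ • Φ (fun a => w (S.1.orderEmbOfFin S.2 a)) := h
    rw [h']
    simp only [Matrix.transpose_apply, Matrix.of_apply]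
    rw [smul_mul_assoc, mul_smul_comm]
  rw [hL, Finset.sum_congr rfl fun S _ => hR S, ← Fintype.sum_prod_type']
  symm
  refine Fintype.sum_of_injective
    (fun p : {S : Finset (Fin N) // S.card = k} × Equiv.Perm (Fin k) =>
      fun i => p.1.1.orderEmbOfFin p.1.2 (p.2 i)) ?_ _ _ ?_ ?_
  · rintro ⟨⟨S, hS⟩, σ⟩ ⟨⟨T, hT⟩, τ⟩ h
    have hr : ∀ (S : Finset (Fin N)) (hS : S.card = k) (σ : Equiv.Perm (Fin k)),
        Finset.univ.image (fun i => S.orderEmbOfFin hS (σ i)) = S := by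
      intro S hS σ
      ext x
      constructor
      · intro hx
        obtain ⟨i, -, rfl⟩ := Finset.mem_image.1 hx
        exact Finset.orderEmbOfFin_mem _ _ _
      · intro hx
        have : x ∈ Set.range (S.orderEmbOfFin hS) := by
          rw [Finset.range_orderEmbOfFin]; exact hx
        obtain ⟨i, rfl⟩ := this
        exact Finset.mem_image.2 ⟨σ.symm i, Finset.mem_univ _, by simp⟩
    have hST : S = T := by
      rw [← hr S hS σ, ← hr T hT τ]
      exact congrArg (fun f => Finset.univ.image f) h
    subst hST
    have : σ = τ := Equiv.ext fun i => by simpa using congrFun h i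
    rw [this]
  · intro f hf
    by_cases hinj : Function.Injective f
    · exfalso
      apply hf
      have hc : (Finset.univ.image f).card = k := by
        rw [Finset.card_image_of_injective _ hinj]; simp
      have hex : ∀ i, ∃ s, (Finset.univ.image f).orderEmbOfFin hc s = f i := by
        intro i
        have : f i ∈ Set.range ((Finset.univ.image f).orderEmbOfFin hc) := by
          rw [Finset.range_orderEmbOfFin]; simp
        exact this
      choose s hs using hex
      have hsi : Function.Injective s := by
        intro a b hab
        apply hinj
        rw [← hs a, ← hs b, hab]
      refine ⟨⟨⟨Finset.univ.image f, hc⟩, Equiv.ofBijective s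
        (Finite.injective_iff_bijective.1 hsi)⟩, ?_⟩
      funext i
      exact hs i
    · rw [Φ.map_eq_zero_of_not_injective, mul_zero]
      intro h
      exact hinj fun a b hab => h (by simp [hab])
  · intro p; rfl

/-- The determinant of the `K × K` matrix whose rows are the first `K` vectors of the list `L`,
each truncated to its first `K` coordinates (missing rows are zero). -/
def detK (K : ℕ) (L : List (ℕ → ℂ)) : ℂ :=
  Matrix.det (Matrix.of fun r c : Fin K => L.getD r 0 c)

/-- The coordinates of `v` in the positions of `S`, listed in increasing order and continued
by zeros. -/
def res {N : ℕ} (S : Finset (Fin N)) (v : Fin N → ℂ) : ℕ → ℂ :=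
  fun b => (S.sort.map v).getD b 0

theorem res_of_lt {N k : ℕ} (S : Finset (Fin N)) (hS : S.card = k) (v : Fin N → ℂ) (b : Fin k) :
    res S v b = v (S.orderEmbOfFin hS b) := by
  have hb : (b : ℕ) < S.sort.length := by simp [hS]
  simp [res, List.getD_eq_getElem?_getD, List.getElem?_eq_getElem hb, Finset.orderEmbOfFin_apply]

theorem headMatrix_update {K k : ℕ} (hk : k ≤ K) (B : List (ℕ → ℂ)) [DecidableEq (Fin k)]
    (v : Fin k → (ℕ → ℂ)) (a : Fin k) (z : ℕ → ℂ) :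
    (Matrix.of fun r c : Fin K =>
        if h : (r : ℕ) < k then Function.update v a z ⟨r, h⟩ c else B.getD (r - k) 0 c)
      = Matrix.updateRow (Matrix.of fun r c : Fin K =>
            if h : (r : ℕ) < k then v ⟨r, h⟩ c else B.getD (r - k) 0 c)
            (Fin.castLE hk a) (fun c => z c) := by
  ext r c
  by_cases hr : r = Fin.castLE hk a
  · subst hr; simp
  · rw [Matrix.updateRow_ne hr]
    simp only [Matrix.of_apply]
    split_ifs with h
    · rw [Function.update_of_ne]
      rintro rfl
      exact hr (Fin.ext rfl)
    · rfl

/-- The determinant as an alternating function of its first `k` rows, the remaining rows being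
taken from the list `B`. -/
def detHead (K k : ℕ) (hk : k ≤ K) (B : List (ℕ → ℂ)) : AlternatingMap ℂ (ℕ → ℂ) ℂ (Fin k) where
  toFun v := Matrix.det (Matrix.of fun r c : Fin K =>
    if h : (r : ℕ) < k then v ⟨r, h⟩ c else B.getD (r - k) 0 c)
  map_update_add' := by
    intro inst v a x y
    rw [headMatrix_update hk, headMatrix_update hk, headMatrix_update hk]
    exact Matrix.det_updateRow_add _ _ _ _
  map_update_smul' := by
    intro inst v a t x
    rw [headMatrix_update hk, headMatrix_update hk]
    exact Matrix.det_updateRow_smul _ _ _ _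
  map_eq_zero_of_eq' := by
    intro v a b hab hne
    refine Matrix.det_zero_of_row_eq (i := Fin.castLE hk a) (j := Fin.castLE hk b) ?_ ?_
    · intro h; exact hne (Fin.castLE_injective hk h)
    · ext c; simp [hab]

theorem detHead_eq {K k : ℕ} (hk : k ≤ K) (B L : List (ℕ → ℂ)) (hL : L.length = k)
    (v : Fin k → (ℕ → ℂ)) (hv : ∀ a : Fin k, L.getD a 0 = v a) :
    detHead K k hk B v = detK K (L ++ B) := by
  change Matrix.det _ = Matrix.det _
  congr 1
  ext r c
  simp only [Matrix.of_apply]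
  split_ifs with h
  · rw [List.getD_append _ _ _ _ (by omega), ← hv]
  · rw [List.getD_append_right _ _ _ _ (by omega), hL]

/-- **Cauchy–Binet** for a list of rows of which the first ones are combinations of the `w b`. -/
theorem detK_cauchyBinet {N : ℕ} (K : ℕ) (L : List (Fin N → ℂ)) (hK : L.length ≤ K)
    (B : List (ℕ → ℂ)) (w : Fin N → (ℕ → ℂ)) :
    detK K (L.map (fun v => ∑ b, v b • w b) ++ B)
      = ∑ S ∈ (Finset.univ : Finset (Fin N)).powersetCard L.length,
          detK L.length (L.map (res S)) * detK K (S.sort.map w ++ B) := by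
  rw [← detHead_eq hK B _ (by simp) (fun a => ∑ b, L.get a b • w b)
    (by intro a; simp [List.getD_eq_getElem?_getD])]
  rw [alternating_cauchyBinet]
  rw [Finset.sum_subtype (p := fun S : Finset (Fin N) => S.card = L.length) _ (by simp)]
  refine Finset.sum_congr rfl ?_
  rintro ⟨S, hS⟩ -
  congr 1
  · unfold detK
    congr 1
    ext a b
    simp [← res_of_lt, List.getD_eq_getElem?_getD]
  · refine detHead_eq hK B _ (by simp [hS]) _ ?_
    intro a
    have hb : (a : ℕ) < S.sort.length := by simp [hS]
    simp [List.getD_eq_getElem?_getD, List.getElem?_eq_getElem hb, Finset.orderEmbOfFin_apply]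

theorem minor_eq_detK {N : ℕ} (U : Matrix (Fin N) (Fin N) ℂ) (R C : Finset (Fin N))
    (h : C.card = R.card) :
    minor U R C = detK R.card (R.sort.map fun r => res C (U r)) := by
  rw [minor, dif_pos h]
  unfold detK
  congr 1
  ext a b
  have ha : (a : ℕ) < R.sort.length := by simp
  simp only [Matrix.of_apply, List.getD_eq_getElem?_getD, List.getElem?_map,
    List.getElem?_eq_getElem ha, Option.map_some, Option.getD_some]
  rw [res_of_lt C h]
  simp [Finset.orderEmbOfFin_apply]

/-! ### One summation in `g_{ij}(U)` -/

theorem res_apply {N : ℕ} (S : Finset (Fin N)) (v : Fin N → ℂ) (b : ℕ) :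
    res S v b = if h : b < S.card then v (S.orderEmbOfFin rfl ⟨b, h⟩) else 0 := by
  split_ifs with h
  · exact res_of_lt S rfl v ⟨b, h⟩
  · simp [res, List.getD_eq_getElem?_getD, not_lt.1 h]

theorem res_sum {N : ℕ} {ι : Type*} [Fintype ι] (S : Finset (Fin N)) (t : ι → ℂ)
    (f : ι → Fin N → ℂ) : res S (∑ b, t b • f b) = ∑ b, t b • res S (f b) := by
  funext c
  simp only [res_apply, Finset.sum_apply, Pi.smul_apply]
  split_ifs <;> simp

theorem detK_eq_zero_of_getD_eq {K : ℕ} (L : List (ℕ → ℂ)) {a b : ℕ} (ha : a < K) (hb : b < K)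
    (hne : a ≠ b) (h : L.getD a 0 = L.getD b 0) : detK K L = 0 := by
  refine Matrix.det_zero_of_row_eq (i := ⟨a, ha⟩) (j := ⟨b, hb⟩) (by simpa using hne) ?_
  funext c
  change L.getD a 0 c = L.getD b 0 c
  rw [h]

theorem detK_eq_zero_of_getD_eq_zero {K : ℕ} (L : List (ℕ → ℂ)) {a : ℕ} (ha : a < K)
    (h : L.getD a 0 = 0) : detK K L = 0 := by
  refine Matrix.det_eq_zero_of_row_eq_zero (⟨a, ha⟩ : Fin K) fun c => ?_
  change L.getD a 0 c = 0
  rw [h]; rfl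

/-- The shift `e_a ↦ e_{a-1}`, `e_0 ↦ 0` on row vectors. -/
def gam {N : ℕ} (v : Fin N → ℂ) : Fin N → ℂ :=
  fun c => if h : (c : ℕ) + 1 < N then v ⟨c + 1, h⟩ else 0

/-- The map `a ↦ a - 1` on indices (truncated at `0`), whose image is `shiftDown`. -/
def predF {N : ℕ} (x : Fin N) : Fin N :=
  ⟨(x:ℕ) - 1, lt_of_le_of_lt (Nat.sub_le _ _) x.isLt⟩

theorem sum_gam_smul {M : ℕ} {E : Type*} [AddCommGroup E] [Module ℂ E] (v : Fin (M+1) → ℂ)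
    (f : Fin (M+1) → E) :
    ∑ c, gam v c • f c = ∑ b, v b • (if (b : ℕ) = 0 then 0 else f (predF b)) := by
  rw [Fin.sum_univ_castSucc, Fin.sum_univ_succ]
  simp [gam, predF]
  rfl

theorem sort_shiftDown_union {N b : ℕ} (I : Finset (Fin N)) (h1 : ∀ x ∈ I, 1 ≤ (x : ℕ))
    (hd : Disjoint (shiftDown I) (segGe N b)) :
    (shiftDown I ∪ segGe N b).sort = I.sort.map predF ++ (segGe N b).sort := by
  classical
  have hlt : ∀ x ∈ I, (x : ℕ) - 1 < b := by
    intro x hx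
    by_contra hc
    have h1 : predF x ∈ shiftDown I := Finset.mem_image.2 ⟨x, hx, rfl⟩
    have h2 : predF x ∈ segGe N b := by
      simp only [segGe, Finset.mem_filter, Finset.mem_univ, true_and, predF]; omega
    exact Finset.disjoint_left.1 hd h1 h2
  have hpw : (I.sort.map predF ++ (segGe N b).sort).Pairwise (· < ·) := by
    rw [List.pairwise_append]
    refine ⟨?_, (Finset.sortedLT_sort _).pairwise, ?_⟩
    · rw [List.pairwise_map]
      refine List.Pairwise.imp_of_mem ?_ (Finset.sortedLT_sort I).pairwise
      intro x y hx hy hxy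
      have := h1 x (by simpa using hx)
      have h3 : (x : ℕ) < y := hxy
      change (x : ℕ) - 1 < (y : ℕ) - 1
      omega
    · intro x hx y hy
      obtain ⟨z, hz, rfl⟩ := List.mem_map.1 hx
      have h2 := hlt z (by simpa using hz)
      have h3 : b ≤ (y : ℕ) := by simpa [segGe] using hy
      change (z : ℕ) - 1 < (y : ℕ)
      omega
  have hset : (I.sort.map predF ++ (segGe N b).sort).toFinset = shiftDown I ∪ segGe N b := by
    ext x
    simp only [List.mem_toFinset, List.mem_append, List.mem_map, Finset.mem_sort,
      Finset.mem_union, shiftDown, Finset.mem_image]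
    rfl
  rw [← hset]
  exact (List.toFinset_sort (· ≤ ·) (hpw.imp (fun h => ne_of_lt h))).2 (hpw.imp le_of_lt)

theorem card_shiftDown_union {N b : ℕ} (I : Finset (Fin N)) (h1 : ∀ x ∈ I, 1 ≤ (x : ℕ))
    (hd : Disjoint (shiftDown I) (segGe N b)) :
    (shiftDown I ∪ segGe N b).card = I.card + (segGe N b).card := by
  rw [← Finset.length_sort (· ≤ ·), sort_shiftDown_union I h1 hd]
  simp

/-- One summation over an index set `I` in the definition of `g_{ij}(U)`, as an instance of
Cauchy–Binet; the index sets excluded by the conditions contribute `0`. -/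
theorem minor_step {M : ℕ} (U : Matrix (Fin (M+1)) (Fin (M+1)) ℂ) (L : List (Fin (M+1) → ℂ))
    (b : ℕ) (C : Finset (Fin (M+1))) (hC : C.card = L.length + (segGe (M+1) b).card) :
    ∑ I ∈ Finset.univ.filter (fun I : Finset (Fin (M+1)) => (∀ x ∈ I, 1 ≤ (x:ℕ)) ∧
        I.card = L.length ∧ Disjoint (shiftDown I) (segGe (M+1) b)),
      detK L.length (L.map (res I)) * minor U (shiftDown I ∪ segGe (M+1) b) C
      = detK C.card ((L.map (fun v => gam v ᵥ* U) ++ (segGe (M+1) b).sort.map U.row).map (res C)) := by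
  have hmap : (L.map (fun v => gam v ᵥ* U) ++ (segGe (M+1) b).sort.map U.row).map (res C)
      = L.map (fun v => ∑ a : Fin (M+1), v a • (if (a : ℕ) = 0 then 0 else res C (U (predF a))))
        ++ (segGe (M+1) b).sort.map (fun r => res C (U r)) := by
    rw [List.map_append, List.map_map, List.map_map]
    refine congrArg₂ _ (List.map_congr_left fun v _ => ?_) rfl
    change res C (gam v ᵥ* U) = _
    rw [← sum_gam_smul v (fun a => res C (U a))]
    refine (congrArg (res C) ?_).trans (res_sum C (gam v) U.row)
    funext c
    simp [Matrix.vecMul, dotProduct, Matrix.row]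
  rw [hmap, detK_cauchyBinet C.card L (by omega)]
  symm
  refine (Finset.sum_subset_zero_on_sdiff ?_ ?_ ?_).symm
  · intro I hI
    simp only [Finset.mem_filter, Finset.mem_univ, true_and] at hI
    simp [hI.2.1]
  · intro I hI
    simp only [Finset.mem_sdiff, Finset.mem_powersetCard, Finset.subset_univ, true_and,
      Finset.mem_filter, Finset.mem_univ] at hI
    obtain ⟨hcard, hI⟩ := hI
    have hlen : I.sort.length = L.length := by simp [hcard]
    apply mul_eq_zero_of_right
    by_cases h1 : ∀ x ∈ I, 1 ≤ (x:ℕ)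
    · have hnd : ¬ Disjoint (shiftDown I) (segGe (M+1) b) := fun h => hI ⟨h1, hcard, h⟩
      obtain ⟨y, hy, hy'⟩ := Finset.not_disjoint_iff.1 hnd
      obtain ⟨x, hx, hxy⟩ := Finset.mem_image.1 hy
      obtain ⟨s, hs, hsx⟩ := List.getElem_of_mem ((Finset.mem_sort (· ≤ ·)).2 hx)
      obtain ⟨t, ht, hty⟩ := List.getElem_of_mem ((Finset.mem_sort (· ≤ ·)).2 hy')
      have ht' : t < (segGe (M+1) b).card := by simpa using ht
      refine detK_eq_zero_of_getD_eq _ (a := s) (b := L.length + t) (by omega) (by omega)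
        (by omega) ?_
      rw [List.getD_append _ _ _ _ (by simpa using hs),
        List.getD_append_right _ _ _ _ (by simp [hcard])]
      have hx1 := h1 x hx
      have hx0 : ¬ x = 0 := by rintro rfl; simp at hx1
      have hp : predF x = y := hxy
      simp [List.getD_eq_getElem?_getD, List.getElem?_eq_getElem hs, hsx, hcard,
        List.getElem?_eq_getElem ht, hty, hx0, hp]
    · push Not at h1
      obtain ⟨x, hx, hx0⟩ := h1
      obtain ⟨s, hs, hsx⟩ := List.getElem_of_mem ((Finset.mem_sort (· ≤ ·)).2 hx)
      refine detK_eq_zero_of_getD_eq_zero _ (a := s) (by omega) ?_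
      rw [List.getD_append _ _ _ _ (by simpa using hs)]
      have hx0 : x = 0 := Fin.ext (by simpa using hx0)
      simp [List.getD_eq_getElem?_getD, List.getElem?_eq_getElem hs, hsx, hx0]
  · intro I hI
    simp only [Finset.mem_filter, Finset.mem_univ, true_and] at hI
    obtain ⟨h1, hcard, hd⟩ := hI
    have hc := card_shiftDown_union I h1 hd
    rw [minor_eq_detK _ _ _ (by omega), sort_shiftDown_union I h1 hd, hc, hcard, ← hC,
      List.map_append, List.map_map]
    congr 3
    refine List.map_congr_left fun x hx => ?_
    have := h1 x (by simpa using hx)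
    simp [show (x : ℕ) ≠ 0 by omega]

/-! ### Iterated Cauchy–Binet -/

theorem sort_segGe_map_val (N a : ℕ) :
    (segGe N a).sort.map (fun x : Fin N => (x : ℕ)) = List.range' a (N - a) := by
  have h : (segGe N a).map Fin.valEmbedding = (List.range' a (N - a)).toFinset := by
    ext x
    simp only [segGe, Finset.mem_map, Finset.mem_filter, Finset.mem_univ, true_and,
      Fin.valEmbedding_apply, List.mem_toFinset, List.mem_range'_1]
    constructor
    · rintro ⟨y, hy, rfl⟩; omega
    · intro hx; exact ⟨⟨x, by omega⟩, hx.1, rfl⟩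
  have h2 := Finset.map_sort (r := (· ≤ ·)) (r' := (· ≤ ·)) Fin.valEmbedding (segGe N a)
    (fun a _ b _ => Iff.rfl)
  have h3 : (segGe N a).sort.map (fun x : Fin N => (x : ℕ))
      = ((segGe N a).map Fin.valEmbedding).sort := h2
  rw [h3, h]
  exact (List.toFinset_sort (· ≤ ·) (List.nodup_range' ..)).2
    ((List.pairwise_lt_range' ..).imp le_of_lt)

theorem card_segGe (N a : ℕ) : (segGe N a).card = N - a := by
  have := congrArg List.length (sort_segGe_map_val N a)
  simpa using this

theorem card_seg (N b : ℕ) (hb : b < N) : (seg N 1 b).card = b := by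
  have h : (seg N 1 b).map Fin.valEmbedding = Finset.Icc 1 b := by
    ext x
    simp only [seg, Finset.mem_map, Finset.mem_filter, Finset.mem_univ, true_and,
      Fin.valEmbedding_apply, Finset.mem_Icc]
    constructor
    · rintro ⟨y, hy, rfl⟩; exact hy
    · intro hx; exact ⟨⟨x, by omega⟩, hx, rfl⟩
  rw [← Finset.card_map Fin.valEmbedding, h]
  simp

theorem segGe_last (M : ℕ) : segGe (M+1) M = {Fin.last M} := by
  ext x
  simp only [segGe, Finset.mem_filter, Finset.mem_univ, true_and, Finset.mem_singleton,
    Fin.ext_iff, Fin.val_last]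
  omega

theorem disjoint_shiftDown_last {M : ℕ} (I : Finset (Fin (M+1))) (h : ∀ x ∈ I, 1 ≤ (x : ℕ)) :
    Disjoint (shiftDown I) (segGe (M+1) M) := by
  rw [segGe_last, Finset.disjoint_singleton_right]
  intro hx
  obtain ⟨y, hy, hyx⟩ := Finset.mem_image.1 hx
  have h1 := h y hy
  have h2 : (y : ℕ) - 1 = M := by simpa [Fin.ext_iff] using hyx
  omega

theorem seg_one_last (M : ℕ) : seg (M+1) 1 M = segGe (M+1) 1 := by
  ext x
  simp only [seg, segGe, Finset.mem_filter, Finset.mem_univ, true_and]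
  omega

/-- Rows obtained from the rows `L` by `v ↦ v γ U`, followed by the rows `b, b+1, …` of `U`. -/
def stepL {M : ℕ} (U : Matrix (Fin (M+1)) (Fin (M+1)) ℂ) (b : ℕ) (L : List (Fin (M+1) → ℂ)) :
    List (Fin (M+1) → ℂ) :=
  L.map (fun v => gam v ᵥ* U) ++ (segGe (M+1) b).sort.map U.row

/-- `p`-fold iteration of `stepL` with tails starting at `τ 0, …, τ (p-1)`. -/
def chainL {M : ℕ} (U : Matrix (Fin (M+1)) (Fin (M+1)) ℂ) :
    ℕ → (ℕ → ℕ) → List (Fin (M+1) → ℂ) → List (Fin (M+1) → ℂ)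
  | 0, _, L => L
  | p+1, τ, L => chainL U p (fun t => τ (t+1)) (stepL U (τ 0) L)

theorem extT_cons_zero {N p : ℕ} (I : Finset (Fin N)) (T : Fin p → Finset (Fin N)) :
    extT (Fin.cons (α := fun _ => Finset (Fin N)) I T) 0 = I := by
  simp [extT]

theorem extT_cons_succ {N p : ℕ} (I : Finset (Fin N)) (T : Fin p → Finset (Fin N)) (t : ℕ) :
    extT (Fin.cons (α := fun _ => Finset (Fin N)) I T) (t+1) = extT T t := by
  unfold extT
  by_cases h : t < p
  · rw [dif_pos h, dif_pos (by omega)]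
    exact Fin.cons_succ (α := fun _ => Finset (Fin N)) I T ⟨t, h⟩
  · rw [dif_neg h, dif_neg (by omega)]

/-- Iterated Cauchy–Binet: the sum over all tuples of index sets is a single determinant. -/
theorem chain_sum {M : ℕ} (U : Matrix (Fin (M+1)) (Fin (M+1)) ℂ) (p : ℕ) :
    ∀ (L : List (Fin (M+1) → ℂ)) (τ κ : ℕ → ℕ), κ 0 = L.length →
      (∀ t, t < p → κ (t+1) = κ t + (segGe (M+1) (τ t)).card) → κ p = M →
      ∑ T ∈ Finset.univ.filter (fun T : Fin p → Finset (Fin (M+1)) =>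
          ∀ t, (∀ x ∈ T t, 1 ≤ (x:ℕ)) ∧ (T t).card = κ t ∧
            Disjoint (shiftDown (T t)) (segGe (M+1) (τ t))),
        detK L.length (L.map (res (extT T 0)))
          * ∏ t ∈ Finset.range p,
              minor U (shiftDown (extT T t) ∪ segGe (M+1) (τ t)) (extT T (t+1))
        = detK M ((chainL U p τ L).map (res (segGe (M+1) 1))) := by
  induction p with
  | zero =>
    intro L τ κ h0 _ hp
    have hL : L.length = M := by omega
    rw [Finset.filter_true_of_mem (by intro T _ t; exact t.elim0)]
    simp [extT, chainL, hL]
  | succ p ih =>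
    intro L τ κ h0 hs hp
    have hlen : (stepL U (τ 0) L).length = κ 1 := by
      rw [hs 0 (by omega), h0]; simp [stepL]
    have ih' := ih (stepL U (τ 0) L) (fun t => τ (t+1)) (fun t => κ (t+1)) hlen.symm
      (fun t ht => hs (t+1) (by omega)) hp
    rw [chainL, ← ih']
    have hsplit : ∀ F : (Fin (p+1) → Finset (Fin (M+1))) → ℂ,
        ∑ T ∈ Finset.univ.filter (fun T : Fin (p+1) → Finset (Fin (M+1)) =>
          ∀ t, (∀ x ∈ T t, 1 ≤ (x:ℕ)) ∧ (T t).card = κ t ∧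
            Disjoint (shiftDown (T t)) (segGe (M+1) (τ t))), F T
        = ∑ T ∈ Finset.univ.filter (fun T : Fin p → Finset (Fin (M+1)) =>
          ∀ t, (∀ x ∈ T t, 1 ≤ (x:ℕ)) ∧ (T t).card = κ (t+1) ∧
            Disjoint (shiftDown (T t)) (segGe (M+1) (τ (t+1)))),
          ∑ I ∈ Finset.univ.filter (fun I : Finset (Fin (M+1)) => (∀ x ∈ I, 1 ≤ (x:ℕ)) ∧
            I.card = L.length ∧ Disjoint (shiftDown I) (segGe (M+1) (τ 0))),
            F (Fin.cons (α := fun _ => Finset (Fin (M+1))) I T) := by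
      intro F
      rw [← Finset.sum_product']
      refine Finset.sum_nbij' (fun T => (Fin.tail T, T 0))
        (fun x => Fin.cons (α := fun _ => Finset (Fin (M+1))) x.2 x.1) ?_ ?_ ?_ ?_ ?_
      · intro T hT
        simp only [Finset.mem_filter, Finset.mem_univ, true_and, Finset.mem_product] at hT ⊢
        exact ⟨fun t => hT t.succ, by simpa [h0] using hT 0⟩
      · intro x hx
        simp only [Finset.mem_filter, Finset.mem_univ, true_and, Finset.mem_product] at hx ⊢
        intro t
        refine Fin.cases ?_ (fun s => ?_) t
        · simpa [h0] using hx.2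
        · simpa using hx.1 s
      · intro T _; exact Fin.cons_self_tail T
      · intro x _; simp
      · intro T _; exact congrArg F (Fin.cons_self_tail T).symm
    rw [hsplit]
    refine Finset.sum_congr rfl fun T hT => ?_
    simp only [Finset.mem_filter, Finset.mem_univ, true_and] at hT
    have hC : (extT T 0).card = L.length + (segGe (M+1) (τ 0)).card := by
      rw [← h0, ← hs 0 (by omega)]
      unfold extT
      split_ifs with h
      · exact (hT ⟨0, h⟩).2.1
      · have : p = 0 := by omega
        subst this
        rw [card_segGe]
        simpa using hp.symm
    have hC' : (stepL U (τ 0) L).length = (extT T 0).card := by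
      rw [hC]; simp [stepL]
    rw [hC', stepL, ← minor_step U L (τ 0) (extT T 0) hC, Finset.sum_mul]
    refine Finset.sum_congr rfl fun I _ => ?_
    rw [Finset.prod_range_succ', extT_cons_zero]
    simp only [extT_cons_succ]
    ring

/-- Completing a minor to a full determinant: the `b` columns `1, …, b` become the columns
`0, …, b-1` after the shift, and the remaining columns are filled with unit rows. -/
theorem detK_complete {M : ℕ} (L : List (Fin (M+1) → ℂ)) (b : ℕ) (hb : b ≤ M)
    (hL : L.length = b) :
    detK L.length (L.map (res (seg (M+1) 1 b)))
      = detK (M+1) ((L.map gam ++ (segGe (M+1) b).sort.map (fun a => Pi.single a 1)).map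
          (res Finset.univ)) := by
  have h := minor_step (1 : Matrix (Fin (M+1)) (Fin (M+1)) ℂ) L b Finset.univ
    (by rw [card_segGe]; simp; omega)
  have hflt : Finset.univ.filter (fun I : Finset (Fin (M+1)) => (∀ x ∈ I, 1 ≤ (x:ℕ)) ∧
        I.card = L.length ∧ Disjoint (shiftDown I) (segGe (M+1) b)) = {seg (M+1) 1 b} := by
    ext I
    simp only [Finset.mem_filter, Finset.mem_univ, true_and, Finset.mem_singleton]
    constructor
    · rintro ⟨h1, hc, hd⟩
      refine Finset.eq_of_subset_of_card_le ?_ (by rw [card_seg _ _ (by omega), hc, hL])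
      intro x hx
      have h2 : predF x ∉ segGe (M+1) b :=
        Finset.disjoint_left.1 hd (Finset.mem_image.2 ⟨x, hx, rfl⟩)
      simp only [segGe, predF, Finset.mem_filter, Finset.mem_univ, true_and, not_le] at h2
      have := h1 x hx
      simp only [seg, Finset.mem_filter, Finset.mem_univ, true_and]
      omega
    · rintro rfl
      refine ⟨?_, by rw [card_seg _ _ (by omega), hL], ?_⟩
      · intro x hx
        simp only [seg, Finset.mem_filter, Finset.mem_univ, true_and] at hx
        exact hx.1
      · rw [Finset.disjoint_left]
        intro y hy hy'
        obtain ⟨x, hx, rfl⟩ := Finset.mem_image.1 hy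
        simp only [seg, segGe, Finset.mem_filter, Finset.mem_univ, true_and] at hx hy'
        omega
  have hmem : seg (M+1) 1 b ∈ Finset.univ.filter (fun I : Finset (Fin (M+1)) =>
      (∀ x ∈ I, 1 ≤ (x:ℕ)) ∧ I.card = L.length ∧ Disjoint (shiftDown I) (segGe (M+1) b)) := by
    rw [hflt]; simp
  simp only [Finset.mem_filter, Finset.mem_univ, true_and] at hmem
  rw [hflt, Finset.sum_singleton] at h
  have huniv : shiftDown (seg (M+1) 1 b) ∪ segGe (M+1) b = Finset.univ := by
    apply Finset.eq_univ_of_card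
    rw [card_shiftDown_union _ hmem.1 hmem.2.2, hmem.2.1, card_segGe, hL]
    simp; omega
  have hone : minor (1 : Matrix (Fin (M+1)) (Fin (M+1)) ℂ) Finset.univ Finset.univ = 1 := by
    rw [minor, dif_pos rfl]
    convert Matrix.det_one (n := Fin (Finset.univ : Finset (Fin (M+1))).card) (R := ℂ) using 2
    ext a b
    rw [Matrix.of_apply, Matrix.one_apply, Matrix.one_apply]
    refine if_congr ?_ rfl rfl
    rw [Subtype.coe_inj]
    exact (OrderIso.injective _).eq_iff
  rw [huniv, hone, mul_one] at h
  rw [h]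
  simp only [Matrix.vecMul_one, Finset.card_univ, Fintype.card_fin]
  congr 4
  funext a c
  simp [Matrix.row, Matrix.one_apply, Pi.single_apply, eq_comm]

/-! ### `g_{ij}(U)` as a single determinant -/

/-- The linear map `v ↦ v U γ` on row vectors. -/
def stepV {M : ℕ} (U : Matrix (Fin (M+1)) (Fin (M+1)) ℂ) (v : Fin (M+1) → ℂ) :
    Fin (M+1) → ℂ := gam (v ᵥ* U)

theorem map_gam_rows {M : ℕ} (U : Matrix (Fin (M+1)) (Fin (M+1)) ℂ) (l : List (Fin (M+1))) :
    (l.map U.row).map gam = l.map (fun a => stepV U (Pi.single a 1)) := by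
  rw [List.map_map]
  refine List.map_congr_left fun a _ => ?_
  simp [stepV]

theorem stepL_map_gam {M : ℕ} (U : Matrix (Fin (M+1)) (Fin (M+1)) ℂ) (b : ℕ)
    (L : List (Fin (M+1) → ℂ)) :
    (stepL U b L).map gam = (L.map gam).map (stepV U)
      ++ (segGe (M+1) b).sort.map (fun a => stepV U (Pi.single a 1)) := by
  rw [stepL, List.map_append, map_gam_rows, List.map_map, List.map_map]
  rfl

theorem chainL_map_gam {M : ℕ} (U : Matrix (Fin (M+1)) (Fin (M+1)) ℂ) (p : ℕ) :
    ∀ L : List (Fin (M+1) → ℂ),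
      (chainL U p (fun _ => M) L).map gam ++ [Pi.single (Fin.last M) 1]
        = (L.map gam).map (stepV U)^[p]
          ++ (List.range (p+1)).reverse.map
              (fun k => (stepV U)^[k] (Pi.single (Fin.last M) 1)) := by
  induction p with
  | zero => intro L; simp [chainL]
  | succ p ih =>
    intro L
    rw [chainL, ih, stepL_map_gam, segGe_last, List.range_succ (n := p + 1)]
    simp [Function.iterate_succ]

theorem length_chainL {M : ℕ} (U : Matrix (Fin (M+1)) (Fin (M+1)) ℂ) (p : ℕ) :
    ∀ L : List (Fin (M+1) → ℂ), (chainL U p (fun _ => M) L).length = L.length + p := by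
  induction p with
  | zero => intro L; rfl
  | succ p ih =>
    intro L
    rw [chainL, ih]
    simp [stepL, segGe_last]; omega

/-- The list of rows `e_a V^{j-1}` (`a ≥ i-1`), `e_a V^{j-2}` (`a ≥ M+j-i`) and `e_M V^k`
(`k = j-3, …, 0`), where `V = Uγ`; indices are 0-based. -/
def rowsD {M : ℕ} (i j : ℕ) (U : Matrix (Fin (M+1)) (Fin (M+1)) ℂ) : List (Fin (M+1) → ℂ) :=
  (segGe (M+1) (i-1)).sort.map (fun a => (stepV U)^[j-1] (Pi.single a 1))
    ++ ((segGe (M+1) (M+j-i)).sort.map (fun a => (stepV U)^[j-2] (Pi.single a 1))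
      ++ (List.range (j-2)).reverse.map (fun k => (stepV U)^[k] (Pi.single (Fin.last M) 1)))

/-- `g_{ij}(U)` is a single determinant. -/
theorem gU_eq_detK {M : ℕ} (U : Matrix (Fin (M+1)) (Fin (M+1)) ℂ) (i j : ℕ) (hj : 2 ≤ j)
    (hji : j ≤ i) (hi : i ≤ M+1) :
    gU i j U = detK (M+1) ((rowsD i j U).map (res Finset.univ)) := by
  have hQ : (segGe (M+1) (i-1)).card = M+2-i := by rw [card_segGe]; omega
  by_cases h3 : 3 ≤ j
  · obtain ⟨p, rfl⟩ : ∃ p, j = p + 3 := ⟨j - 3, by omega⟩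
    set L : List (Fin (M+1) → ℂ) := (segGe (M+1) (i-1)).sort.map U.row with hLdef
    have hL : L.length = M+2-i := by rw [hLdef]; simp [hQ]
    set τ : ℕ → ℕ := fun t => if t = 0 then M+(p+3)-i else M with hτ
    set κ : ℕ → ℕ := fun t => if t = 0 then M+2-i else M+2-(p+3)+t with hκ
    have hch := chain_sum U (p+1) L τ κ (by simp [hκ, hL])
      (by
        intro t ht
        rw [card_segGe]
        simp only [hκ, hτ]
        split_ifs <;> first | contradiction | omega)
      (by simp only [hκ]; rw [if_neg (by omega)]; omega)
    have hg : gU i (p+3) U = detK M ((chainL U (p+1) τ L).map (res (segGe (M+1) 1))) := by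
      rw [← hch, gU, dif_pos h3]
      change ∑ T ∈ Finset.univ.filter (fun T : Fin (p+1) → Finset (Fin (M+1)) => _), _ = _
      refine Finset.sum_congr ?_ ?_
      · ext T
        simp only [Finset.mem_filter, Finset.mem_univ, true_and]
        constructor
        · rintro ⟨h1, h2, h4⟩ t
          refine ⟨h1 t, h2 t, ?_⟩
          by_cases ht : (t : ℕ) = 0
          · have : t = ⟨0, by omega⟩ := Fin.ext ht
            rw [this]
            simpa [hτ] using h4
          · simp only [hτ, if_neg ht]
            exact disjoint_shiftDown_last _ (h1 t)
        · intro h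
          refine ⟨fun t => (h t).1, fun t => (h t).2.1, ?_⟩
          simpa [hτ] using (h 0).2.2
      · intro T hT
        simp only [Finset.mem_filter, Finset.mem_univ, true_and] at hT
        have e0 : extT T 0 = T ⟨0, by omega⟩ := by simp [extT]
        have hc := (hT 0).2.1
        have hc' : (T ⟨0, by omega⟩).card = M+2-i := by simpa [hκ] using hc
        rw [minor_eq_detK _ _ _ (by rw [hQ]; exact hc'), e0, mul_assoc]
        congr 1
        · rw [hL, hQ, hLdef, List.map_map]; rfl
        · rw [Finset.range_eq_Ico, Finset.prod_eq_prod_Ico_succ_bot (Nat.succ_pos p), e0]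
          congr 1
          refine Finset.prod_congr rfl fun t ht => ?_
          have : t ≠ 0 := by have := (Finset.mem_Ico.1 ht).1; omega
          simp only [hτ, if_neg this, segGe_last]
    have hlen : (chainL U (p+1) τ L).length = M := by
      rw [chainL]
      have : (fun t => τ (t+1)) = fun _ => M := by funext t; simp [hτ]
      rw [this, length_chainL]
      simp only [stepL, List.length_append, List.length_map, Finset.length_sort, card_segGe, hL, hτ]
      simp only [if_true]
      omega
    have hco := detK_complete (chainL U (p+1) τ L) M le_rfl hlen
    rw [seg_one_last, hlen] at hco
    rw [hg, hco]
    congr 2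
    rw [segGe_last, Finset.sort_singleton, List.map_singleton, chainL]
    have : (fun t => τ (t+1)) = fun _ => M := by funext t; simp [hτ]
    rw [this, chainL_map_gam, stepL_map_gam, hLdef, map_gam_rows, rowsD]
    simp only [List.map_append, List.map_map, List.append_assoc]
    rfl
  · have h2 : j = 2 := by omega
    subst h2
    rw [gU, dif_neg h3, minor_eq_detK _ _ _ (by rw [hQ, card_seg _ _ (by omega)])]
    have hco := detK_complete ((segGe (M+1) (i-1)).sort.map U.row) (M+2-i) (by omega)
      (by simp [hQ])
    rw [map_gam_rows] at hco
    simp only [List.length_map, Finset.length_sort, List.map_map] at hco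
    refine Eq.trans ?_ (hco.trans ?_)
    · rfl
    · simp [rowsD]

/-! ### Row operations -/

theorem detK_swap {K : ℕ} (A B : List (ℕ → ℂ)) (u v : ℕ → ℂ) (h : A.length + 1 < K) :
    detK K (A ++ u :: v :: B) = - detK K (A ++ v :: u :: B) := by
  set σ : Equiv.Perm (Fin K) :=
    Equiv.swap ⟨A.length, by omega⟩ ⟨A.length + 1, h⟩ with hσ
  have hp := Matrix.det_permute σ (Matrix.of fun r c : Fin K => (A ++ v :: u :: B).getD r 0 c)
  rw [hσ, Equiv.Perm.sign_swap (by simp [Fin.ext_iff]), ← hσ] at hp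
  have : detK K (A ++ u :: v :: B) = ((Matrix.of fun r c : Fin K =>
      (A ++ v :: u :: B).getD r 0 c).submatrix σ id).det := by
    unfold detK
    congr 1
    ext r c
    simp only [Matrix.of_apply, Matrix.submatrix_apply, id]
    by_cases h1 : r = ⟨A.length, by omega⟩
    · subst h1
      rw [hσ, Equiv.swap_apply_left, List.getD_append_right _ _ _ _ (by simp),
        List.getD_append_right _ _ _ _ (by simp)]
      simp
    by_cases h2 : r = ⟨A.length + 1, h⟩
    · subst h2
      rw [hσ, Equiv.swap_apply_right, List.getD_append_right _ _ _ _ (by simp),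
        List.getD_append_right _ _ _ _ (by simp)]
      simp
    rw [hσ, Equiv.swap_apply_of_ne_of_ne h1 h2]
    have h1' : (r : ℕ) ≠ A.length := fun h => h1 (Fin.ext h)
    have h2' : (r : ℕ) ≠ A.length + 1 := fun h => h2 (Fin.ext h)
    by_cases hr : (r : ℕ) < A.length
    · rw [List.getD_append _ _ _ _ hr, List.getD_append _ _ _ _ hr]
    · rw [List.getD_append_right _ _ _ _ (by omega), List.getD_append_right _ _ _ _ (by omega)]
      obtain ⟨d, hd⟩ : ∃ d, (r : ℕ) - A.length = d + 2 := ⟨(r : ℕ) - A.length - 2, by omega⟩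
      rw [hd]
      simp
  rw [this, hp]
  simp [detK]

theorem detK_move {K : ℕ} (B : List (ℕ → ℂ)) : ∀ (A C : List (ℕ → ℂ)) (u : ℕ → ℂ),
    A.length + B.length < K →
    detK K (A ++ u :: (B ++ C)) = (-1)^B.length * detK K (A ++ (B ++ u :: C)) := by
  induction B with
  | nil => intro A C u _; simp
  | cons v B ih =>
    intro A C u h
    simp only [List.length_cons] at h
    rw [List.cons_append, detK_swap _ _ _ _ (by omega)]
    have := ih (A ++ [v]) C u (by simp; omega)
    simp only [List.append_assoc, List.cons_append, List.nil_append] at this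
    rw [this, List.length_cons, pow_succ]
    simp

/-- Interchanging two adjacent blocks of rows. -/
theorem detK_moveBlock {K : ℕ} (P : List (ℕ → ℂ)) : ∀ (A B C : List (ℕ → ℂ)),
    A.length + P.length + B.length ≤ K →
    detK K (A ++ (P ++ (B ++ C)))
      = (-1)^(P.length * B.length) * detK K (A ++ (B ++ (P ++ C))) := by
  induction P with
  | nil => intro A B C _; simp
  | cons u P ih =>
    intro A B C h
    simp only [List.length_cons] at h
    have := ih (A ++ [u]) B C (by simp; omega)
    simp only [List.append_assoc, List.cons_append, List.nil_append] at this
    rw [List.cons_append, this, detK_move B A (P ++ C) u (by omega), List.length_cons]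
    simp only [List.cons_append]
    ring

theorem detK_row_eq_updateRow {K : ℕ} (A B : List (ℕ → ℂ)) (u : ℕ → ℂ) (h : A.length < K) :
    detK K (A ++ u :: B) = Matrix.det (Matrix.updateRow
      (Matrix.of fun r c : Fin K => (A ++ 0 :: B).getD r 0 c) ⟨A.length, h⟩ (fun c => u c)) := by
  unfold detK
  congr 1
  ext r c
  by_cases hr : r = ⟨A.length, h⟩
  · subst hr
    rw [Matrix.updateRow_self, Matrix.of_apply, List.getD_append_right _ _ _ _ (by simp)]
    simp
  · rw [Matrix.updateRow_ne hr]
    have hr' : (r : ℕ) ≠ A.length := fun h => hr (Fin.ext h)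
    simp only [Matrix.of_apply]
    by_cases h2 : (r : ℕ) < A.length
    · rw [List.getD_append _ _ _ _ h2, List.getD_append _ _ _ _ h2]
    · rw [List.getD_append_right _ _ _ _ (by omega), List.getD_append_right _ _ _ _ (by omega)]
      obtain ⟨d, hd⟩ : ∃ d, (r : ℕ) - A.length = d + 1 := ⟨(r : ℕ) - A.length - 1, by omega⟩
      rw [hd]
      simp

theorem detK_add {K : ℕ} (A B : List (ℕ → ℂ)) (u v : ℕ → ℂ) (h : A.length < K) :
    detK K (A ++ (u + v) :: B) = detK K (A ++ u :: B) + detK K (A ++ v :: B) := by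
  rw [detK_row_eq_updateRow A B _ h, detK_row_eq_updateRow A B _ h,
    detK_row_eq_updateRow A B _ h]
  exact Matrix.det_updateRow_add _ _ _ _

theorem detK_smul {K : ℕ} (A B : List (ℕ → ℂ)) (t : ℂ) (v : ℕ → ℂ) (h : A.length < K) :
    detK K (A ++ (t • v) :: B) = t * detK K (A ++ v :: B) := by
  rw [detK_row_eq_updateRow A B _ h, detK_row_eq_updateRow A B _ h]
  exact Matrix.det_updateRow_smul _ _ _ _

theorem detK_eq_zero_of_mem_span {K : ℕ} (A B : List (ℕ → ℂ)) (x : ℕ → ℂ)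
    (h : A.length + B.length < K) (hx : x ∈ Submodule.span ℂ {y | y ∈ B}) :
    detK K (A ++ x :: B) = 0 := by
  induction hx using Submodule.span_induction with
  | mem x hx =>
    obtain ⟨s, hs, hsx⟩ := List.getElem_of_mem hx
    refine detK_eq_zero_of_getD_eq _ (a := A.length) (b := A.length + (s + 1)) (by omega)
      (by omega) (by omega) ?_
    rw [List.getD_append_right _ _ _ _ le_rfl, List.getD_append_right _ _ _ _ (by omega)]
    simp [List.getElem?_eq_getElem hs, hsx]
  | zero =>
    refine detK_eq_zero_of_getD_eq_zero _ (a := A.length) (by omega) ?_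
    rw [List.getD_append_right _ _ _ _ le_rfl]
    simp
  | add x y _ _ hx hy => rw [detK_add _ _ _ _ (by omega), hx, hy, add_zero]
  | smul t x _ hx => rw [detK_smul _ _ _ _ (by omega), hx, mul_zero]

/-- `TriRel L L'`: the list `L'` arises from `L` by a unitriangular row transformation, each
vector being changed by a combination of later vectors of `L`. -/
inductive TriRel : List (ℕ → ℂ) → List (ℕ → ℂ) → Prop
  | refl (L : List (ℕ → ℂ)) : TriRel L L
  | cons {u u' : ℕ → ℂ} {L L' : List (ℕ → ℂ)} (h : u - u' ∈ Submodule.span ℂ {y | y ∈ L})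
      (hL : TriRel L L') : TriRel (u :: L) (u' :: L')

theorem TriRel.detK_eq {K : ℕ} {L L' : List (ℕ → ℂ)} (h : TriRel L L') :
    ∀ A : List (ℕ → ℂ), A.length + L.length ≤ K → detK K (A ++ L) = detK K (A ++ L') := by
  induction h with
  | refl L => intro A _; rfl
  | @cons u u' L L' h hL ih =>
    intro A hA
    simp only [List.length_cons] at hA
    have h1 : detK K (A ++ u :: L) = detK K (A ++ u' :: L) := by
      have : u = u' + (u - u') := by abel
      rw [this, detK_add _ _ _ _ (by omega), detK_eq_zero_of_mem_span A L _ (by omega) h, add_zero]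
    have h2 := ih (A ++ [u']) (by simp; omega)
    simp only [List.append_assoc, List.cons_append, List.nil_append] at h2
    rw [h1, h2]

theorem TriRel.map_append {ι : Type*} (l : List ι) (f f' : ι → ℕ → ℂ) {R R' : List (ℕ → ℂ)}
    (hR : TriRel R R') (h : ∀ a ∈ l, f a - f' a ∈ Submodule.span ℂ {y | y ∈ R}) :
    TriRel (l.map f ++ R) (l.map f' ++ R') := by
  induction l with
  | nil => exact hR
  | cons a l ih =>
    refine TriRel.cons ?_ (ih fun b hb => h b (by simp [hb]))
    refine Submodule.span_mono ?_ (h a (by simp))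
    intro y hy
    exact List.mem_append_right _ hy

theorem TriRel.range_reverse (s : ℕ) (f f' : ℕ → ℕ → ℂ) {R R' : List (ℕ → ℂ)}
    (hR : TriRel R R')
    (h : ∀ k < s, f k - f' k ∈ Submodule.span ℂ ({y | ∃ l < k, y = f l} ∪ {y | y ∈ R})) :
    TriRel ((List.range s).reverse.map f ++ R) ((List.range s).reverse.map f' ++ R') := by
  induction s with
  | zero => exact hR
  | succ s ih =>
    rw [List.range_succ, List.reverse_append]
    refine TriRel.cons ?_ (ih fun k hk => h k (by omega))
    refine Submodule.span_mono ?_ (h s (by omega))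
    rintro y (⟨l, hl, rfl⟩ | hy)
    · exact List.mem_append_left _ (List.mem_map.2 ⟨l, by simpa using hl, rfl⟩)
    · exact List.mem_append_right _ hy

/-! ### Shifted rows of `X` and the relation `U X_R = X_L` -/

/-- Row `a` of `X` (0-based) as a sequence, continued by zeros. -/
def rowv {m : ℕ} (X : Matrix (Fin (m+2)) (Fin (m+2)) ℂ) (a : ℕ) : ℕ → ℂ := fun c => ent X a c

/-- The shift of a sequence by `l` places to the right. -/
def shL (l : ℕ) : (ℕ → ℂ) →ₗ[ℂ] (ℕ → ℂ) where
  toFun f c := if l ≤ c then f (c - l) else 0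
  map_add' f g := by funext c; simp only [Pi.add_apply]; split_ifs <;> simp
  map_smul' t f := by funext c; simp only [Pi.smul_apply, RingHom.id_apply]; split_ifs <;> simp

theorem shL_apply (l : ℕ) (f : ℕ → ℂ) (c : ℕ) : shL l f c = if l ≤ c then f (c - l) else 0 := rfl

theorem shL_zero (f : ℕ → ℂ) : shL 0 f = f := by
  funext c; simp [shL_apply]

theorem shL_shL (l k : ℕ) (f : ℕ → ℂ) : shL l (shL k f) = shL (l + k) f := by
  funext c
  simp only [shL_apply]
  split_ifs <;> first | rfl | omega | (congr 1; omega)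

/-- The first row of `X`, shifted by `l`. -/
def xs {m : ℕ} (X : Matrix (Fin (m+2)) (Fin (m+2)) ℂ) (l : ℕ) : ℕ → ℂ := shL l (rowv X 0)

/-- Row `a + 1` of `X` (0-based), shifted by `l`; for `a = m` this is the last row. -/
def ys {m : ℕ} (X : Matrix (Fin (m+2)) (Fin (m+2)) ℂ) (l a : ℕ) : ℕ → ℂ := shL l (rowv X (a + 1))

/-- The combination of the rows of `X` below the first one with coefficients `v`. -/
def phi {m : ℕ} (X : Matrix (Fin (m+2)) (Fin (m+2)) ℂ) (v : Fin (m+1) → ℂ) : ℕ → ℂ :=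
  ∑ b, v b • ys X 0 b

theorem phi_single {m : ℕ} (X : Matrix (Fin (m+2)) (Fin (m+2)) ℂ) (a : Fin (m+1)) :
    phi X (Pi.single a 1) = ys X 0 a := by
  rw [phi, Finset.sum_eq_single a]
  · simp
  · intro b _ hb; simp [hb]
  · simp

theorem shL_ys {m : ℕ} (X : Matrix (Fin (m+2)) (Fin (m+2)) ℂ) (l k a : ℕ) :
    shL l (ys X k a) = ys X (l + k) a := shL_shL _ _ _

theorem shL_xs {m : ℕ} (X : Matrix (Fin (m+2)) (Fin (m+2)) ℂ) (l k : ℕ) :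
    shL l (xs X k) = xs X (l + k) := shL_shL _ _ _

theorem ent_eq {N : ℕ} (X : Matrix (Fin N) (Fin N) ℂ) (a c : Fin N) : ent X a c = X a c := by
  simp [ent]

/-- A left null vector of `X_R` extends to a left null vector of `X`. -/
theorem isUnit_XR {m : ℕ} (X : Matrix (Fin (m+2)) (Fin (m+2)) ℂ) (hX : IsUnit X.det)
    (hn1 : X (Fin.last (m+1)) 0 ≠ 0) : IsUnit (XR X).det := by
  rw [isUnit_iff_ne_zero]
  intro h0
  obtain ⟨w, hw0, hw⟩ := Matrix.exists_vecMul_eq_zero_iff.2 h0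
  have hcol : ∀ c : Fin (m+1), ∑ b, w b * XR X b c = 0 := fun c => congrFun hw c
  have key : ∃ v : Fin (m+2) → ℂ, v ≠ 0 ∧ v ᵥ* X = 0 := by
    refine ⟨Fin.snoc (α := fun _ => ℂ) w
      (-∑ b, w b * ((X (Fin.last (m+1)) 0)⁻¹ * X b.castSucc 0)), ?_, ?_⟩
    · intro h
      apply hw0
      funext b
      have := congrFun h b.castSucc
      simpa using this
    · funext c
      simp only [Matrix.vecMul, dotProduct]
      rw [Fin.sum_univ_castSucc]
      simp only [Fin.snoc_castSucc, Fin.snoc_last, Pi.zero_apply]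
      refine Fin.cases ?_ (fun c => ?_) c
      · rw [neg_mul, Finset.sum_mul, ← sub_eq_add_neg, ← Finset.sum_sub_distrib]
        refine Finset.sum_eq_zero fun b _ => ?_
        field_simp
        ring
      · rw [neg_mul, Finset.sum_mul, ← sub_eq_add_neg, ← Finset.sum_sub_distrib, ← hcol c]
        refine Finset.sum_congr rfl fun b _ => ?_
        simp only [XR, Matrix.of_apply]
        ring
  exact hX.ne_zero (Matrix.exists_vecMul_eq_zero_iff.1 key)

/-- The consequence of `U X_R = X_L` that drives the row reduction: modulo the first row, its
shift and the last row, shifting a combination of the lower rows amounts to applying `V = Uγ` to its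
coefficients. -/
theorem phi_relation {m : ℕ} (X : Matrix (Fin (m+2)) (Fin (m+2)) ℂ) (hX : IsUnit X.det)
    (h1n : X 0 (Fin.last (m+1)) ≠ 0) (hn1 : X (Fin.last (m+1)) 0 ≠ 0) (v : Fin (m+1) → ℂ) :
    ∃ α β δ : ℂ, shL 1 (phi X v) - phi X (stepV (XL X * (XR X)⁻¹) v)
      = α • xs X 1 + β • xs X 0 + δ • ys X 0 m := by
  set U := XL X * (XR X)⁻¹ with hU
  have hUX : U * XR X = XL X := by
    rw [hU, Matrix.nonsing_inv_mul_cancel_right _ _ (isUnit_XR X hX hn1)]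
  set w := v ᵥ* U with hw
  have hcol : ∀ c : Fin (m+1), ∑ b, w b * XR X b c = ∑ a, v a * XL X a c := by
    intro c
    have : w ᵥ* XR X = v ᵥ* XL X := by rw [hw, Matrix.vecMul_vecMul, hUX]
    exact congrFun this c
  refine ⟨∑ a, v a * ((X 0 (Fin.last (m+1)))⁻¹ * X a.succ (Fin.last (m+1))), w 0,
    -∑ b, w b * ((X (Fin.last (m+1)) 0)⁻¹ * X b.castSucc 0), ?_⟩
  have hst : phi X (stepV U v) = (∑ b : Fin (m+1), w b • rowv X b) - w 0 • xs X 0 := by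
    rw [phi, stepV, sum_gam_smul, Fin.sum_univ_succ, Fin.sum_univ_succ]
    simp only [xs, ys, shL_zero, predF, ← hw]
    simp
  rw [hst]
  funext c
  simp only [Pi.sub_apply, Pi.add_apply, Pi.smul_apply, Finset.sum_apply, smul_eq_mul, xs, ys,
    shL_zero]
  -- Column `0` vanishes by the definition of `X_R`, column `m + 2` by that of `X_L`; the columns
  -- in between are the entries of `w X_R = v X_L`.
  have main : shL 1 (phi X v) c - (∑ a, v a * ((X 0 (Fin.last (m+1)))⁻¹ *
        X a.succ (Fin.last (m+1)))) * shL 1 (rowv X 0) c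
      = ∑ b : Fin (m+1), w b * rowv X b c - (∑ b, w b * ((X (Fin.last (m+1)) 0)⁻¹ *
        X b.castSucc 0)) * rowv X (m+1) c := by
    rw [Finset.sum_mul, Finset.sum_mul, ← Finset.sum_sub_distrib]
    rcases c with _ | c
    · simp only [shL_apply]
      simp only [rowv]
      rw [eq_comm, Finset.sum_eq_zero]
      · simp
      intro b _
      have e1 : ent X b 0 = X b.castSucc 0 := ent_eq X b.castSucc 0
      have e2 : ent X (m+1) 0 = X (Fin.last (m+1)) 0 := ent_eq X (Fin.last (m+1)) 0
      rw [e1, e2]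
      field_simp
      ring
    · simp only [shL_apply, phi, ys, shL_zero, Nat.le_add_left, if_true, Nat.add_sub_cancel,
        Finset.sum_apply, Pi.smul_apply, smul_eq_mul, ← Finset.sum_sub_distrib, rowv]
      rcases lt_trichotomy c (m+1) with hc | hc | hc
      · have h := hcol ⟨c, hc⟩
        simp only [XR, XL, Matrix.of_apply] at h
        refine Eq.trans (Finset.sum_congr rfl fun a _ => ?_)
          (h.symm.trans (Finset.sum_congr rfl fun b _ => ?_))
        · have e1 : ent X (a+1) c = X a.succ (Fin.castSucc ⟨c, hc⟩) :=
            ent_eq X a.succ (Fin.castSucc ⟨c, hc⟩)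
          have e2 : ent X 0 c = X 0 (Fin.castSucc ⟨c, hc⟩) := ent_eq X 0 (Fin.castSucc ⟨c, hc⟩)
          rw [e1, e2]; ring
        · have e1 : ent X b (c+1) = X b.castSucc (Fin.succ ⟨c, hc⟩) :=
            ent_eq X b.castSucc (Fin.succ ⟨c, hc⟩)
          have e2 : ent X (m+1) (c+1) = X (Fin.last (m+1)) (Fin.succ ⟨c, hc⟩) :=
            ent_eq X (Fin.last (m+1)) (Fin.succ ⟨c, hc⟩)
          rw [e1, e2]; ring
      · subst hc
        have hz : ∀ a, ent X a (m+1+1) = 0 := fun a => by simp [ent]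
        simp only [hz, mul_zero, sub_zero, Finset.sum_const_zero]
        refine Finset.sum_eq_zero fun a _ => ?_
        have e1 : ent X (a+1) (m+1) = X a.succ (Fin.last (m+1)) := ent_eq X a.succ (Fin.last (m+1))
        have e2 : ent X 0 (m+1) = X 0 (Fin.last (m+1)) := ent_eq X 0 (Fin.last (m+1))
        rw [e1, e2]
        field_simp
        ring
      · have hz : ∀ a, ent X a (c+1) = 0 := fun a => by
          rw [ent, dif_neg (by omega)]
        have hz' : ∀ a, ent X a c = 0 := fun a => by
          rw [ent, dif_neg (by omega)]
        simp [hz, hz']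
  linear_combination main

/-- The `l`-fold iterate of `phi_relation`; its error terms are rows occurring in `G_{ij}(X)`. -/
theorem ys_sub_phi_mem {m : ℕ} (X : Matrix (Fin (m+2)) (Fin (m+2)) ℂ) (hX : IsUnit X.det)
    (h1n : X 0 (Fin.last (m+1)) ≠ 0) (hn1 : X (Fin.last (m+1)) 0 ≠ 0) (l : ℕ) :
    ∀ v : Fin (m+1) → ℂ, shL l (phi X v) - phi X ((stepV (XL X * (XR X)⁻¹))^[l] v)
      ∈ Submodule.span ℂ ({y | ∃ k < l, y = ys X k m} ∪ {y | ∃ k ≤ l, y = xs X k}) := by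
  induction l with
  | zero => intro v; simp [shL_zero]
  | succ l ih =>
    intro v
    obtain ⟨α, β, δ, h⟩ := phi_relation X hX h1n hn1 v
    have h' := congrArg (shL l) h
    simp only [map_sub, map_add, map_smul, shL_shL, shL_xs, shL_ys, add_zero] at h'
    have e : shL (l+1) (phi X v) - phi X ((stepV (XL X * (XR X)⁻¹))^[l+1] v)
        = (α • xs X (l+1) + β • xs X l + δ • ys X l m)
          + (shL l (phi X (stepV (XL X * (XR X)⁻¹) v))
            - phi X ((stepV (XL X * (XR X)⁻¹))^[l] (stepV (XL X * (XR X)⁻¹) v))) := by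
      rw [← h', Function.iterate_succ_apply]; abel
    rw [e]
    refine Submodule.add_mem _ (Submodule.add_mem _ (Submodule.add_mem _ ?_ ?_) ?_) ?_
    · exact Submodule.smul_mem _ _ (Submodule.subset_span (Or.inr ⟨l+1, le_rfl, rfl⟩))
    · exact Submodule.smul_mem _ _ (Submodule.subset_span (Or.inr ⟨l, by omega, rfl⟩))
    · exact Submodule.smul_mem _ _ (Submodule.subset_span (Or.inl ⟨l, by omega, rfl⟩))
    · refine Submodule.span_mono ?_ (ih _)
      rintro y (⟨k, hk, rfl⟩ | ⟨k, hk, rfl⟩)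
      · exact Or.inl ⟨k, by omega, rfl⟩
      · exact Or.inr ⟨k, by omega, rfl⟩

/-! ### The rows of `G_{ij}(X)` and their reordering -/

theorem shL_rowv_apply {m : ℕ} (X : Matrix (Fin (m+2)) (Fin (m+2)) ℂ) (l a c : ℕ) :
    shL l (rowv X a) c = if l ≤ c ∧ c ≤ l + (m+1) then ent X a (c - l) else 0 := by
  rw [shL_apply]
  by_cases h : l ≤ c
  · by_cases h2 : c ≤ l + (m+1)
    · simp [h, h2, rowv]
    · rw [if_pos h, if_neg (fun h' => h2 h'.2), rowv, ent, dif_neg (by omega)]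
  · rw [if_neg h, if_neg (fun h' => h h'.1)]

theorem getD_interleave (f g : ℕ → ℕ → ℂ) (s : ℕ) (R : List (ℕ → ℂ)) (r : ℕ) :
    ((List.range s).flatMap (fun l => [f l, g l]) ++ R).getD r 0
      = if r < 2 * s then (if r % 2 = 0 then f (r / 2) else g (r / 2))
        else R.getD (r - 2 * s) 0 := by
  induction s generalizing R with
  | zero => simp
  | succ s ih =>
    rw [List.range_succ, List.flatMap_append, List.append_assoc, ih]
    simp only [List.flatMap_cons, List.flatMap_nil, List.append_nil, List.cons_append,
      List.nil_append]
    by_cases h : r < 2 * s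
    · rw [if_pos h, if_pos (by omega : r < 2 * (s+1))]
    · rw [if_neg h]
      by_cases h1 : r = 2 * s
      · subst h1
        rw [if_pos (by omega), if_pos (by omega)]
        simp
      by_cases h2 : r = 2 * s + 1
      · subst h2
        rw [if_pos (by omega), if_neg (by omega)]
        have : (2 * s + 1) / 2 = s := by omega
        simp [this]
      rw [if_neg (by omega)]
      obtain ⟨d, rfl⟩ : ∃ d, r = 2 * s + 2 + d := ⟨r - (2 * s + 2), by omega⟩
      rw [show 2 * s + 2 + d - 2 * s = d + 2 by omega,
        show 2 * s + 2 + d - 2 * (s + 1) = d by omega]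
      simp

theorem getD_cons_map_range' (f : ℕ → ℂ) (g : ℕ → ℕ → ℂ) (a p : ℕ) (R : List (ℕ → ℂ)) (r : ℕ) :
    (f :: ((List.range' a p).map g ++ R)).getD r 0
      = if r = 0 then f else if r ≤ p then g (a + (r - 1)) else R.getD (r - (p + 1)) 0 := by
  rcases r with _ | r
  · simp
  rw [if_neg (by omega), List.getD_cons_succ]
  by_cases h : r + 1 ≤ p
  · rw [if_pos h, List.getD_append _ _ _ _ (by simp; omega)]
    simp [List.getD_eq_getElem?_getD, show r < p by omega]
  · rw [if_neg h, List.getD_append_right _ _ _ _ (by simp; omega)]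
    congr 1
    simp

/-- The rows of `G_{ij}(X)`. -/
theorem det_matG_eq {m : ℕ} (X : Matrix (Fin (m+2)) (Fin (m+2)) ℂ) (i j : ℕ) (hj : 2 ≤ j)
    (hji : j ≤ i) (hi : i ≤ m+1) :
    (matG i j X).det = detK (m+1+j) ((List.range (j-2)).flatMap (fun l => [xs X l, ys X l m])
      ++ (xs X (j-2) :: ((List.range' (m+j-i) (i-j+1)).map (ys X (j-2))
        ++ (xs X (j-1) :: ((List.range' (i-1) (m+2-i)).map (ys X (j-1)) ++ []))))) := by
  unfold detK
  congr 1
  ext r c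
  have hr := r.isLt
  simp only [Matrix.of_apply, getD_interleave, getD_cons_map_range', matG]
  by_cases h1 : (r : ℕ) < 2 * (j - 2)
  · rw [if_pos h1, if_pos h1]
    by_cases h2 : (r : ℕ) % 2 = 0
    · rw [if_pos h2, if_pos h2, xs, shL_rowv_apply]
    · rw [if_neg h2, if_neg h2, ys, shL_rowv_apply]
  rw [if_neg h1, if_neg h1]
  by_cases h2 : (r : ℕ) = 2 * (j - 2)
  · rw [if_pos (by omega : (r : ℕ) < 2 * (j - 2) + (i - j + 2)), if_pos h2,
      if_pos (by omega : (r : ℕ) - 2 * (j - 2) = 0), xs, shL_rowv_apply]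
  rw [if_neg h2, if_neg (by omega : ¬ (r : ℕ) - 2 * (j - 2) = 0)]
  by_cases h3 : (r : ℕ) < 2 * (j - 2) + (i - j + 2)
  · rw [if_pos h3, if_pos (by omega : (r : ℕ) - 2 * (j - 2) ≤ i - j + 1), ys, shL_rowv_apply]
    congr 2
    omega
  rw [if_neg h3, if_neg (by omega : ¬ (r : ℕ) - 2 * (j - 2) ≤ i - j + 1)]
  by_cases h4 : (r : ℕ) = 2 * (j - 2) + (i - j + 2)
  · rw [if_pos h4, if_pos (by omega : (r : ℕ) - 2 * (j - 2) - (i - j + 1 + 1) = 0), xs,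
      shL_rowv_apply]
  rw [if_neg h4, if_neg (by omega : ¬ (r : ℕ) - 2 * (j - 2) - (i - j + 1 + 1) = 0),
    if_pos (by omega : (r : ℕ) - 2 * (j - 2) - (i - j + 1 + 1) ≤ m + 2 - i), ys, shL_rowv_apply]
  congr 2
  omega

/-- Sorting `f 0, g 0, f 1, g 1, …` into `…, g 1, g 0, f 0, f 1, …`: bringing `g l` to the front
crosses the odd number `2 l + 1` of rows. -/
theorem detK_interleave {K : ℕ} (f g : ℕ → ℕ → ℂ) (s : ℕ) : ∀ R : List (ℕ → ℂ), 2 * s ≤ K →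
    detK K ((List.range s).flatMap (fun l => [f l, g l]) ++ R)
      = (-1)^s * detK K ((List.range s).reverse.map g ++ ((List.range s).map f ++ R)) := by
  induction s with
  | zero => intro R _; simp
  | succ s ih =>
    intro R h
    rw [List.range_succ, List.flatMap_append, List.append_assoc, ih _ (by omega)]
    have := detK_move (K := K) ((List.range s).reverse.map g ++ ((List.range s).map f ++ [f s]))
      [] R (g s) (by simp; omega)
    simp only [List.append_assoc, List.cons_append, List.nil_append, List.reverse_append,
      List.map_append, List.map_cons, List.map_nil, List.flatMap_cons, List.flatMap_nil,
      List.reverse_cons, List.reverse_nil] at this ⊢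
    rw [this]
    simp only [List.length_append, List.length_map, List.length_reverse, List.length_range,
      List.length_cons, List.length_nil]
    rw [show s + (s + (0 + 1)) = 2 * s + 1 by ring, pow_succ, pow_succ, pow_mul]
    simp

/-- The sign of the reordering of the rows of `G_{ij}(X)` that puts the rows to be reduced first,
by decreasing shift. -/
theorem detK_reorder {K : ℕ} (f g : ℕ → ℕ → ℂ) (s : ℕ) (P Q : List (ℕ → ℂ))
    (hK : 2 * s + 2 + P.length + Q.length ≤ K) :
    detK K ((List.range s).flatMap (fun l => [f l, g l]) ++ (f s :: (P ++ (f (s+1) :: (Q ++ [])))))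
      = (-1)^(s + P.length * (2*s+1) + Q.length * (P.length + 2*s + 2))
        * detK K (Q ++ (P ++ ((List.range s).reverse.map g ++ (List.range (s+2)).map f))) := by
  rw [detK_interleave f g s _ (by omega)]
  have h1 := detK_moveBlock (K := K) P [] ((List.range s).reverse.map g ++
    ((List.range s).map f ++ [f s])) (f (s+1) :: (Q ++ [])) (by simp; omega)
  have h2 := detK_moveBlock (K := K) Q [] (P ++ ((List.range s).reverse.map g ++
    ((List.range s).map f ++ [f s, f (s+1)]))) [] (by simp; omega)
  have hsq : ∀ k : ℕ, (-1 : ℂ)^k * (-1)^k = 1 := fun k => by rw [← mul_pow]; simp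
  have hr : (List.range (s+2)).map f = (List.range s).map f ++ [f s, f (s+1)] := by
    rw [List.range_succ, List.range_succ]; simp
  rw [hr]
  simp only [List.append_assoc, List.cons_append, List.nil_append, List.append_nil,
    List.length_append, List.length_map, List.length_reverse, List.length_range,
      List.length_cons, List.length_nil] at h1 h2 ⊢
  rw [show s + (s + (0 + 1)) = 2 * s + 1 by ring] at h1
  rw [show P.length + (s + (s + (0 + 1 + 1))) = P.length + 2 * s + 2 by ring] at h2
  rw [h2, pow_add, pow_add, mul_assoc, mul_assoc]
  congr 1
  rw [← mul_assoc ((-1)^(Q.length * _)), hsq, one_mul, h1, ← mul_assoc, hsq, one_mul]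

/-! ### Evaluation of the reduced determinant -/

/-- Block triangularity: the rows of `X` vanish beyond its columns, and the shifts of the first
row form a triangular block there with diagonal entries `x_{1n}`. -/
theorem detK_rows {m : ℕ} (X : Matrix (Fin (m+2)) (Fin (m+2)) ℂ) (t : ℕ) :
    detK (m+2+t) ((List.range (m+2)).map (rowv X) ++ (List.range t).map (fun l => xs X (l+1)))
      = X.det * (X 0 (Fin.last (m+1)))^t := by
  unfold detK
  rw [← Matrix.det_submatrix_equiv_self finSumFinEquiv]
  set D : Matrix (Fin t) (Fin t) ℂ := Matrix.of fun l c => xs X (l+1) (m+2+c) with hD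
  set C : Matrix (Fin t) (Fin (m+2)) ℂ := Matrix.of fun l c => xs X (l+1) c with hC
  have hb : (Matrix.of fun r c : Fin (m+2+t) => ((List.range (m+2)).map (rowv X) ++
      (List.range t).map (fun l => xs X (l+1))).getD r 0 c).submatrix finSumFinEquiv finSumFinEquiv
      = Matrix.fromBlocks X 0 C D := by
    ext r c
    rcases r with r | r <;> rcases c with c | c
    · simp [List.getD_eq_getElem?_getD, rowv, ent_eq]
    · simp [List.getD_eq_getElem?_getD, rowv, ent]
    · simp [List.getD_eq_getElem?_getD, hC]
    · simp [List.getD_eq_getElem?_getD, hD]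
  rw [hb, Matrix.det_fromBlocks_zero₁₂]
  congr 1
  rw [Matrix.det_of_isLowerTriangular]
  · rw [Finset.prod_congr rfl (g := fun _ => X 0 (Fin.last (m+1)))]
    · simp
    · intro l _
      simp only [hD, Matrix.of_apply, xs, shL_apply]
      rw [if_pos (by omega), show m + 2 + (l:ℕ) - (l + 1) = m + 1 by omega, rowv]
      exact ent_eq X 0 (Fin.last (m+1))
  · intro l c hlc
    have hlc' : (l : ℕ) < c := by simpa using hlc
    simp only [hD, Matrix.of_apply, xs, shL_rowv_apply]
    rw [if_neg (by omega)]

theorem detK_base {m : ℕ} (X : Matrix (Fin (m+2)) (Fin (m+2)) ℂ) (j : ℕ) (hj : 1 ≤ j) :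
    detK (m+1+j) ((Finset.univ : Finset (Fin (m+1))).sort.map (fun b : Fin (m+1) => ys X 0 b)
        ++ (List.range j).map (xs X))
      = (-1)^(m+1) * (X.det * (X 0 (Fin.last (m+1)))^(j-1)) := by
  obtain ⟨t, rfl⟩ : ∃ t, j = t + 1 := ⟨j - 1, by omega⟩
  have hu : (Finset.univ : Finset (Fin (m+1))).sort.map (fun b : Fin (m+1) => ys X 0 b)
      = (List.range (m+1)).map (ys X 0) := by
    have h0 : segGe (m+1) 0 = Finset.univ := by ext; simp [segGe]
    have := congrArg (List.map (ys X 0)) (sort_segGe_map_val (m+1) 0)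
    rw [h0, List.map_map] at this
    rw [List.range_eq_range']
    exact this
  have hm := detK_move (K := m+1+(t+1)) ((List.range (m+1)).map (ys X 0)) []
    ((List.range t).map (fun l => xs X (l+1))) (xs X 0) (by simp)
  have hr := detK_rows X t
  rw [List.range_succ_eq_map (n := m+1), List.map_cons, List.map_map] at hr
  have e0 : xs X 0 = rowv X 0 := shL_zero _
  have e1 : (rowv X ∘ Nat.succ) = ys X 0 := by funext a; simp [ys, shL_zero]
  rw [hu, List.range_succ_eq_map (n := t), List.map_cons, List.map_map]
  rw [show m + 2 + t = m + 1 + (t + 1) by ring, e1, List.cons_append, ← e0] at hr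
  simp only [List.nil_append] at hm
  rw [hr] at hm
  rw [Nat.add_sub_cancel, hm, List.length_map, List.length_range, ← mul_assoc, ← mul_pow]
  simp only [mul_neg, mul_one, neg_neg, one_pow, one_mul]
  rfl

theorem length_rowsD {M : ℕ} (U : Matrix (Fin (M+1)) (Fin (M+1)) ℂ) (i j : ℕ) (hj : 2 ≤ j)
    (hji : j ≤ i) (hi : i ≤ M+1) : (rowsD i j U).length = M + 1 := by
  simp only [rowsD, List.length_append, List.length_map, Finset.length_sort, card_segGe,
    List.length_reverse, List.length_range]
  omega

/-- Row reduction of `G_{ij}(X)` by means of the relation `U X_R = X_L`. -/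
theorem detK_rowReduce {m : ℕ} (X : Matrix (Fin (m+2)) (Fin (m+2)) ℂ) (hX : IsUnit X.det)
    (h1n : X 0 (Fin.last (m+1)) ≠ 0) (hn1 : X (Fin.last (m+1)) 0 ≠ 0)
    (i j : ℕ) (hj : 2 ≤ j) (hji : j ≤ i) (hi : i ≤ m+1) :
    detK (m+1+j) ((List.range' (i-1) (m+2-i)).map (ys X (j-1))
        ++ ((List.range' (m+j-i) (i-j+1)).map (ys X (j-2))
          ++ ((List.range (j-2)).reverse.map (fun l => ys X l m) ++ (List.range j).map (xs X))))
      = detK (m+1+j) ((rowsD i j (XL X * (XR X)⁻¹)).map (phi X) ++ (List.range j).map (xs X)) := by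
  set U := XL X * (XR X)⁻¹ with hU
  have hQ : (List.range' (i-1) (m+2-i)).map (ys X (j-1))
      = (segGe (m+1) (i-1)).sort.map (fun a : Fin (m+1) => ys X (j-1) a) := by
    rw [show m + 2 - i = m + 1 - (i - 1) by omega, ← sort_segGe_map_val, List.map_map]; rfl
  have hP : (List.range' (m+j-i) (i-j+1)).map (ys X (j-2))
      = (segGe (m+1) (m+j-i)).sort.map (fun a : Fin (m+1) => ys X (j-2) a) := by
    rw [show i - j + 1 = m + 1 - (m + j - i) by omega, ← sort_segGe_map_val, List.map_map]; rfl
  have hsp : ∀ (l : ℕ) (a : Fin (m+1)), ys X l a - phi X ((stepV U)^[l] (Pi.single a 1))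
      ∈ Submodule.span ℂ ({y | ∃ k < l, y = ys X k m} ∪ {y | ∃ k ≤ l, y = xs X k}) := by
    intro l a
    have := ys_sub_phi_mem X hX h1n hn1 l (Pi.single a 1)
    rwa [phi_single, shL_ys, add_zero] at this
  rw [hQ, hP]
  have htri : TriRel ((segGe (m+1) (i-1)).sort.map (fun a : Fin (m+1) => ys X (j-1) a)
      ++ ((segGe (m+1) (m+j-i)).sort.map (fun a : Fin (m+1) => ys X (j-2) a)
        ++ ((List.range (j-2)).reverse.map (fun l => ys X l m) ++ (List.range j).map (xs X))))
      ((segGe (m+1) (i-1)).sort.map (fun a => phi X ((stepV U)^[j-1] (Pi.single a 1)))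
      ++ ((segGe (m+1) (m+j-i)).sort.map (fun a => phi X ((stepV U)^[j-2] (Pi.single a 1)))
        ++ ((List.range (j-2)).reverse.map
            (fun k => phi X ((stepV U)^[k] (Pi.single (Fin.last m) 1)))
          ++ (List.range j).map (xs X)))) := by
    refine TriRel.map_append _ _ _ (TriRel.map_append _ _ _
      (TriRel.range_reverse _ _ _ (TriRel.refl _) ?_) ?_) ?_
    · intro k hk
      refine Submodule.span_mono ?_ (hsp k (Fin.last m))
      rintro y (hy | ⟨l, hl, rfl⟩)
      · exact Or.inl hy
      · exact Or.inr (List.mem_map.2 ⟨l, List.mem_range.2 (by omega), rfl⟩)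
    · intro a _
      refine Submodule.span_mono ?_ (hsp (j-2) a)
      rintro y (⟨k, hk, rfl⟩ | ⟨l, hl, rfl⟩)
      · exact List.mem_append_left _ (List.mem_map.2 ⟨k, by simpa using hk, rfl⟩)
      · exact List.mem_append_right _ (List.mem_map.2 ⟨l, List.mem_range.2 (by omega), rfl⟩)
    · intro a _
      refine Submodule.span_mono ?_ (hsp (j-1) a)
      rintro y (⟨k, hk, rfl⟩ | ⟨l, hl, rfl⟩)
      · by_cases hk2 : k = j - 2
        -- The last row shifted by `j - 2` belongs to the middle block, since `m + j - i ≤ m`.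
        · subst hk2
          refine List.mem_append_left _ (List.mem_map.2 ⟨Fin.last m, ?_, rfl⟩)
          rw [Finset.mem_sort]
          simp only [segGe, Finset.mem_filter, Finset.mem_univ, true_and, Fin.val_last]
          omega
        · exact List.mem_append_right _ (List.mem_append_left _
            (List.mem_map.2 ⟨k, by simp; omega, rfl⟩))
      · exact List.mem_append_right _ (List.mem_append_right _
          (List.mem_map.2 ⟨l, List.mem_range.2 (by omega), rfl⟩))
  have h := htri.detK_eq (K := m+1+j) [] (by
    simp only [List.length_append, List.length_map, Finset.length_sort, card_segGe,
      List.length_reverse, List.length_range, List.length_nil]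
    omega)
  rw [List.nil_append, List.nil_append] at h
  rw [h, rowsD]
  simp only [List.map_append, List.map_map, List.append_assoc]
  rfl

/-- Cauchy–Binet with a single term, the index set being the full one. -/
theorem detK_phi {m : ℕ} (X : Matrix (Fin (m+2)) (Fin (m+2)) ℂ)
    (L : List (Fin (m+1) → ℂ)) (hL : L.length = m+1) (j : ℕ) (hj : 1 ≤ j) :
    detK (m+1+j) (L.map (phi X) ++ (List.range j).map (xs X))
      = detK (m+1) (L.map (res Finset.univ))
        * ((-1)^(m+1) * (X.det * (X 0 (Fin.last (m+1)))^(j-1))) := by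
  have h := detK_cauchyBinet (m+1+j) L (by omega) ((List.range j).map (xs X))
    (fun b : Fin (m+1) => ys X 0 b)
  have hS : (Finset.univ : Finset (Fin (m+1))).powersetCard L.length = {Finset.univ} := by
    rw [show L.length = (Finset.univ : Finset (Fin (m+1))).card by simp [hL]]
    exact Finset.powersetCard_self _
  rw [hS, Finset.sum_singleton, detK_base X j hj, hL] at h
  exact h

/-! ### Comparison of the two determinants -/

/-- with `n = m+2 ≥ 3` and `2 ≤ j ≤ i ≤ n-1`,
`g_{ij}(Ψ'(X)) = (-1)^{(n+j+1)(i+j)} g_{ij}(X) / (x_{1n}^{j-1} det X)`. -/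
theorem g_pullback (m : ℕ) (hm : 1 ≤ m) (X : Matrix (Fin (m+2)) (Fin (m+2)) ℂ)
    (hX : IsUnit X.det) (h1n : X 0 (Fin.last (m+1)) ≠ 0) (hn1 : X (Fin.last (m+1)) 0 ≠ 0)
    (i j : ℕ) (hj : 2 ≤ j) (hji : j ≤ i) (hi : i ≤ m+1) :
    gU i j (XL X * (XR X)⁻¹)
      = (-1:ℂ)^((m+2+j+1)*(i+j)) * (matG i j X).det
          / ((X 0 (Fin.last (m+1)))^(j-1) * X.det) := by
  set U := XL X * (XR X)⁻¹ with hU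
  have hG : (matG i j X).det = (-1)^((j-2) + (i-j+1) * (2*(j-2)+1)
      + (m+2-i) * ((i-j+1) + 2*(j-2) + 2)) * (gU i j U
        * ((-1)^(m+1) * (X.det * (X 0 (Fin.last (m+1)))^(j-1)))) := by
    have h := detK_reorder (K := m+1+j) (xs X) (fun l => ys X l m) (j-2)
      ((List.range' (m+j-i) (i-j+1)).map (ys X (j-2)))
      ((List.range' (i-1) (m+2-i)).map (ys X (j-1))) (by simp; omega)
    rw [show j - 2 + 1 = j - 1 by omega, show j - 2 + 2 = j by omega,
      detK_rowReduce X hX h1n hn1 i j hj hji hi, ← hU,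
      detK_phi X _ (length_rowsD U i j hj hji hi) j (by omega),
      ← gU_eq_detK U i j hj hji hi] at h
    rw [det_matG_eq X i j hj hji hi, h]
    simp
  have hsign : (-1 : ℂ)^((m+2+j+1)*(i+j)) * (-1)^((j-2) + (i-j+1) * (2*(j-2)+1)
      + (m+2-i) * ((i-j+1) + 2*(j-2) + 2)) * (-1)^(m+1) = 1 := by
    rw [← pow_add, ← pow_add]
    apply Even.neg_one_pow
    obtain ⟨s, rfl⟩ : ∃ s, j = s + 2 := ⟨j - 2, by omega⟩
    obtain ⟨d, rfl⟩ : ∃ d, i = s + 2 + d := ⟨i - (s + 2), by omega⟩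
    obtain ⟨q, rfl⟩ : ∃ q, m = s + 1 + d + q := ⟨m - (s + 1 + d), by omega⟩
    rw [show s + 2 - 2 = s by omega, show s + 2 + d - (s + 2) = d by omega,
      show s + 1 + d + q + 2 - (s + 2 + d) = q + 1 by omega]
    by_cases hs : Even s <;> by_cases hd : Even d <;> by_cases hq : Even q <;>
      simp [Nat.even_add, Nat.even_mul, Nat.even_add_one, hs, hd, hq]
  have hd : (X 0 (Fin.last (m+1)))^(j-1) * X.det ≠ 0 :=
    mul_ne_zero (pow_ne_zero _ h1n) hX.ne_zero
  rw [eq_div_iff hd, hG]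
  linear_combination (-(gU i j U * ((X 0 (Fin.last (m+1)))^(j-1) * X.det))) * hsign

end
end

section
/- Let n ≥ 2 and let X be an n×n complex matrix with x_{1n} ≠ 0. Let (h̄_i)_{i≥0} be the unique sequence of complex numbers such that Σ_{i≥0} p_{i+j} h̄_i = q̄_j for every integer j (all sums are finite), where q̄_j = x_{n,j+1}/x_{1n} and p_j = x_{1,j+1}/x_{1n} for j ∈ [0,n−1] (so p_{n−1} = 1) and q̄_j = p_j = 0 for all other integers j. Set t̄_m^− = det(h̄_{α+β−2})_{α,β=1}^m and t̄_m^+ = (−1)^m det(h̄_{α+β−1})_{α,β=1}^m. Then t̄_m^− = f_{2m−1}(X)/x_{1n}^{2m−1} for every m ∈ [1,n], and t̄_m^+ = f_{2m}(X)/x_{1n}^{2m} for every m ∈ [1,n−1]. -/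
/-!
Write `d = x_{1n}`. Read from the bottom right corner, rows `2f+1` and `2f` of `F(X)/d` are
`(p_{m-b+f})_b` and `(q̄_{m-b+f})_b`, with `m = n-1`. The relation defining `h̄` expresses each
`q̄`-row as a combination of the rows `(p_{m-b+k})_b`, `k ≥ f`, so every corner block of `F(X)/d`
is a product `coefMat * toepMat` (`coefMat_mul_toepMat`). The second factor is unitriangular, since
`p_m = 1` and `p_j = 0` for `j > m`; hence `f_K(X) = d^K det (coefMat K)` (`trailingMinor_matF`).

In `coefMat` the odd rows are unit vectors. After the column permutation `2f ↦ K-1-f`, `2f+1 ↦ f`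
the matrix is block triangular with respect to parity, with an identity block and a Hankel block
in `h̄` (`det_coefMat_mul`). The sign of that permutation, computed by expanding its matrix
along two rows at a time, is `1` for odd `K` and `(-1)^M` for `K = 2M`.
-/

open Matrix

noncomputable section

/-- The matrix `F(X)` for an `(m+1) × (m+1)` matrix `X` (paper's `n = m+1`): its first row is the
last row of `X` followed by `n-1` zeros, and for `i ∈ [1, n-1]` its rows `2i` and `2i+1`
(1-based) are the first, resp. last, row of `X` preceded by `i` zeros and followed by `n-1-i`
zeros. -/
def matF {m : ℕ} (X : Matrix (Fin (m+1)) (Fin (m+1)) ℂ) :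
    Matrix (Fin (2*m+1)) (Fin (2*m+1)) ℂ :=
  Matrix.of fun r c =>
    if ((r:ℕ)+1)/2 ≤ (c:ℕ) ∧ (c:ℕ) ≤ ((r:ℕ)+1)/2 + m then
      ent X (if (r:ℕ) % 2 = 1 then 0 else m) ((c:ℕ) - ((r:ℕ)+1)/2)
    else 0

/-- Determinant of the trailing principal `k × k` submatrix (last `k` rows and columns). -/
def trailingMinor {N : ℕ} (A : Matrix (Fin N) (Fin N) ℂ) (k : ℕ) : ℂ :=
  Matrix.det (Matrix.of fun a b : Fin k => ent A (N - k + (a:ℕ)) (N - k + (b:ℕ)))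

/-- `p_j = x_{1,j+1}/x_{1n}` for `j ∈ [0, n-1]` (paper's `n = m+1`), and `0` otherwise. -/
def pz {m : ℕ} (X : Matrix (Fin (m+1)) (Fin (m+1)) ℂ) (j : ℤ) : ℂ :=
  if h : 0 ≤ j ∧ j ≤ (m:ℤ) then X 0 ⟨j.toNat, by omega⟩ / X 0 (Fin.last m) else 0

/-- `q̄_j = x_{n,j+1}/x_{1n}` for `j ∈ [0, n-1]`, and `0` otherwise. -/
def qz {m : ℕ} (X : Matrix (Fin (m+1)) (Fin (m+1)) ℂ) (j : ℤ) : ℂ :=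
  if h : 0 ≤ j ∧ j ≤ (m:ℤ) then X (Fin.last m) ⟨j.toNat, by omega⟩ / X 0 (Fin.last m) else 0

/-- The column paired with row `a` in the elimination: `2f ↦ K-1-f` and `2f+1 ↦ f`. -/
def colOf (K a : ℕ) : ℕ := if a % 2 = 0 then K - 1 - a / 2 else a / 2

/-- The `0/1` matrix of the pairing `colOf`. -/
def permMat (K : ℕ) : Matrix (Fin K) (Fin K) ℂ :=
  Matrix.of fun a b => if (b : ℕ) = colOf K a then 1 else 0

/-- The coefficients expressing the rows of `F(X)`, read from the bottom right corner, through the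
shifts of the sequence `p`: row `2f` is `h` preceded by `f` zeros, row `2f+1` is the `f`-th unit
vector. -/
def coefMat (h : ℕ → ℂ) (K : ℕ) : Matrix (Fin K) (Fin K) ℂ :=
  Matrix.of fun a k =>
    if (a : ℕ) % 2 = 0 then (if (a : ℕ) / 2 ≤ k then h (k - (a : ℕ) / 2) else 0)
    else if (k : ℕ) = (a : ℕ) / 2 then 1 else 0

/-- The unitriangular Toeplitz matrix of the sequence `p`. -/
def toepMat {m : ℕ} (X : Matrix (Fin (m+1)) (Fin (m+1)) ℂ) (K : ℕ) : Matrix (Fin K) (Fin K) ℂ :=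
  Matrix.of fun k b => pz X ((m : ℤ) - (b : ℕ) + (k : ℕ))

/-- Expanding along the first two rows removes the pairs `0 ↦ K+1` and `1 ↦ 0`, which leaves
the pairing of size `K`. -/
lemma det_permMat_step (K : ℕ) :
    (permMat (K + 2)).det = (-1) ^ (K + 1) * (permMat K).det := by
  rw [Matrix.det_succ_row_zero, Finset.sum_eq_single (Fin.last (K + 1))]
  · rw [Matrix.det_succ_row_zero, Finset.sum_eq_single 0]
    · have hsub : ((permMat (K + 2)).submatrix Fin.succ (Fin.last (K + 1)).succAbove).submatrix
          Fin.succ (Fin.succAbove 0) = permMat K := by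
        ext a b
        have := a.2
        have := b.2
        simp only [permMat, colOf, Matrix.submatrix_apply, Matrix.of_apply, Fin.succAbove_last,
          Fin.val_succ, Fin.val_castSucc, Fin.succAbove_zero]
        congr 1
        simp only [eq_iff_iff]
        split_ifs <;> omega
      rw [hsub]
      simp [permMat, colOf]
    · intro b _ hb
      have : (b : ℕ) ≠ 0 := fun h => hb (Fin.ext h)
      simp [permMat, colOf, this]
    · simp
  · intro b _ hb
    have : (b : ℕ) ≠ K + 1 := fun h => hb (Fin.ext h)
    simp [permMat, colOf, this]
  · simp

lemma det_permMat_odd (M : ℕ) : (permMat (2 * M + 1)).det = 1 := by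
  induction M with
  | zero => simp [permMat, colOf]
  | succ M ih =>
    rw [show 2 * (M + 1) + 1 = (2 * M + 1) + 2 by ring, det_permMat_step, ih]
    rw [Even.neg_one_pow ⟨M + 1, by ring⟩, one_mul]

lemma det_permMat_even (M : ℕ) : (permMat (2 * M)).det = (-1) ^ M := by
  induction M with
  | zero => simp
  | succ M ih =>
    rw [show 2 * (M + 1) = 2 * M + 2 by ring, det_permMat_step, ih]
    rw [Odd.neg_one_pow ⟨M, by ring⟩, pow_succ]
    ring

lemma colOf_lt {K a : ℕ} (h : a < K) : colOf K a < K := by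
  unfold colOf; split_ifs <;> omega

lemma colOf_two_mul (K f : ℕ) : colOf K (2 * f) = K - 1 - f := by
  unfold colOf; rw [if_pos (by omega)]; omega

lemma colOf_two_mul_add_one (K f : ℕ) : colOf K (2 * f + 1) = f := by
  unfold colOf; rw [if_neg (by omega)]; omega

lemma coefMat_mul_permMat (h : ℕ → ℂ) (K : ℕ) :
    coefMat h K * (permMat K)ᵀ =
      Matrix.of fun a b : Fin K => coefMat h K a ⟨colOf K b, colOf_lt b.2⟩ := by
  ext a b
  rw [Matrix.mul_apply, Finset.sum_eq_single ⟨colOf K b, colOf_lt b.2⟩]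
  · simp [permMat]
  · intro c _ hc
    have : (c : ℕ) ≠ colOf K b := fun h => hc (Fin.ext h)
    simp [permMat, this]
  · simp

/-- The even numbers `2f`, for `f < M`, followed by the odd numbers `2f+1`, for `f < M'`. -/
def parityMap (K M M' : ℕ) (h1 : 2 * M ≤ K + 1) (h2 : 2 * M' ≤ K) : Fin M ⊕ Fin M' → Fin K :=
  Sum.elim (fun f => ⟨2 * f, by omega⟩) (fun f => ⟨2 * f + 1, by omega⟩)

lemma parityMap_bijective (K M M' : ℕ) (h1 : 2 * M ≤ K + 1) (h2 : 2 * M' ≤ K)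
    (hK : M + M' = K) : Function.Bijective (parityMap K M M' h1 h2) := by
  rw [Fintype.bijective_iff_injective_and_card]
  refine ⟨?_, by simp [hK]⟩
  rintro (a | a) (b | b) hab <;>
    simp only [parityMap, Sum.elim_inl, Sum.elim_inr, Fin.mk.injEq] at hab <;>
    first
    | omega
    | (congr 1; ext; omega)

/-- Pairing columns with rows makes the coefficient matrix block triangular with respect to parity;
the odd block is the identity and the even block is a Hankel matrix with both orders reversed. -/
lemma det_coefMat_mul (h : ℕ → ℂ) (K M M' : ℕ) (h1 : 2 * M ≤ K + 1) (h2 : 2 * M' ≤ K)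
    (hK : M + M' = K) :
    (coefMat h K).det * (permMat K).det =
      (Matrix.of fun a b : Fin M => h ((a : ℕ) + b + (K + 1 - 2 * M))).det := by
  rw [← Matrix.det_transpose (permMat K), ← Matrix.det_mul, coefMat_mul_permMat,
    ← Matrix.det_submatrix_equiv_self (Equiv.ofBijective _ (parityMap_bijective K M M' h1 h2 hK)),
    ← Matrix.fromBlocks_toBlocks (Matrix.submatrix _ _ _)]
  rw [show Matrix.toBlocks₂₁ _ = 0 from ?_, Matrix.det_fromBlocks_zero₂₁,
    show Matrix.toBlocks₂₂ _ = 1 from ?_, Matrix.det_one, mul_one,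
    ← Matrix.det_submatrix_equiv_self Fin.revPerm]
  · congr 1
    ext a b
    have := a.2
    have := b.2
    simp only [Matrix.submatrix_apply, Matrix.toBlocks₁₁, Matrix.of_apply, Equiv.ofBijective_apply,
      parityMap, Sum.elim_inl, coefMat, colOf_two_mul, Fin.revPerm_apply, Fin.val_rev]
    rw [if_pos (by omega), if_pos (by omega)]
    congr 1
    omega
  · ext a b
    have := a.2
    have := b.2
    simp only [Matrix.submatrix_apply, Matrix.toBlocks₂₂, Matrix.of_apply, Equiv.ofBijective_apply,
      parityMap, Sum.elim_inr, coefMat, colOf_two_mul_add_one, Matrix.one_apply,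
      Fin.ext_iff]
    rw [if_neg (by omega)]
    congr 1
    simp only [eq_iff_iff]
    omega
  · ext a b
    have := a.2
    have := b.2
    simp only [Matrix.submatrix_apply, Matrix.toBlocks₂₁, Matrix.of_apply, Equiv.ofBijective_apply,
      parityMap, Sum.elim_inr, Sum.elim_inl, coefMat, colOf_two_mul, Matrix.zero_apply]
    rw [if_neg (by omega), if_neg (by omega)]

lemma det_toepMat {m : ℕ} (X : Matrix (Fin (m+1)) (Fin (m+1)) ℂ) (h1n : X 0 (Fin.last m) ≠ 0)
    (K : ℕ) : (toepMat X K).det = 1 := by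
  rw [Matrix.det_of_isUpperTriangular]
  · refine Finset.prod_eq_one fun i _ => ?_
    simp only [toepMat, Matrix.of_apply, pz]
    rw [dif_pos (by omega)]
    convert div_self h1n
    simp
  · intro i j hij
    have : (j : ℕ) < i := hij
    simp only [toepMat, Matrix.of_apply, pz]
    rw [dif_neg (by omega)]

/-- The even rows are the defining relation of `hbar`; its sum is truncated to `K` terms because
`p_j = 0` for `j > m`. -/
lemma coefMat_mul_toepMat {m : ℕ} (X : Matrix (Fin (m+1)) (Fin (m+1)) ℂ) (hbar : ℕ → ℂ)
    (hrel : ∀ j : ℤ, ∑' i : ℕ, pz X ((i:ℤ) + j) * hbar i = qz X j) (K : ℕ) :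
    coefMat hbar K * toepMat X K = Matrix.of fun a b : Fin K =>
      if (a : ℕ) % 2 = 0 then qz X ((m : ℤ) - (b : ℕ) + ((a : ℕ) / 2 : ℕ))
      else pz X ((m : ℤ) - (b : ℕ) + ((a : ℕ) / 2 : ℕ)) := by
  ext a b
  have ha := a.2
  have hb := b.2
  rw [Matrix.mul_apply]
  simp only [coefMat, toepMat, Matrix.of_apply]
  split_ifs with hpar
  · rw [← hrel, tsum_eq_sum (s := Finset.range (K - (a : ℕ) / 2))]
    · rw [Fin.sum_univ_eq_sum_range (fun k => (if (a : ℕ) / 2 ≤ k then hbar (k - (a : ℕ) / 2) else 0)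
        * pz X ((m : ℤ) - (b : ℕ) + (k : ℕ))) K]
      have hsplit (g : ℕ → ℂ) : ∑ k ∈ Finset.range K, g k = ∑ k ∈ Finset.range ((a : ℕ) / 2), g k
          + ∑ k ∈ Finset.range (K - (a : ℕ) / 2), g ((a : ℕ) / 2 + k) := by
        rw [← Finset.sum_range_add, Nat.add_sub_cancel' (by omega)]
      rw [hsplit, Finset.sum_eq_zero, zero_add]
      · refine Finset.sum_congr rfl fun i _ => ?_
        rw [if_pos (by omega), mul_comm]
        congr 2
        · push_cast; ring
        · omega
      · intro k hk
        rw [Finset.mem_range] at hk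
        rw [if_neg (by omega), zero_mul]
    · intro i hi
      rw [Finset.mem_range] at hi
      rw [pz, dif_neg (by omega), zero_mul]
  · rw [Finset.sum_eq_single ⟨(a : ℕ) / 2, by omega⟩]
    · simp
    · intro c _ hc
      have : (c : ℕ) ≠ (a : ℕ) / 2 := fun h => hc (Fin.ext h)
      simp [this]
    · simp

/-- Entries of `F(X)` counted from the bottom right corner. -/
lemma ent_matF {m : ℕ} (X : Matrix (Fin (m+1)) (Fin (m+1)) ℂ) (h1n : X 0 (Fin.last m) ≠ 0)
    (a b : ℕ) (ha : a ≤ 2 * m) (hb : b ≤ 2 * m) :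
    ent (matF X) (2 * m - a) (2 * m - b) = X 0 (Fin.last m) *
      (if a % 2 = 0 then qz X ((m : ℤ) - b + (a / 2 : ℕ))
        else pz X ((m : ℤ) - b + (a / 2 : ℕ))) := by
  rw [ent, dif_pos (by omega)]
  simp only [matF, Matrix.of_apply]
  by_cases hr : 0 ≤ (m : ℤ) - b + (a / 2 : ℕ) ∧ (m : ℤ) - b + (a / 2 : ℕ) ≤ m
  · rw [if_pos (by omega), pz, qz, dif_pos hr, dif_pos hr]
    have hidx : 2 * m - b - (2 * m - a + 1) / 2 = ((m : ℤ) - b + (a / 2 : ℕ)).toNat := by omega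
    by_cases hpar : a % 2 = 0
    · rw [if_neg (by omega), if_pos hpar, mul_div_cancel₀ _ h1n, ent, dif_pos (by omega)]
      congr 1
      ext
      exact hidx
    · rw [if_pos (by omega), if_neg hpar, mul_div_cancel₀ _ h1n, ent, dif_pos (by omega)]
      congr 1
      ext
      exact hidx
  · rw [if_neg (by omega), pz, qz, dif_neg hr, dif_neg hr]
    simp

lemma trailingMinor_matF {m : ℕ} (X : Matrix (Fin (m+1)) (Fin (m+1)) ℂ)
    (h1n : X 0 (Fin.last m) ≠ 0) (hbar : ℕ → ℂ)
    (hrel : ∀ j : ℤ, ∑' i : ℕ, pz X ((i:ℤ) + j) * hbar i = qz X j) (K : ℕ) (hK : K ≤ 2 * m + 1) :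
    trailingMinor (matF X) K = (X 0 (Fin.last m)) ^ K * (coefMat hbar K).det := by
  have hprod := congrArg Matrix.det (coefMat_mul_toepMat X hbar hrel K)
  rw [Matrix.det_mul, det_toepMat X h1n, mul_one] at hprod
  rw [hprod, trailingMinor, ← Matrix.det_submatrix_equiv_self Fin.revPerm]
  have hsmul (A : Matrix (Fin K) (Fin K) ℂ) :
      (X 0 (Fin.last m)) ^ K * A.det = (X 0 (Fin.last m) • A).det := by
    rw [Matrix.det_smul, Fintype.card_fin]
  rw [hsmul]
  congr 1
  ext a b
  have ha := a.2
  have hb := b.2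
  simp only [Matrix.submatrix_apply, Matrix.of_apply, Matrix.smul_apply, smul_eq_mul,
    Fin.revPerm_apply, Fin.val_rev]
  rw [← ent_matF X h1n a b (by omega) (by omega)]
  congr 1 <;> omega

/-- if `h̄` satisfies `∑_{i ≥ 0} p_{i+j} h̄_i = q̄_j` for every integer `j`, then the
Hankel determinants `t̄_M^± = det(h̄_{α+β-2})`, `(-1)^M det(h̄_{α+β-1})` are given by the trailing
minors of `F(X)`: `t̄_M^- = f_{2M-1}(X)/x_{1n}^{2M-1}` for `M ∈ [1, n]` and
`t̄_M^+ = f_{2M}(X)/x_{1n}^{2M}` for `M ∈ [1, n-1]`, where `n = m+1`. -/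
theorem hankel_eq_trailing_minors (m : ℕ) (hm : 1 ≤ m)
    (X : Matrix (Fin (m+1)) (Fin (m+1)) ℂ) (h1n : X 0 (Fin.last m) ≠ 0)
    (hbar : ℕ → ℂ)
    (hrel : ∀ j : ℤ, ∑' i : ℕ, pz X ((i:ℤ) + j) * hbar i = qz X j) :
    (∀ M : ℕ, 1 ≤ M → M ≤ m+1 →
      Matrix.det (Matrix.of fun a b : Fin M => hbar ((a:ℕ)+(b:ℕ)))
        = trailingMinor (matF X) (2*M-1) / (X 0 (Fin.last m))^(2*M-1)) ∧
    (∀ M : ℕ, 1 ≤ M → M ≤ m →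
      (-1:ℂ)^M * Matrix.det (Matrix.of fun a b : Fin M => hbar ((a:ℕ)+(b:ℕ)+1))
        = trailingMinor (matF X) (2*M) / (X 0 (Fin.last m))^(2*M)) := by
  refine ⟨fun M hM hMm => ?_, fun M hM hMm => ?_⟩
  · obtain ⟨L, rfl⟩ : ∃ L, M = L + 1 := ⟨M - 1, by omega⟩
    rw [show 2 * (L + 1) - 1 = 2 * L + 1 by omega,
      trailingMinor_matF X h1n hbar hrel _ (by omega), mul_div_cancel_left₀ _ (pow_ne_zero _ h1n)]
    have h := det_coefMat_mul hbar (2 * L + 1) (L + 1) L (by omega) (by omega) (by omega)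
    rw [det_permMat_odd, mul_one] at h
    rw [h]
    simp only [show 2 * L + 1 + 1 - 2 * (L + 1) = 0 by omega, add_zero]
  · rw [trailingMinor_matF X h1n hbar hrel _ (by omega), mul_div_cancel_left₀ _ (pow_ne_zero _ h1n)]
    have h := det_coefMat_mul hbar (2 * M) M M (by omega) (by omega) (by omega)
    rw [det_permMat_even] at h
    simp only [show 2 * M + 1 - 2 * M = 1 by omega] at h
    rw [← h, mul_left_comm, ← pow_add, Even.neg_one_pow ⟨M, rfl⟩, mul_one]

end
end

section
/- Let R be a commutative ring, let L be an m×q matrix over R, let 1 ≤ p < q, and let a ∈ [1,m]^p, b ∈ [1,m]^q, c ∈ [1,m]^{q−p} be tuples of row indices. Then Σ_{S} (−1)^{p(p−1)/2 + σ(S)} det L_{a,b_{Ŝ}} · det L_{b_S,c} = (−1)^p · det L_b · det L_{a,c}, where the sum is over all p-element subsets S of [1,q], σ(S) is the sum of the elements of S, b_S (respectively b_{Ŝ}) is the subtuple of b consisting of the entries in positions of S (respectively not in S), taken in increasing order of position, and for tuples u, v of row indices, L_{u,v} denotes the square matrix whose rows are the rows of L indexed by the entries of u followed by those of v (and L_b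 is the matrix with rows of L indexed by the entries of b in order). -/
/-!
Fix the vectors `b` and `c` and regard both sides of the identity as alternating maps of the
vectors `a` (`exchangeSum`, `detLeft`); for the sake of signs, the factor `(-1)^p` is moved to the
left, turning 1-based position sums into 0-based ones.

If every vector of `a` is one of the `b j`, say `a = b ∘ A` with `A` injective, only the term
`S = range A` survives: for any other `S`, some `b (A t)` also occurs among `b_Ŝ`. In the surviving
term the permutation sorting `A` appears in both determinants and cancels, and what is left is
`det L_b` times the sign of the permutation listing `S` and then its complement. That sign is
`(-1)^(p(p-1)/2 + ∑ S)` by counting inversions (`sign_shuffle`). This is `exchangeSum_comp`.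

For arbitrary `a`, the vectors `det b • a t` are linear combinations of the `b j` (Cramer), so the
identity holds after multiplication by `(det b)^p` (`det_pow_mul_exchangeSum`). To cancel that
factor over any commutative ring, `b` is replaced by `X • 1 + b` over `R[X]`, whose determinant is
a monic polynomial and hence a non-zero-divisor; setting `X = 0` gives `exchangeSum_eq`.
-/


open Matrix

noncomputable section

/-- Determinant of the `q × q` matrix whose rows are the rows of `L` indexed by the entries of
`u` followed by those of `v` (in order). -/
def detRows {R : Type*} [CommRing R] {m q p1 p2 : ℕ} (L : Matrix (Fin m) (Fin q) R)
    (hp : p1 + p2 = q) (u : Fin p1 → Fin m) (v : Fin p2 → Fin m) : R :=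
  Matrix.det (Matrix.of fun r c : Fin q =>
    if h : (r:ℕ) < p1 then L (u ⟨r, h⟩) c
    else L (v ⟨(r:ℕ) - p1, by have := r.isLt; omega⟩) c)

section Helpers

open Finset Polynomial

variable {R : Type*} [CommRing R] {p n : ℕ}

theorem elim_update_comp {M : Type*} [DecidableEq (Fin p)] (v : Fin n → M)
    (u : Fin p → M) (i : Fin p) (z : M) :
    (fun r => Sum.elim (Function.update u i z) v (finSumFinEquiv.symm r)) =
      Function.update (fun r => Sum.elim u v (finSumFinEquiv.symm r))
        (finSumFinEquiv (Sum.inl i)) z := by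
  ext1 r
  obtain ⟨x, rfl⟩ := finSumFinEquiv.surjective r
  rcases x with x | x
  · by_cases hx : x = i
    · subst hx; simp
    · rw [Function.update_of_ne (by simpa using hx)]
      simp [Function.update_of_ne hx]
  · rw [Function.update_of_ne (finSumFinEquiv.injective.ne Sum.inr_ne_inl)]
    simp

/-- The determinant of the matrix with rows `u` followed by `v`, as an alternating map of `u`. -/
def detLeft (v : Fin n → Fin (p + n) → R) :
    (Fin (p + n) → R) [⋀^Fin p]→ₗ[R] R where
  toFun u := Matrix.det (Matrix.of fun r => Sum.elim u v (finSumFinEquiv.symm r))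
  map_update_add' u i x y := by
    simp only [elim_update_comp]
    exact Matrix.detRowAlternating.map_update_add _ _ x y
  map_update_smul' u i x y := by
    simp only [elim_update_comp]
    exact Matrix.detRowAlternating.map_update_smul _ _ x y
  map_eq_zero_of_eq' u i j hij hne := by
    refine Matrix.det_zero_of_row_eq (i := finSumFinEquiv (Sum.inl i))
      (j := finSumFinEquiv (Sum.inl j)) (by simpa using hne) ?_
    ext k
    simp [hij]

theorem detLeft_apply (v : Fin n → Fin (p + n) → R) (u : Fin p → Fin (p + n) → R) :
    detLeft v u = Matrix.det (Matrix.of fun r => Sum.elim u v (finSumFinEquiv.symm r)) := rfl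

/-- The permutation listing the elements of `S` in increasing order, then those of `Sᶜ`. -/
def shuffle {S : Finset (Fin (p + n))} (h : #S = p) (h' : #Sᶜ = n) : Equiv.Perm (Fin (p + n)) :=
  finSumFinEquiv.symm.trans (finSumEquivOfFinset h h')

/-- The `i`-th element `x` of `S` exceeds `x - i` elements of `Sᶜ`: of the `x` indices below it,
exactly `i` lie in `S`. The subtraction is avoided by adding `i` on the left. -/
theorem card_inversions {S : Finset (Fin (p + n))} (h : #S = p) (h' : #Sᶜ = n) (i : Fin p) :
    #{j | ¬ S.orderEmbOfFin h i < Sᶜ.orderEmbOfFin h' j} + (i : ℕ) = S.orderEmbOfFin h i := by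
  have hS : #{j | S.orderEmbOfFin h j < S.orderEmbOfFin h i} = (i : ℕ) := by
    simp only [OrderEmbedding.lt_iff_lt]
    rw [← Fin.card_Iio i]
    congr 1
    ext; simp
  have hne (j : Fin n) : S.orderEmbOfFin h i ≠ Sᶜ.orderEmbOfFin h' j := fun hj => by
    have h1 := S.orderEmbOfFin_mem h i
    have h2 := Sᶜ.orderEmbOfFin_mem h' j
    rw [← hj, Finset.mem_compl] at h2
    exact h2 h1
  have htot : #{x | x < S.orderEmbOfFin h i} = (S.orderEmbOfFin h i : ℕ) := by
    rw [← Fin.card_Iio (S.orderEmbOfFin h i)]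
    congr 1
    ext; simp
  rw [← htot]
  conv_lhs => rw [← hS]
  simp only [Finset.card_filter]
  rw [← (finSumEquivOfFinset h h').sum_comp, Fintype.sum_sum_type, add_comm]
  simp only [finSumEquivOfFinset_inl, finSumEquivOfFinset_inr]
  congr 1
  refine Finset.sum_congr rfl fun j _ => ?_
  have := hne j
  congr 1
  rw [not_lt, le_iff_lt_or_eq]
  simp [this.symm]

/-- The inversions of the shuffle are the pairs of an element of `S` and a smaller element of
`Sᶜ`; there are `∑ s ∈ S, s - p(p-1)/2` of them, with 0-based `s`. -/
theorem sign_shuffle {S : Finset (Fin (p + n))} (h : #S = p) (h' : #Sᶜ = n) :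
    Equiv.Perm.sign (shuffle h h') = (-1) ^ (p * (p - 1) / 2 + ∑ s ∈ S, (s : ℕ)) := by
  have h1 (i : Fin p) : shuffle h h' (Fin.castAdd n i) = S.orderEmbOfFin h i := by
    simp [shuffle]
  have h2 (j : Fin n) : shuffle h h' (Fin.natAdd p j) = Sᶜ.orderEmbOfFin h' j := by
    simp [shuffle]
  have hpow : Equiv.Perm.sign (shuffle h h') =
      (-1) ^ ∑ i : Fin p, #{j | ¬ S.orderEmbOfFin h i < Sᶜ.orderEmbOfFin h' j} := by
    rw [Equiv.Perm.sign_eq_prod_prod_Ioi]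
    have hI (i : Fin (p + n)) : Finset.Ioi i = Finset.univ.filter (fun j => i < j) := by
      ext; simp
    simp only [hI, Finset.prod_filter]
    rw [Fin.prod_univ_add]
    simp only [Fin.prod_univ_add, h1, h2]
    rw [← Finset.prod_pow_eq_pow_sum]
    have hlast : ∀ (j : Fin n) (i : Fin p), ¬ Fin.natAdd p j < Fin.castAdd n i := by
      intro j i hlt
      have := i.isLt
      simp only [Fin.lt_def, Fin.val_natAdd, Fin.val_castAdd] at hlt
      omega
    have hfst : ∀ (j : Fin n) (i : Fin p), Fin.castAdd n i < Fin.natAdd p j := by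
      intro j i
      have := i.isLt
      simp only [Fin.lt_def, Fin.val_natAdd, Fin.val_castAdd]
      omega
    have hcast (i j : Fin p) : Fin.castAdd n i < Fin.castAdd n j ↔ i < j := Iff.rfl
    have hmono : ∀ i j : Fin p, (if Fin.castAdd n i < Fin.castAdd n j then
        if S.orderEmbOfFin h i < S.orderEmbOfFin h j then (1 : ℤˣ) else -1 else 1) = 1 := by
      intro i j
      simp +contextual [hcast]
    have hmono' : ∀ i j : Fin n, (if Fin.natAdd p i < Fin.natAdd p j then
        if Sᶜ.orderEmbOfFin h' i < Sᶜ.orderEmbOfFin h' j then (1 : ℤˣ) else -1 else 1) = 1 := by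
      intro i j
      simp +contextual
    simp only [hmono, hmono', hlast, hfst, if_true, if_false, prod_const_one, one_mul, mul_one]
    simp [Finset.prod_ite]
  have hsum : ∑ i : Fin p, #{j | ¬ S.orderEmbOfFin h i < Sᶜ.orderEmbOfFin h' j}
      + p * (p - 1) / 2 = ∑ s ∈ S, (s : ℕ) := by
    rw [← Finset.sum_range_id_mul_two p, Nat.mul_div_cancel _ two_pos, Finset.sum_range,
      ← Finset.sum_add_distrib]
    simp only [card_inversions]
    conv_rhs => rw [← Finset.image_orderEmbOfFin_univ S h]
    rw [Finset.sum_image fun x _ y _ hxy => (S.orderEmbOfFin h).injective hxy]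
  rw [hpow, ← hsum, ← add_assoc, add_right_comm, pow_add, ← two_mul, pow_mul]
  simp

theorem detLeft_shuffle (b : Fin (p + n) → Fin (p + n) → R) {S : Finset (Fin (p + n))}
    (h : #S = p) (h' : #Sᶜ = n) :
    detLeft (fun t => b (Sᶜ.orderEmbOfFin h' t)) (fun t => b (S.orderEmbOfFin h t)) =
      (-1) ^ (p * (p - 1) / 2 + ∑ s ∈ S, (s : ℕ)) * Matrix.det (Matrix.of b) := by
  have hs := Matrix.det_permute (shuffle h h') (Matrix.of b)
  rw [sign_shuffle] at hs
  push_cast at hs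
  rw [← hs, detLeft_apply]
  congr 1
  ext r k
  obtain ⟨x, rfl⟩ := finSumFinEquiv.surjective r
  cases x <;> simp [shuffle]

/-- The left-hand side of the exchange identity, as an alternating map of the vectors `a`. The
exponent uses 0-based positions, so it differs from the 1-based one by `p`. The cardinality test
always succeeds; it only supplies the proof needed by `orderEmbOfFin`. -/
def exchangeSum (b : Fin (p + n) → Fin (p + n) → R) (c : Fin n → Fin (p + n) → R) :
    (Fin (p + n) → R) [⋀^Fin p]→ₗ[R] R :=
  ∑ S ∈ powersetCard p (univ : Finset (Fin (p + n))),
    if h : #S = p then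
      ((-1) ^ (p * (p - 1) / 2 + ∑ s ∈ S, (s : ℕ)) *
        detLeft c (fun t => b (S.orderEmbOfFin h t))) •
          detLeft fun t => b (Sᶜ.orderEmbOfFin (by simp [card_compl, h]) t)
    else 0

theorem exchangeSum_apply (b : Fin (p + n) → Fin (p + n) → R) (c : Fin n → Fin (p + n) → R)
    (a : Fin p → Fin (p + n) → R) :
    exchangeSum b c a = ∑ S ∈ powersetCard p (univ : Finset (Fin (p + n))),
      if h : #S = p then
        (-1) ^ (p * (p - 1) / 2 + ∑ s ∈ S, (s : ℕ)) *
          detLeft c (fun t => b (S.orderEmbOfFin h t)) *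
            detLeft (fun t => b (Sᶜ.orderEmbOfFin (by simp [card_compl, h]) t)) a
      else 0 := by
  have hsum {ι : Type} (s : Finset ι) (f : ι → (Fin (p + n) → R) [⋀^Fin p]→ₗ[R] R) :
      (∑ i ∈ s, f i) a = ∑ i ∈ s, f i a := by
    induction s using Finset.cons_induction with
    | empty => simp
    | cons i s hi ih => simp [ih]
  rw [exchangeSum, hsum]
  refine sum_congr rfl fun S _ => ?_
  split_ifs <;> simp

/-- The exchange identity when the vectors of `a` are chosen among those of `b`: the only nonzero
term is the one whose `S` is the range of `A`. -/
theorem exchangeSum_comp (b : Fin (p + n) → Fin (p + n) → R) (c : Fin n → Fin (p + n) → R)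
    (A : Fin p → Fin (p + n)) (hA : Function.Injective A) :
    exchangeSum b c (fun t => b (A t)) =
      Matrix.det (Matrix.of b) * detLeft c (fun t => b (A t)) := by
  have hcard : #(univ.image A) = p := by simp [card_image_of_injective _ hA]
  rw [exchangeSum_apply, sum_eq_single (univ.image A)]
  · have hcard' : #(univ.image A)ᶜ = n := by simp [card_compl, hcard]
    rw [dif_pos hcard]
    set S := univ.image A with hS
    have hmem (t : Fin p) : ∃ s, S.orderEmbOfFin hcard s = A t := by
      have : A t ∈ Set.range (S.orderEmbOfFin hcard) := by
        rw [range_orderEmbOfFin]; simp [hS]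
      exact this
    -- `τ` sorts `A`: `A = (increasing enumeration of S) ∘ τ`.
    choose τ hτ using hmem
    have hτi : Function.Injective τ := fun x y hxy => hA (by rw [← hτ, ← hτ, hxy])
    let σ : Equiv.Perm (Fin p) := Equiv.ofBijective τ (Finite.injective_iff_bijective.1 hτi)
    have hperm (v : Fin n → Fin (p + n) → R) : detLeft v (fun t => b (A t)) =
        Equiv.Perm.sign σ • detLeft v (fun t => b (S.orderEmbOfFin hcard t)) := by
      rw [← AlternatingMap.map_perm]
      congr 1
      ext t
      simp [σ, hτ]
    rw [hperm, hperm c, detLeft_shuffle]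
    have hsq : ((-1 : R) ^ (p * (p - 1) / 2 + ∑ s ∈ S, (s : ℕ))) *
        (-1 : R) ^ (p * (p - 1) / 2 + ∑ s ∈ S, (s : ℕ)) = 1 := by
      rw [← mul_pow]; simp
    generalize (-1 : R) ^ (p * (p - 1) / 2 + ∑ s ∈ S, (s : ℕ)) = ε at hsq
    rcases Int.units_eq_one_or (Equiv.Perm.sign σ) with hσ | hσ <;> rw [hσ] <;>
      simp only [one_smul, Units.neg_smul]
    · linear_combination
        (Matrix.det (Matrix.of b) * detLeft c (fun t => b (S.orderEmbOfFin hcard t))) * hsq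
    · linear_combination
        -(Matrix.det (Matrix.of b) * detLeft c (fun t => b (S.orderEmbOfFin hcard t))) * hsq
  · intro S hS hne
    have hSc : #S = p := by simpa using hS
    have hSc' : #Sᶜ = n := by simp [card_compl, hSc]
    obtain ⟨t, ht⟩ : ∃ t, A t ∉ S := by
      by_contra! hall
      refine hne (eq_of_subset_of_card_le ?_ (by rw [hcard, hSc])).symm
      intro x hx
      obtain ⟨t, -, rfl⟩ := mem_image.1 hx
      exact hall t
    obtain ⟨s, hs⟩ : A t ∈ Set.range (Sᶜ.orderEmbOfFin hSc') := by
      rw [range_orderEmbOfFin]; simpa using ht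
    rw [dif_pos hSc, detLeft_apply _ (fun t => b (A t))]
    refine mul_eq_zero_of_right _ (Matrix.det_zero_of_row_eq
      (i := finSumFinEquiv (Sum.inl t)) (j := finSumFinEquiv (Sum.inr s))
      (finSumFinEquiv.injective.ne Sum.inl_ne_inr) ?_)
    ext k
    simp only [Matrix.of_apply, Equiv.symm_apply_apply, Sum.elim_inl, Sum.elim_inr, hs]
  · intro hS
    simp [hcard] at hS

/-- Both sides agree on tuples from the span of the `b j`, which contains each `det b • a t`; by
multilinearity this pulls out a factor `(det b)^p`. -/
theorem det_pow_mul_exchangeSum (b : Fin (p + n) → Fin (p + n) → R)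
    (c : Fin n → Fin (p + n) → R) (a : Fin p → Fin (p + n) → R) :
    Matrix.det (Matrix.of b) ^ p * exchangeSum b c a =
      Matrix.det (Matrix.of b) ^ p * (Matrix.det (Matrix.of b) * detLeft c a) := by
  have hcomp : (exchangeSum b c).compLinearMap (Matrix.of b).vecMulLinear =
      (Matrix.det (Matrix.of b) • detLeft c).compLinearMap (Matrix.of b).vecMulLinear := by
    refine Module.Basis.ext_alternating (Pi.basisFun R (Fin (p + n))) fun A hA => ?_
    have := exchangeSum_comp b c A hA
    simpa [Matrix.row_def, Matrix.of_apply] using! this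
  -- Since `(a t · adj b) · b = det b • a t`, both maps are evaluated at the vectors `a t · adj b`.
  have hval := congrArg (fun f => f fun t => a t ᵥ* (Matrix.of b).adjugate) hcomp
  have hvec : (fun t => (Matrix.of b).vecMulLinear (a t ᵥ* (Matrix.of b).adjugate)) =
      fun t => Matrix.det (Matrix.of b) • a t := by
    ext t : 1
    simp [Matrix.vecMul_vecMul, Matrix.adjugate_mul, Matrix.vecMul_smul]
  simp only [AlternatingMap.compLinearMap_apply, hvec, AlternatingMap.smul_apply] at hval
  have hsm (f : (Fin (p + n) → R) [⋀^Fin p]→ₗ[R] R) :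
      f (fun t => Matrix.det (Matrix.of b) • a t) = Matrix.det (Matrix.of b) ^ p * f a := by
    have := f.toMultilinearMap.map_smul_univ (fun _ => Matrix.det (Matrix.of b)) a
    simpa using this
  rw [hsm, hsm, smul_eq_mul] at hval
  rw [hval]; ring

theorem map_detLeft {R' : Type*} [CommRing R'] (f : R →+* R') (v : Fin n → Fin (p + n) → R)
    (u : Fin p → Fin (p + n) → R) :
    f (detLeft v u) = detLeft (fun t k => f (v t k)) (fun t k => f (u t k)) := by
  rw [detLeft_apply, detLeft_apply, RingHom.map_det]
  congr 1
  ext r k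
  obtain ⟨x, rfl⟩ := finSumFinEquiv.surjective r
  cases x <;> simp

theorem map_exchangeSum {R' : Type*} [CommRing R'] (f : R →+* R')
    (b : Fin (p + n) → Fin (p + n) → R) (c : Fin n → Fin (p + n) → R)
    (a : Fin p → Fin (p + n) → R) :
    f (exchangeSum b c a) =
      exchangeSum (fun t k => f (b t k)) (fun t k => f (c t k)) (fun t k => f (a t k)) := by
  rw [exchangeSum_apply, exchangeSum_apply, map_sum]
  refine sum_congr rfl fun S hS => ?_
  have hSc : #S = p := by simpa using hS
  simp [dif_pos hSc, map_detLeft]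

/-- The exchange identity for arbitrary vectors, with 0-based position sums. -/
theorem exchangeSum_eq (b : Fin (p + n) → Fin (p + n) → R)
    (c : Fin n → Fin (p + n) → R) (a : Fin p → Fin (p + n) → R) :
    exchangeSum b c a = Matrix.det (Matrix.of b) * detLeft c a := by
  -- `B = X • 1 + b`, whose determinant is the characteristic polynomial of `-b`.
  let B : Matrix (Fin (p + n)) (Fin (p + n)) R[X] := charmatrix (-Matrix.of b)
  have hreg : IsLeftRegular (Matrix.det B ^ p) :=
    ((Matrix.charpoly_monic (-Matrix.of b)).pow p).isRegular.left
  have hpoly := hreg (det_pow_mul_exchangeSum (fun i => B i) (fun t k => C (c t k))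
    (fun t k => C (a t k)))
  have hB (i j) : (evalRingHom 0) (B i j) = b i j := by
    by_cases hij : i = j
    · subst hij; simp [B, charmatrix_apply_eq]
    · simp [B, charmatrix_apply_ne _ _ _ hij]
  have h0 := congrArg (evalRingHom (0 : R)) hpoly
  rw [map_exchangeSum, map_mul, map_detLeft, RingHom.map_det] at h0
  have hBm : (evalRingHom (0 : R)).mapMatrix (Matrix.of fun i => B i) = Matrix.of b := by
    ext i j; simpa using hB i j
  rw [hBm] at h0
  simpa only [hB, coe_evalRingHom, eval_C] using h0

theorem detRows_eq {m q : ℕ} (hp : p + n = q) (L : Matrix (Fin m) (Fin q) R) (u : Fin p → Fin m)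
    (v : Fin n → Fin m) :
    detRows L hp u v = detLeft (fun t k => L (v t) (Fin.cast hp k))
      (fun t k => L (u t) (Fin.cast hp k)) := by
  subst hp
  rw [detRows, detLeft_apply]
  congr 1
  ext r k
  obtain ⟨x, rfl⟩ := finSumFinEquiv.surjective r
  cases x <;> simp

theorem plucker_exchange_aux {m q : ℕ} (hp : p + n = q) (L : Matrix (Fin m) (Fin q) R)
    (a : Fin p → Fin m) (b : Fin q → Fin m) (c : Fin n → Fin m)
    (hc : ∀ S : Finset (Fin q), #S = p → #Sᶜ = n) :
    (∑ S ∈ powersetCard p (univ : Finset (Fin q)),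
      if h : #S = p then
        (-1 : R) ^ (p * (p - 1) / 2 + ∑ s ∈ S, ((s : ℕ) + 1))
          * detRows L hp a (fun t => b ((Sᶜ.orderIsoOfFin (hc S h) t).1))
          * detRows L hp (fun t => b ((S.orderIsoOfFin h t).1)) c
      else 0)
    = (-1 : R) ^ p * (L.submatrix b id).det * detRows L hp a c := by
  subst hp
  have key := exchangeSum_eq (fun i => L (b i)) (fun t => L (c t)) (fun t => L (a t))
  rw [detRows_eq, mul_assoc]
  refine Eq.trans ?_ (congrArg (fun x => (-1 : R) ^ p * x) key)
  rw [exchangeSum_apply, mul_sum]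
  refine sum_congr rfl fun S hS => ?_
  have hSc : #S = p := by simpa using hS
  rw [dif_pos hSc, dif_pos hSc]
  simp only [detRows_eq, sum_add_distrib,
    sum_const, hSc, coe_orderIsoOfFin_apply, Fin.cast_eq_self, pow_add]
  ring

end Helpers

/-- the Plücker-type exchange identity of Lemma 3.4: for a commutative ring `R`,
an `m × q` matrix `L`, `1 ≤ p < q` and row-index tuples `a ∈ [1,m]^p`, `b ∈ [1,m]^q`,
`c ∈ [1,m]^{q-p}`,
`∑_S (-1)^{p(p-1)/2 + σ(S)} det L_{a, b_Ŝ} ⬝ det L_{b_S, c} = (-1)^p det L_b ⬝ det L_{a,c}`,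
the sum being over all `p`-element subsets `S` of `[1,q]`, `σ(S)` the sum of the (1-based)
elements of `S`. -/
theorem plucker_exchange {R : Type*} [CommRing R] (m q p : ℕ) (hp1 : 1 ≤ p) (hpq : p < q)
    (L : Matrix (Fin m) (Fin q) R) (a : Fin p → Fin m) (b : Fin q → Fin m)
    (c : Fin (q-p) → Fin m) :
    (∑ S ∈ Finset.powersetCard p (Finset.univ : Finset (Fin q)),
      if h : S.card = p then
        (-1:R)^(p*(p-1)/2 + ∑ s ∈ S, ((s:ℕ)+1))
          * detRows L (by omega : p + (q-p) = q) a
              (fun t => b ((Sᶜ.orderIsoOfFin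
                (by rw [Finset.card_compl, Fintype.card_fin, h]) t).1))
          * detRows L (by omega : p + (q-p) = q)
              (fun t => b ((S.orderIsoOfFin h t).1)) c
      else 0)
    = (-1:R)^p * (L.submatrix b id).det * detRows L (by omega : p + (q-p) = q) a c := by
  exact plucker_exchange_aux _ L a b c fun S h => by rw [Finset.card_compl, Fintype.card_fin, h]

end
end
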